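/- Let Ω₀ ⊂ ℝⁿ be a bounded C^{1,1} domain. There exists r₀ = r₀(Ω₀) > 0 such that for every r < r₀/16 there exists C = C(r,Ω₀) with the following property: for every u ∈ C²(Ω₀) ∩ C¹(Ω̄₀) with Δu + λu = 0 in Ω₀ and ∂u/∂ν₀ = 0 on ∂Ω₀ (λ > 0), the harmonic extension h(x,t) = e^{√λ t} u(x) on Ω = Ω₀ × ℝ ⊂ ℝ^{n+1} satisfies N_h(y,r) ≤ C√λ for every y ∈ Ω̄ = Ω̄₀ × ℝ. -/

import Mathlib

noncomputable section

open MeasureTheory Metric Set Filter Asymptotics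
open scoped Topology NNReal ENNReal RealInnerProductSpace

namespace NodalNeumann

/-- Euclidean space `ℝⁿ`. -/
abbrev Euc (n : ℕ) : Type := EuclideanSpace ℝ (Fin n)

/-- The first `n` coordinates `y'` of a point `y = (y', y'') ∈ ℝ^{n+1}`. -/
def front {n : ℕ} (y : Euc (n + 1)) : Euc n :=
  (EuclideanSpace.equiv (Fin n) ℝ).symm fun i => y i.castSucc

/-- The last coordinate `y''` of a point `y = (y', y'') ∈ ℝ^{n+1}`. -/
def lastc {n : ℕ} (y : Euc (n + 1)) : ℝ := y (Fin.last n)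

/-- `(v, a) ∈ ℝ^{n+1}` built from `v ∈ ℝⁿ` and `a ∈ ℝ`. -/
def snocVec {n : ℕ} (v : Euc n) (a : ℝ) : Euc (n + 1) :=
  (EuclideanSpace.equiv (Fin (n + 1)) ℝ).symm
    fun i => if h : i = Fin.last n then a else v (i.castPred h)

/-- The Laplacian of `u : ℝⁿ → ℝ`. -/
def laplacian {n : ℕ} (u : Euc n → ℝ) (x : Euc n) : ℝ :=
  ∑ i : Fin n, fderiv ℝ (fun y => fderiv ℝ u y (EuclideanSpace.single i 1)) x
    (EuclideanSpace.single i 1)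

/-- `u` is harmonic on `s`. -/
def HarmonicOn {n : ℕ} (u : Euc n → ℝ) (s : Set (Euc n)) : Prop :=
  ContDiffOn ℝ 2 u s ∧ ∀ x ∈ s, laplacian u x = 0

/-- `ν` is the outward unit normal vector of `Ω` at the boundary point `x`:
it is a unit vector, points out of `Ω`, `-ν` points into `Ω`, and it is
orthogonal to the boundary at `x` (in the little-o sense). -/
def OutwardNormalAt {n : ℕ} (Ω : Set (Euc n)) (x ν : Euc n) : Prop :=
  ‖ν‖ = 1 ∧
  (∀ᶠ t : ℝ in 𝓝[>] (0 : ℝ), x + t • ν ∉ closure Ω) ∧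
  (∀ᶠ t : ℝ in 𝓝[>] (0 : ℝ), x - t • ν ∈ Ω) ∧
  (fun y : Euc n => (⟪ν, y - x⟫)) =o[𝓝[frontier Ω] x] fun y => ‖y - x‖

/-- `ν` is an outward unit normal field of `Ω` along `∂Ω ∩ s`. -/
def OutwardNormalFieldOn {n : ℕ} (Ω : Set (Euc n)) (ν : Euc n → Euc n)
    (s : Set (Euc n)) : Prop :=
  ∀ x ∈ frontier Ω ∩ s, OutwardNormalAt Ω x (ν x)

/-- The homogeneous Neumann boundary condition `∂h/∂ν = 0` on `∂Ω ∩ s`. -/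
def NeumannBC {n : ℕ} (Ω : Set (Euc n)) (ν : Euc n → Euc n) (h : Euc n → ℝ)
    (s : Set (Euc n)) : Prop :=
  ∀ x ∈ frontier Ω ∩ s, DifferentiableWithinAt ℝ h (closure Ω) x ∧
    fderivWithin ℝ h (closure Ω) x (ν x) = 0

/-- `f : ℝⁿ → ℝ` is `C^{1,1}` with character `M`: differentiable with `M`-Lipschitz
derivative (and itself `M`-Lipschitz). -/
def IsC11FunWith {n : ℕ} (M : ℝ≥0) (f : Euc n → ℝ) : Prop :=
  Differentiable ℝ f ∧ LipschitzWith M f ∧ LipschitzWith M fun x => fderiv ℝ f x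

/-- `Ω ∩ B(x,r)` is, after an isometry `T` of `ℝ^{n+1}` with `T 0 = x`, the region
in the ball above the graph of a function `f` with `f 0 = 0` satisfying `P`. -/
def IsGraphBall {n : ℕ} (Ω : Set (Euc (n + 1))) (x : Euc (n + 1)) (r : ℝ)
    (P : (Euc n → ℝ) → Prop) : Prop :=
  ∃ (T : Euc (n + 1) ≃ᵃⁱ[ℝ] Euc (n + 1)) (f : Euc n → ℝ), P f ∧ T 0 = x ∧ f 0 = 0 ∧
    Ω ∩ ball x r =
      ⇑T '' {y : Euc (n + 1) | y ∈ ball (0 : Euc (n + 1)) r ∧ f (front y) < lastc y}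

/-- `∂Ω ∩ B(x,r) ∈ Lip(τ)`. -/
def LipGraphBall {n : ℕ} (Ω : Set (Euc (n + 1))) (x : Euc (n + 1)) (r τ : ℝ) : Prop :=
  IsGraphBall Ω x r fun f => LipschitzWith (Real.toNNReal τ) f

/-- `Ω` is a `C^{1,1}` domain with character `(ρ, M)`. -/
def IsC11DomainWith {n : ℕ} (Ω : Set (Euc (n + 1))) (ρ : ℝ) (M : ℝ≥0) : Prop :=
  IsOpen Ω ∧ IsConnected Ω ∧ 0 < ρ ∧
    ∀ x ∈ frontier Ω, IsGraphBall Ω x ρ (IsC11FunWith M)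

/-- `Ω` is a `C^{1,1}` domain. -/
def IsC11Domain {n : ℕ} (Ω : Set (Euc (n + 1))) : Prop :=
  ∃ (ρ : ℝ) (M : ℝ≥0), IsC11DomainWith Ω ρ M

/-- `Ω` is a Lipschitz domain with character `(ρ, M)`. -/
def IsLipDomainWith {n : ℕ} (Ω : Set (Euc (n + 1))) (ρ : ℝ) (M : ℝ≥0) : Prop :=
  IsOpen Ω ∧ IsConnected Ω ∧ 0 < ρ ∧
    ∀ x ∈ frontier Ω, IsGraphBall Ω x ρ fun f => LipschitzWith M f

/-- The portion `∂Ω ∩ s` of the boundary has `C^{1,1}` character `(ρ, M)`. -/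
def HasC11CharacterOn {n : ℕ} (Ω : Set (Euc (n + 1))) (s : Set (Euc (n + 1)))
    (ρ : ℝ) (M : ℝ≥0) : Prop :=
  0 < ρ ∧ ∀ x ∈ frontier Ω ∩ s, IsGraphBall Ω x ρ (IsC11FunWith M)

/-- `H_h(x,r) = ∫_{B(x,r) ∩ Ω} h²`. -/
def Hfun {n : ℕ} (Ω : Set (Euc n)) (h : Euc n → ℝ) (x : Euc n) (r : ℝ) : ℝ :=
  ∫ y in ball x r ∩ Ω, h y ^ 2

/-- The doubling index `N_h(x,r) = log (H_h(x,2r) / H_h(x,r))`. -/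
def Nfun {n : ℕ} (Ω : Set (Euc n)) (h : Euc n → ℝ) (x : Euc n) (r : ℝ) : ℝ :=
  Real.log (Hfun Ω h x (2 * r) / Hfun Ω h x r)

/-- Closed axis-parallel cube with centre `c` and side length `s`. -/
def cube {n : ℕ} (c : Euc n) (s : ℝ) : Set (Euc n) :=
  {y : Euc n | ∀ i, |y i - c i| ≤ s / 2}

/-- Maximal doubling index `N*_h(Q)` over the cube of centre `c` and side `s`
(whose diameter is `√n · s`). -/
def Nstar {n : ℕ} (Ω : Set (Euc n)) (h : Euc n → ℝ) (c : Euc n) (s : ℝ) : ℝ :=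
  sSup {N : ℝ | ∃ x ∈ cube c s ∩ closure Ω, ∃ r : ℝ,
    0 < r ∧ r ≤ Real.sqrt n * s ∧ N = Nfun Ω h x r}

/-- The nodal set `Z(h) = {x ∈ Ω : h x = 0}`. -/
def zeroSet {n : ℕ} (Ω : Set (Euc n)) (h : Euc n → ℝ) : Set (Euc n) :=
  {x ∈ Ω | h x = 0}

/-- `sup_s g`. -/
def supOn {α : Type*} (g : α → ℝ) (s : Set α) : ℝ := sSup (g '' s)

/-- The open cylinder `S(x,r,t)` of radius `r` and height `t` whose lower face is
centred at `x`. -/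
def cyl {n : ℕ} (x : Euc (n + 1)) (r t : ℝ) : Set (Euc (n + 1)) :=
  {y : Euc (n + 1) | ‖front y - front x‖ < r ∧ 0 < lastc y - lastc x ∧
    lastc y - lastc x < t}

/-- In the chosen coordinates (centred at `x`, with `e_n = -ν(x)`), `Ω ∩ B(x,R)`
is the region above the graph of the `τ`-Lipschitz function `f` with `f 0 = 0`. -/
def AlignedLipGraphOn {n : ℕ} (Ω : Set (Euc (n + 1))) (x : Euc (n + 1)) (R τ : ℝ)
    (f : Euc n → ℝ) : Prop :=
  LipschitzWith (Real.toNNReal τ) f ∧ f 0 = 0 ∧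
    Ω ∩ ball x R = {y ∈ ball x R | f (front (y - x)) < lastc (y - x)}

/-- `z` is the centre of one of the boundary cubes `q ∈ 𝓑_k(Q)` of the standard
construction for the cube `Q` of centre `xQ` and side `s`: the projection of `z` is
the centre of one of the `2^{k·n}` subcubes of side `s/2^k` of the projection of
`Q`, and `z` lies on `∂Ω`. The cube `q` itself is `cube z (s/2^k)`. -/
def IsBdryCubeCenter {n : ℕ} (Ω : Set (Euc (n + 1))) (xQ : Euc (n + 1)) (s : ℝ)
    (k : ℕ) (z : Euc (n + 1)) : Prop :=
  z ∈ frontier Ω ∧ ∃ a : Fin n → ℕ, (∀ i, a i < 2 ^ k) ∧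
    ∀ i : Fin n, z i.castSucc = xQ i.castSucc - s / 2 + ((a i : ℝ) + 1 / 2) * (s / 2 ^ k)

/-- The infinite cylinder `Ω₀ × ℝ ⊂ ℝ^{n+1}` over `Ω₀ ⊂ ℝⁿ`. -/
def prodDomain {n : ℕ} (Ω₀ : Set (Euc n)) : Set (Euc (n + 1)) :=
  {y : Euc (n + 1) | front y ∈ Ω₀}

/-- The harmonic extension `h(x,t) = e^{√λ t} u(x)` of `u` to `Ω₀ × ℝ`. -/
def hExt {n : ℕ} (lam : ℝ) (u : Euc n → ℝ) : Euc (n + 1) → ℝ :=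
  fun y => Real.exp (Real.sqrt lam * lastc y) * u (front y)

/-!
Near `∂Ω₀` describe `Ω₀` as `{ψ > 0}` with `ψ` of class `C^{1,1}`, and use a weight
`cosh (2τφ(ψ))` with `φ` increasing, convex and `φ(0) = 0`. Its slope, and its primitive, vanish on
`∂Ω₀`; they are the multipliers of the Hardy and Rellich identities, which together with the energy
identity therefore have no boundary terms for a Neumann solution, and combine to a Carleman
inequality valid up to the boundary. Optimising in `τ` yields three-ball and boundary estimates,
which propagate along the connected set `Ω₀`: an eigenfunction `u` satisfies
`∫_{Ω₀} u² ≤ e^{A√λ} ∫_B u²` for every ball `B ⊆ Ω₀`, with `A` depending on `B`. The same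
propagation, combined with the Poincaré inequality on a single ball, bounds `λ` away from `0`, so
additive constants are absorbed by `√λ`. Finally `h² = e^{2√λ t} u²` is a product, and comparing it
on cylinders inside `B(y, r)` and around `B(y, 2r)` bounds the doubling index by
`3 + 5r√λ + A√λ`.
-/

section LocallyLipschitz

theorem locallyLipschitzOn_prodMk {X Y Z : Type*} [PseudoEMetricSpace X] [PseudoEMetricSpace Y]
    [PseudoEMetricSpace Z] {f : X → Y} {g : X → Z} {s : Set X} (hf : LocallyLipschitzOn s f)
    (hg : LocallyLipschitzOn s g) : LocallyLipschitzOn s fun x => (f x, g x) := by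
  intro x hx
  obtain ⟨K, t, ht, hK⟩ := hf hx
  obtain ⟨L, t', ht', hL⟩ := hg hx
  exact ⟨max K L, t ∩ t', inter_mem ht ht',
    (hK.mono inter_subset_left).prodMk (hL.mono inter_subset_right)⟩

theorem locallyLipschitz_comp_locallyLipschitzOn {X Y Z : Type*} [PseudoEMetricSpace X]
    [PseudoEMetricSpace Y] [PseudoEMetricSpace Z] {g : Y → Z} {f : X → Y} {s : Set X}
    (hg : LocallyLipschitz g) (hf : LocallyLipschitzOn s f) :
    LocallyLipschitzOn s fun x => g (f x) := by
  intro x hx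
  obtain ⟨K, t, ht, hK⟩ := hf hx
  obtain ⟨L, t', ht', hL⟩ := hg (f x)
  exact ⟨L * K, t ∩ f ⁻¹' t', inter_mem ht (hf.continuousOn x hx ht'),
    hL.comp (hK.mono inter_subset_left) fun _ hy => hy.2⟩

theorem locallyLipschitzOn_smul {X W : Type*} [PseudoEMetricSpace X] [NormedAddCommGroup W]
    [NormedSpace ℝ W] {f : X → ℝ} {F : X → W} {s : Set X} (hf : LocallyLipschitzOn s f)
    (hF : LocallyLipschitzOn s F) : LocallyLipschitzOn s fun x => f x • F x := by
  have smul_contDiff : ContDiff ℝ 1 fun p : ℝ × W => p.1 • p.2 := contDiff_fst.smul contDiff_snd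
  exact locallyLipschitz_comp_locallyLipschitzOn smul_contDiff.locallyLipschitz
    (locallyLipschitzOn_prodMk hf hF)

theorem locallyLipschitzOn_sub {X W : Type*} [PseudoEMetricSpace X] [NormedAddCommGroup W]
    [NormedSpace ℝ W] {F H : X → W} {s : Set X} (hF : LocallyLipschitzOn s F)
    (hH : LocallyLipschitzOn s H) : LocallyLipschitzOn s fun x => F x - H x := by
  have sub_contDiff : ContDiff ℝ 1 fun p : W × W => p.1 - p.2 := contDiff_fst.sub contDiff_snd
  exact locallyLipschitz_comp_locallyLipschitzOn sub_contDiff.locallyLipschitz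
    (locallyLipschitzOn_prodMk hF hH)

theorem locallyLipschitzOn_inner {X W : Type*} [PseudoEMetricSpace X] [NormedAddCommGroup W]
    [InnerProductSpace ℝ W] {F H : X → W} {s : Set X} (hF : LocallyLipschitzOn s F)
    (hH : LocallyLipschitzOn s H) : LocallyLipschitzOn s fun x => ⟪F x, H x⟫ := by
  have inner_contDiff : ContDiff ℝ 1 fun p : W × W => ⟪p.1, p.2⟫ := contDiff_inner
  exact locallyLipschitz_comp_locallyLipschitzOn inner_contDiff.locallyLipschitz
    (locallyLipschitzOn_prodMk hF hH)

theorem locallyLipschitzOn_of_contDiffOn {V W : Type*} [NormedAddCommGroup V] [NormedSpace ℝ V]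
    [NormedAddCommGroup W] [NormedSpace ℝ W] {f : V → W} {s : Set V} (hs : IsOpen s)
    (hf : ContDiffOn ℝ 1 f s) : LocallyLipschitzOn s f := fun x hx => by
  obtain ⟨K, t, ht, hK⟩ := (hf.contDiffAt (hs.mem_nhds hx)).exists_lipschitzOnWith
  exact ⟨K, t, mem_nhdsWithin_of_mem_nhds ht, hK⟩

theorem exists_lipschitzWith_of_hasCompactSupport {X W : Type*} [PseudoMetricSpace X]
    [ProperSpace X] [NormedAddCommGroup W] {F : X → W} (hF : LocallyLipschitz F)
    (hs : HasCompactSupport F) : ∃ K : ℝ≥0, LipschitzWith K F := by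
  obtain ⟨M, hM⟩ := hF.continuous.bounded_above_of_compact_support hs
  obtain ⟨K, hK⟩ := LocallyLipschitzOn.exists_lipschitzOnWith_of_compact
    (IsCompact.cthickening hs (r := 1)) hF.locallyLipschitzOn
  have near (x y : X) (hx : x ∈ tsupport F) :
      dist (F x) (F y) ≤ (K + (2 * M).toNNReal : ℝ≥0) * dist x y := by
    have hM0 : 0 ≤ M := (norm_nonneg _).trans (hM x)
    rw [NNReal.coe_add, Real.coe_toNNReal _ (by positivity), add_mul]
    rcases le_total (dist x y) 1 with hxy | hxy
    · have hy : y ∈ cthickening 1 (tsupport F) :=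
        mem_cthickening_of_dist_le y x 1 _ hx (by rwa [dist_comm])
      exact (hK.dist_le_mul x (self_subset_cthickening _ hx) y hy).trans
        (le_add_of_nonneg_right (by positivity))
    · have hxy' : dist (F x) (F y) ≤ 2 * M := by
        rw [dist_eq_norm]
        linarith [norm_sub_le (F x) (F y), hM x, hM y]
      exact (hxy'.trans (le_mul_of_one_le_right (by positivity) hxy)).trans
        (le_add_of_nonneg_left (by positivity))
  refine ⟨K + (2 * M).toNNReal, LipschitzWith.of_dist_le_mul fun x y => ?_⟩
  by_cases hx : x ∈ tsupport F
  · exact near x y hx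
  by_cases hy : y ∈ tsupport F
  · rw [dist_comm, dist_comm x]
    exact near y x hy
  · rw [image_eq_zero_of_notMem_tsupport hx, image_eq_zero_of_notMem_tsupport hy, dist_self]
    positivity

end LocallyLipschitz

section Divergence

variable {E : Type*} [NormedAddCommGroup E] [InnerProductSpace ℝ E]

/-- The divergence of a vector field, as the trace of its derivative; it has the junk value `0`
where the field is not differentiable. -/
def divergence (F : E → E) (x : E) : ℝ := LinearMap.trace ℝ E (fderiv ℝ F x)

theorem divergence_eq_trace {F : E → E} {L : E →L[ℝ] E} {x : E} (h : HasFDerivAt F L x) :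
    divergence F x = LinearMap.trace ℝ E L := by
  rw [divergence, h.fderiv]

theorem divergence_add {F H : E → E} {x : E} (hF : DifferentiableAt ℝ F x)
    (hH : DifferentiableAt ℝ H x) :
    divergence (fun y => F y + H y) x = divergence F x + divergence H x := by
  simp only [divergence, fderiv_fun_add hF hH, ContinuousLinearMap.toLinearMap_add, map_add]

theorem divergence_sub {F H : E → E} {x : E} (hF : DifferentiableAt ℝ F x)
    (hH : DifferentiableAt ℝ H x) :
    divergence (fun y => F y - H y) x = divergence F x - divergence H x := by
  simp only [divergence, fderiv_fun_sub hF hH, ContinuousLinearMap.toLinearMap_sub, map_sub]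

variable [FiniteDimensional ℝ E]

theorem divergence_smul {ω : E → ℝ} {l : E →L[ℝ] ℝ} {F : E → E} {x : E}
    (hω : HasFDerivAt ω l x) (hF : DifferentiableAt ℝ F x) :
    divergence (fun y => ω y • F y) x = ω x * divergence F x + l (F x) := by
  rw [divergence_eq_trace (hω.fun_smul hF.hasFDerivAt)]
  change LinearMap.trace ℝ E (ω x • (fderiv ℝ F x : E →ₗ[ℝ] E) +
    (l : E →ₗ[ℝ] ℝ).smulRight (F x)) = _
  simp [divergence]

theorem abs_trace_le (L : E →L[ℝ] E) :
    |LinearMap.trace ℝ E L| ≤ Module.finrank ℝ E * ‖L‖ := by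
  let b := stdOrthonormalBasis ℝ E
  have entry (i) : |⟪b i, L (b i)⟫| ≤ ‖L‖ := by
    simpa using (abs_real_inner_le_norm (b i) (L (b i))).trans
      (mul_le_mul_of_nonneg_left (L.le_opNorm (b i)) (norm_nonneg _))
  calc |LinearMap.trace ℝ E L| ≤ ∑ i, |⟪b i, L (b i)⟫| := by
        rw [LinearMap.trace_eq_sum_inner _ b]
        exact Finset.abs_sum_le_sum_abs _ _
    _ ≤ ∑ _i : Fin (Module.finrank ℝ E), ‖L‖ := Finset.sum_le_sum fun i _ => entry i
    _ = Module.finrank ℝ E * ‖L‖ := by simp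

theorem abs_divergence_le_of_lipschitzWith {F : E → E} {K : ℝ≥0} (hF : LipschitzWith K F) (x : E) :
    |divergence F x| ≤ Module.finrank ℝ E * K :=
  (abs_trace_le _).trans (mul_le_mul_of_nonneg_left (norm_fderiv_le_of_lipschitz ℝ hF)
    (Nat.cast_nonneg _))

theorem continuous_trace : Continuous fun L : E →L[ℝ] E => LinearMap.trace ℝ E L := by
  simp only [LinearMap.trace_eq_sum_inner _ (stdOrthonormalBasis ℝ E), ContinuousLinearMap.coe_coe]
  fun_prop

theorem continuous_divergence {F : E → E} (hF : ContDiff ℝ 1 F) : Continuous (divergence F) :=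
  continuous_trace.comp (hF.continuous_fderiv one_ne_zero)

variable [MeasurableSpace E] [BorelSpace E]

theorem measurable_divergence (F : E → E) : Measurable (divergence F) :=
  continuous_trace.measurable.comp (measurable_fderiv ℝ F)

theorem integral_fderiv_apply_eq_zero {g : E → ℝ} {K : ℝ≥0} (hg : LipschitzWith K g)
    (hs : HasCompactSupport g) (v : E) : ∫ x, fderiv ℝ g x v = 0 := by
  have parts := LipschitzWith.integral_lineDeriv_mul_eq (μ := volume)
    (LipschitzWith.const (1 : ℝ)) hg hs (-v)
  have const_deriv (x : E) : lineDeriv ℝ (fun _ : E => (1 : ℝ)) x (-v) = 0 := by simp [lineDeriv]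
  simp only [const_deriv, zero_mul, integral_zero, neg_neg, mul_one] at parts
  rw [parts]
  refine integral_congr_ae ?_
  filter_upwards [hg.ae_differentiableAt (μ := volume)] with x hx
  exact hx.lineDeriv_eq_fderiv.symm

theorem integrable_fderiv_apply {g : E → ℝ} {K : ℝ≥0} (hg : LipschitzWith K g)
    (hs : HasCompactSupport g) (v : E) : Integrable fun x => fderiv ℝ g x v := by
  have hbound (x : E) : ‖fderiv ℝ g x v‖ ≤ K * ‖v‖ :=
    ((fderiv ℝ g x).le_opNorm v).trans
      (mul_le_mul_of_nonneg_right (norm_fderiv_le_of_lipschitz ℝ hg) (norm_nonneg v))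
  refine (integrableOn_iff_integrable_of_support_subset fun x hx => ?_).1
    (IntegrableOn.of_bound (s := tsupport (fderiv ℝ g)) (hs.fderiv ℝ).isCompact.measure_lt_top
      (measurable_fderiv_apply_const ℝ g v).aestronglyMeasurable (K * ‖v‖) (ae_of_all _ hbound))
  exact subset_tsupport _ fun h => hx (by simp [h])

theorem integral_divergence_eq_zero {F : E → E} {K : ℝ≥0} (hF : LipschitzWith K F)
    (hs : HasCompactSupport F) : ∫ x, divergence F x = 0 := by
  let b := stdOrthonormalBasis ℝ E
  have comp_lip (i) : LipschitzWith (‖innerSL ℝ (b i)‖₊ * K) fun x => ⟪b i, F x⟫ :=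
    (innerSL ℝ (b i)).lipschitz.comp hF
  have comp_supp (i) : HasCompactSupport fun x => ⟪b i, F x⟫ :=
    hs.comp_left (g := fun v : E => ⟪b i, v⟫) (inner_zero_right _)
  have coord : divergence F =ᵐ[volume] fun x => ∑ i, fderiv ℝ (fun y => ⟪b i, F y⟫) x (b i) := by
    filter_upwards [hF.ae_differentiableAt (μ := volume)] with x hx
    rw [divergence, LinearMap.trace_eq_sum_inner _ b]
    refine Finset.sum_congr rfl fun i _ => ?_
    have hcomp : HasFDerivAt (fun y => ⟪b i, F y⟫) ((innerSL ℝ (b i)).comp (fderiv ℝ F x)) x :=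
      (innerSL ℝ (b i)).hasFDerivAt.comp x hx.hasFDerivAt
    rw [hcomp.fderiv]
    rfl
  rw [integral_congr_ae coord, integral_finsetSum _ fun i _ =>
    integrable_fderiv_apply (comp_lip i) (comp_supp i) (b i)]
  exact Finset.sum_eq_zero fun i _ => integral_fderiv_apply_eq_zero (comp_lip i) (comp_supp i) (b i)

end Divergence

section Cutoff

/-- The smooth cutoff at height `ε`: it vanishes for `s ≤ ε` and equals `1` for `s ≥ 2ε`. -/
def cutoff (ε s : ℝ) : ℝ := Real.smoothTransition (s / ε - 1)

theorem contDiff_cutoff (ε : ℝ) {k : ℕ∞} : ContDiff ℝ k (cutoff ε) :=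
  Real.smoothTransition.contDiff.comp ((contDiff_id.div_const ε).sub contDiff_const)

theorem continuous_cutoff (ε : ℝ) : Continuous (cutoff ε) :=
  (contDiff_cutoff ε (k := 0)).continuous

theorem continuous_deriv_cutoff (ε : ℝ) : Continuous (deriv (cutoff ε)) :=
  (contDiff_cutoff ε (k := 1)).continuous_deriv le_rfl

theorem cutoff_nonneg (ε s : ℝ) : 0 ≤ cutoff ε s := Real.smoothTransition.nonneg _

theorem cutoff_le_one (ε s : ℝ) : cutoff ε s ≤ 1 := Real.smoothTransition.le_one _

theorem abs_cutoff_mul_le (ε s a : ℝ) : |cutoff ε s * a| ≤ |a| := by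
  rw [abs_mul, abs_of_nonneg (cutoff_nonneg ε s)]
  exact mul_le_of_le_one_left (abs_nonneg a) (cutoff_le_one ε s)

variable {ε s : ℝ}

theorem cutoff_eq_zero (hε : 0 < ε) (hs : s ≤ ε) : cutoff ε s = 0 :=
  Real.smoothTransition.zero_of_nonpos (sub_nonpos.2 ((div_le_one hε).2 hs))

theorem cutoff_eq_one (hε : 0 < ε) (hs : 2 * ε ≤ s) : cutoff ε s = 1 := by
  have : 2 ≤ s / ε := (le_div_iff₀ hε).2 hs
  exact Real.smoothTransition.one_of_one_le (by linarith)

theorem monotone_cutoff (hε : 0 < ε) : Monotone (cutoff ε) := fun _ _ hab =>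
  Real.smoothTransition.monotone (sub_le_sub_right (div_le_div_of_nonneg_right hab hε.le) 1)

theorem deriv_cutoff_nonneg (hε : 0 < ε) (s : ℝ) : 0 ≤ deriv (cutoff ε) s :=
  (monotone_cutoff hε).deriv_nonneg

theorem deriv_cutoff_eq_zero (hε : 0 < ε) (hs : 2 * ε < s) : deriv (cutoff ε) s = 0 := by
  have : cutoff ε =ᶠ[𝓝 s] fun _ => 1 := by
    filter_upwards [lt_mem_nhds hs] with t ht
    exact cutoff_eq_one hε ht.le
  rw [this.deriv_eq, deriv_const]

end Cutoff

section DefiningFunction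

variable {E : Type*} [NormedAddCommGroup E] [InnerProductSpace ℝ E] [FiniteDimensional ℝ E]

/-- `ψ` is a `C^{1,1}` defining function, with gradient field `P`, of the bounded open set `Ω`:
it is positive in `Ω` and vanishes on `∂Ω`, where `P` is then normal to `∂Ω` and nonzero. The sign
of `ψ` outside `closure Ω` is left free. -/
structure IsDefiningFunction (Ω : Set E) (ψ : E → ℝ) (P : E → E) : Prop where
  isOpen : IsOpen Ω
  isBounded : Bornology.IsBounded Ω
  hasGradientAt : ∀ x, HasGradientAt ψ (P x) x
  exists_lipschitzWith : ∃ K : ℝ≥0, LipschitzWith K P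
  pos : ∀ x ∈ Ω, 0 < ψ x
  eq_zero : ∀ x ∈ frontier Ω, ψ x = 0
  gradient_ne_zero : ∀ x ∈ frontier Ω, P x ≠ 0

theorem contDiff_one_of_hasGradientAt {ψ : E → ℝ} {P : E → E}
    (h : ∀ x, HasGradientAt ψ (P x) x) (hP : Continuous P) : ContDiff ℝ 1 ψ := by
  rw [contDiff_one_iff_fderiv, funext fun x => (h x).hasFDerivAt.fderiv]
  exact ⟨fun x => (h x).differentiableAt, (InnerProductSpace.toDual ℝ E).continuous.comp hP⟩

namespace IsDefiningFunction

variable {Ω : Set E} {ψ : E → ℝ} {P : E → E}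

theorem continuous_gradient (h : IsDefiningFunction Ω ψ P) : Continuous P :=
  h.exists_lipschitzWith.elim fun _ hK => hK.continuous

theorem contDiff (h : IsDefiningFunction Ω ψ P) : ContDiff ℝ 1 ψ :=
  contDiff_one_of_hasGradientAt h.hasGradientAt h.continuous_gradient

theorem continuous (h : IsDefiningFunction Ω ψ P) : Continuous ψ := h.contDiff.continuous

theorem isCompact_closure (h : IsDefiningFunction Ω ψ P) : IsCompact (closure Ω) :=
  h.isBounded.isCompact_closure

theorem mem_or_mem_frontier (h : IsDefiningFunction Ω ψ P) {x : E} (hx : x ∈ closure Ω) :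
    x ∈ Ω ∨ x ∈ frontier Ω :=
  or_iff_not_imp_left.2 fun hxΩ => ⟨hx, by rwa [h.isOpen.interior_eq]⟩

theorem exists_pos_le_of_isCompact (h : IsDefiningFunction Ω ψ P) {K : Set E} (hK : IsCompact K)
    (hKΩ : K ⊆ closure Ω) (hdisj : Disjoint K (frontier Ω)) : ∃ δ > 0, ∀ x ∈ K, δ ≤ ψ x :=
  hK.exists_forall_le' h.continuous.continuousOn fun x hx =>
    h.pos x ((h.mem_or_mem_frontier (hKΩ hx)).resolve_right (disjoint_left.1 hdisj hx))

theorem exists_forall_lt_of_frontier (h : IsDefiningFunction Ω ψ P) {g : E → ℝ}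
    (hg : ContinuousOn g (closure Ω)) {η : ℝ} (hη : ∀ x ∈ frontier Ω, g x < η) :
    ∃ δ > 0, ∀ x ∈ closure Ω, ψ x < δ → g x < η := by
  have hK : IsCompact (closure Ω ∩ g ⁻¹' Ici η) :=
    h.isCompact_closure.of_isClosed_subset
      (hg.preimage_isClosed_of_isClosed isClosed_closure isClosed_Ici) inter_subset_left
  obtain ⟨δ, hδ, hδψ⟩ := h.exists_pos_le_of_isCompact hK inter_subset_left
    (disjoint_left.2 fun x hx hxf => (hη x hxf).not_ge hx.2)
  exact ⟨δ, hδ, fun x hx hlt => by_contra fun hgx => hlt.not_ge (hδψ x ⟨hx, not_lt.1 hgx⟩)⟩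

theorem exists_lt_norm_gradient_sq (h : IsDefiningFunction Ω ψ P) :
    ∃ c > 0, ∃ δ > 0, ∀ x ∈ closure Ω, ψ x < δ → c < ‖P x‖ ^ 2 := by
  have hP : Continuous fun x => ‖P x‖ ^ 2 := h.continuous_gradient.norm.pow 2
  obtain ⟨c, hc, hcP⟩ := (h.isCompact_closure.of_isClosed_subset isClosed_frontier
    frontier_subset_closure).exists_forall_le' (a := 0) hP.continuousOn
    fun x hx => pow_pos (norm_pos_iff.2 (h.gradient_ne_zero x hx)) 2
  obtain ⟨δ, hδ, hlt⟩ := h.exists_forall_lt_of_frontier (g := fun x => -‖P x‖ ^ 2)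
    (η := -(c / 2)) hP.neg.continuousOn
    fun x hx => by linarith [hcP x hx]
  exact ⟨c / 2, half_pos hc, δ, hδ, fun x hx hψ => neg_lt_neg_iff.1 (hlt x hx hψ)⟩

theorem indicator_cutoff_smul_eventuallyEq_zero (h : IsDefiningFunction Ω ψ P) {ε : ℝ} (hε : 0 < ε)
    (W : E → E) {x : E} (hx : x ∉ Ω) : Ω.indicator (fun y => cutoff ε (ψ y) • W y) =ᶠ[𝓝 x] 0 := by
  by_cases hc : x ∈ closure Ω
  · have hxf : ψ x = 0 := h.eq_zero x ((h.mem_or_mem_frontier hc).resolve_left hx)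
    filter_upwards [h.continuous.continuousAt.eventually_lt_const (hxf.trans_lt hε)] with y hy
    simp [cutoff_eq_zero hε hy.le]
  · filter_upwards [isClosed_closure.isOpen_compl.mem_nhds hc] with y hy
    exact indicator_of_notMem (fun hyΩ => hy (subset_closure hyΩ)) _

theorem locallyLipschitz_indicator_cutoff_smul (h : IsDefiningFunction Ω ψ P) {ε : ℝ} (hε : 0 < ε)
    {W : E → E} (hW : LocallyLipschitzOn Ω W) :
    LocallyLipschitz (Ω.indicator fun y => cutoff ε (ψ y) • W y) := fun x => by
  by_cases hx : x ∈ Ω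
  · have hκ : LocallyLipschitz fun y => cutoff ε (ψ y) :=
      ((contDiff_cutoff ε (k := 1)).comp h.contDiff).locallyLipschitz
    obtain ⟨K, t, ht, hK⟩ := locallyLipschitzOn_smul hκ.locallyLipschitzOn hW hx
    rw [h.isOpen.nhdsWithin_eq hx] at ht
    exact ⟨K, t ∩ Ω, inter_mem ht (h.isOpen.mem_nhds hx), fun a ha b hb => by
      simpa only [indicator_of_mem ha.2, indicator_of_mem hb.2] using hK ha.1 hb.1⟩
  · refine ⟨0, _, h.indicator_cutoff_smul_eventuallyEq_zero hε W hx, fun a ha b hb => ?_⟩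
    rw [mem_ofPred_eq] at ha hb
    simp [ha, hb]

variable [MeasurableSpace E] [BorelSpace E]

theorem volume_lt_top (h : IsDefiningFunction Ω ψ P) : volume Ω < ∞ :=
  (measure_mono subset_closure).trans_lt h.isCompact_closure.measure_lt_top

theorem integrableOn (h : IsDefiningFunction Ω ψ P) {g : E → ℝ}
    (hg : ContinuousOn g (closure Ω)) : IntegrableOn g Ω :=
  (hg.integrableOn_compact h.isCompact_closure).mono_set subset_closure

theorem integrableOn_mul_of_abs_le (h : IsDefiningFunction Ω ψ P) {g φ : E → ℝ} {B : ℝ}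
    (hg : ContinuousOn g (closure Ω)) (hφ : AEStronglyMeasurable φ (volume.restrict Ω))
    (hB : ∀ x, |φ x| ≤ B) : IntegrableOn (fun x => g x * φ x) Ω :=
  (h.integrableOn hg).mul_bdd hφ (ae_of_all _ hB)

theorem integrableOn_mul_divergence (h : IsDefiningFunction Ω ψ P) {g : E → ℝ} {N : E → E}
    {K : ℝ≥0} (hg : ContinuousOn g (closure Ω)) (hN : LipschitzWith K N) :
    IntegrableOn (fun x => g x * divergence N x) Ω :=
  h.integrableOn_mul_of_abs_le hg (measurable_divergence N).aestronglyMeasurable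
    (abs_divergence_le_of_lipschitzWith hN)

theorem integral_cutoff_divergence (h : IsDefiningFunction Ω ψ P) {ε : ℝ} (hε : 0 < ε)
    {W : E → E} (hW : LocallyLipschitzOn Ω W)
    (hWd : ∀ᵐ x ∂(volume.restrict Ω), DifferentiableAt ℝ W x) :
    ∫ x in Ω, (cutoff ε (ψ x) * divergence W x + deriv (cutoff ε) (ψ x) * ⟪P x, W x⟫) = 0 := by
  set F : E → E := Ω.indicator fun x => cutoff ε (ψ x) • W x
  have hcs : HasCompactSupport F := .of_support_subset_isCompact h.isCompact_closure
    (support_indicator_subset.trans subset_closure)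
  obtain ⟨K, hK⟩ := exists_lipschitzWith_of_hasCompactSupport
    (h.locallyLipschitz_indicator_cutoff_smul hε hW) hcs
  have outside : ∀ x ∉ Ω, divergence F x = 0 := fun x hx => by
    rw [divergence, Filter.EventuallyEq.fderiv_eq
      (h.indicator_cutoff_smul_eventuallyEq_zero hε W hx : F =ᶠ[𝓝 x] 0)]
    simp
  rw [← integral_divergence_eq_zero hK hcs,
    ← setIntegral_eq_integral_of_forall_compl_eq_zero outside]
  refine integral_congr_ae ?_
  filter_upwards [hWd, ae_restrict_mem h.isOpen.measurableSet] with x hx hxΩ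
  have inside : F =ᶠ[𝓝 x] fun y => cutoff ε (ψ y) • W y := by
    filter_upwards [h.isOpen.mem_nhds hxΩ] with y hy using indicator_of_mem hy _
  have hκ : HasFDerivAt (fun y => cutoff ε (ψ y))
      (deriv (cutoff ε) (ψ x) • InnerProductSpace.toDual ℝ E (P x)) x :=
    ((contDiff_cutoff ε (k := 1)).differentiable one_ne_zero
      (ψ x)).hasDerivAt.comp_hasFDerivAt x (h.hasGradientAt x).hasFDerivAt
  have hdiv := divergence_smul hκ hx
  rw [divergence, ← inside.fderiv_eq, ← divergence] at hdiv
  simpa using hdiv.symm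

/-- The layer integrals of `κ_ε'(ψ)` approximate `∫_{∂Ω} 1 / |P|`; testing the divergence identity
with `P` itself bounds them without any surface measure. -/
theorem exists_integral_deriv_cutoff_le (h : IsDefiningFunction Ω ψ P) :
    ∃ C, ∃ ε₀ > 0, ∀ ε, 0 < ε → ε < ε₀ → ∫ x in Ω, deriv (cutoff ε) (ψ x) ≤ C := by
  obtain ⟨c, hc, δ, hδ, hcδ⟩ := h.exists_lt_norm_gradient_sq
  obtain ⟨K, hK⟩ := h.exists_lipschitzWith
  have hP := h.continuous_gradient
  have hψ := h.continuous
  refine ⟨Module.finrank ℝ E * K * volume.real Ω / c, δ / 2, half_pos hδ, fun ε hε hεδ => ?_⟩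
  have hκ := continuous_cutoff ε
  have hκ' := continuous_deriv_cutoff ε
  have tested := h.integral_cutoff_divergence hε hK.locallyLipschitz.locallyLipschitzOn
    (ae_restrict_of_ae hK.ae_differentiableAt)
  have int_layer : IntegrableOn (fun x => deriv (cutoff ε) (ψ x) * ⟪P x, P x⟫) Ω :=
    h.integrableOn (by fun_prop)
  rw [integral_add (h.integrableOn_mul_divergence (g := fun x => cutoff ε (ψ x))
    (hκ.comp hψ).continuousOn hK) int_layer] at tested
  have bulk : ‖∫ x in Ω, cutoff ε (ψ x) * divergence P x‖
      ≤ Module.finrank ℝ E * K * volume.real Ω :=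
    norm_setIntegral_le_of_norm_le_const h.volume_lt_top fun x _ =>
      (abs_cutoff_mul_le ε _ _).trans (abs_divergence_le_of_lipschitzWith hK x)
  have layer : ∫ x in Ω, c * deriv (cutoff ε) (ψ x)
      ≤ ∫ x in Ω, deriv (cutoff ε) (ψ x) * ⟪P x, P x⟫ := by
    refine setIntegral_mono_on (h.integrableOn (by fun_prop)) int_layer h.isOpen.measurableSet
      fun x hx => ?_
    rw [real_inner_self_eq_norm_sq, mul_comm]
    by_cases hl : ψ x < δ
    · exact mul_le_mul_of_nonneg_left (hcδ x (subset_closure hx) hl).le (deriv_cutoff_nonneg hε _)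
    · rw [deriv_cutoff_eq_zero hε (by linarith), zero_mul, zero_mul]
  rw [integral_const_mul] at layer
  rw [le_div_iff₀' hc]
  linarith [(abs_le.1 bulk).1]

theorem tendsto_integral_cutoff_mul (h : IsDefiningFunction Ω ψ P) {D : E → ℝ}
    (hD : IntegrableOn D Ω) :
    Tendsto (fun ε => ∫ x in Ω, cutoff ε (ψ x) * D x) (𝓝[>] 0) (𝓝 (∫ x in Ω, D x)) := by
  refine tendsto_integral_filter_of_dominated_convergence (fun x => |D x|)
    (.of_forall fun ε => ?_) (.of_forall fun ε => ae_of_all _ fun x => abs_cutoff_mul_le ε _ _)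
    hD.abs ?_
  · exact ((continuous_cutoff ε).comp h.continuous).aestronglyMeasurable.mul
      hD.aestronglyMeasurable
  · filter_upwards [ae_restrict_mem h.isOpen.measurableSet] with x hx
    refine tendsto_const_nhds.congr' ?_
    filter_upwards [nhdsWithin_le_nhds (gt_mem_nhds (half_pos (h.pos x hx))),
      self_mem_nhdsWithin] with ε hεψ hε
    rw [cutoff_eq_one hε (by linarith), one_mul]

theorem tendsto_integral_deriv_cutoff_mul (h : IsDefiningFunction Ω ψ P) {g : E → ℝ}
    (hg : ContinuousOn g (closure Ω)) (hg0 : ∀ x ∈ frontier Ω, g x = 0) :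
    Tendsto (fun ε => ∫ x in Ω, deriv (cutoff ε) (ψ x) * g x) (𝓝[>] 0) (𝓝 0) := by
  obtain ⟨C, ε₀, hε₀, hC⟩ := h.exists_integral_deriv_cutoff_le
  have hC0 : 0 < |C| + 1 := by positivity
  refine Metric.tendsto_nhds.2 fun e he => ?_
  set η := e / (|C| + 1)
  have hη : 0 < η := by positivity
  obtain ⟨δ, hδ, hgη⟩ := h.exists_forall_lt_of_frontier (g := fun x => |g x|) (η := η) hg.abs
    fun x hx => by rwa [hg0 x hx, abs_zero]
  filter_upwards [nhdsWithin_le_nhds (gt_mem_nhds (lt_min hε₀ (half_pos hδ))),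
    self_mem_nhdsWithin] with ε hεlt hε
  have hκ' : Continuous fun x => deriv (cutoff ε) (ψ x) :=
    (continuous_deriv_cutoff ε).comp h.continuous
  rw [dist_zero_right]
  calc ‖∫ x in Ω, deriv (cutoff ε) (ψ x) * g x‖ ≤ ∫ x in Ω, η * deriv (cutoff ε) (ψ x) := by
        refine norm_integral_le_of_norm_le
          (h.integrableOn (continuous_const.mul hκ').continuousOn) ?_
        filter_upwards [ae_restrict_mem h.isOpen.measurableSet] with x hx
        rw [norm_mul, Real.norm_of_nonneg (deriv_cutoff_nonneg hε _), mul_comm]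
        by_cases hl : ψ x < δ
        · exact mul_le_mul_of_nonneg_right (hgη x (subset_closure hx) hl).le
            (deriv_cutoff_nonneg hε _)
        · rw [deriv_cutoff_eq_zero hε (by linarith [hεlt.trans_le (min_le_right _ _)])]
          simp
    _ ≤ η * C := by
        rw [integral_const_mul]
        exact mul_le_mul_of_nonneg_left (hC ε hε (hεlt.trans_le (min_le_left _ _))) hη.le
    _ < η * (|C| + 1) := by gcongr; linarith [le_abs_self C]
    _ = e := div_mul_cancel₀ e hC0.ne'

theorem integral_divergence_eq_zero_of_tangential (h : IsDefiningFunction Ω ψ P) {F : E → E}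
    {D : E → ℝ} (hF : LocallyLipschitzOn Ω F) (hFc : ContinuousOn F (closure Ω))
    (hFt : ∀ x ∈ frontier Ω, ⟪P x, F x⟫ = 0) (hint : IntegrableOn D Ω)
    (hFd : ∀ᵐ x ∂(volume.restrict Ω), DifferentiableAt ℝ F x ∧ divergence F x = D x) :
    ∫ x in Ω, D x = 0 := by
  have hD : divergence F =ᵐ[volume.restrict Ω] D := hFd.mono fun _ hx => hx.2
  rw [← integral_congr_ae hD]
  replace hint := (integrable_congr hD).2 hint
  have hPF : ContinuousOn (fun x => ⟪P x, F x⟫) (closure Ω) :=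
    h.continuous_gradient.continuousOn.inner hFc
  refine tendsto_nhds_unique (h.tendsto_integral_cutoff_mul hint) ?_
  refine (neg_zero (G := ℝ) ▸ (h.tendsto_integral_deriv_cutoff_mul hPF hFt).neg).congr' ?_
  filter_upwards [self_mem_nhdsWithin] with ε hε
  have hκ : Continuous fun x => cutoff ε (ψ x) := (continuous_cutoff ε).comp h.continuous
  have hκ' : Continuous fun x => deriv (cutoff ε) (ψ x) :=
    (continuous_deriv_cutoff ε).comp h.continuous
  have hκ1 : ∀ x, ‖cutoff ε (ψ x)‖ ≤ 1 := fun x =>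
    (Real.norm_of_nonneg (cutoff_nonneg ε _)).trans_le (cutoff_le_one ε _)
  have split := h.integral_cutoff_divergence hε hF (hFd.mono fun _ hx => hx.1)
  rw [integral_add (hint.bdd_mul hκ.aestronglyMeasurable (ae_of_all _ hκ1))
    (h.integrableOn (g := fun x => deriv (cutoff ε) (ψ x) * ⟪P x, F x⟫)
      (hκ'.continuousOn.mul hPF))] at split
  linarith

end IsDefiningFunction

end DefiningFunction

section NeumannData

variable {E : Type*} [NormedAddCommGroup E] [InnerProductSpace ℝ E] [FiniteDimensional ℝ E]

theorem inner_fderiv_gradient_comm {u : E → ℝ} {G : E → E} {x : E}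
    (h : ∀ᶠ y in 𝓝 x, HasGradientAt u (G y) y) (hG : DifferentiableAt ℝ G x) (v w : E) :
    ⟪fderiv ℝ G x v, w⟫ = ⟪v, fderiv ℝ G x w⟫ := by
  have hdual : HasFDerivAt (fun y => innerSL ℝ (G y)) ((innerSL ℝ).comp (fderiv ℝ G x)) x :=
    (innerSL ℝ : E →L[ℝ] E →L[ℝ] ℝ).hasFDerivAt.comp x hG.hasFDerivAt
  have hsymm := second_derivative_symmetric_of_eventually
    (h.mono fun y hy => hy.hasFDerivAt) hdual v w
  exact hsymm.trans (real_inner_comm _ _)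

/-- `u`, with gradient `G`, solves `Δu + λu = f` in `Ω` with the Neumann condition `⟪P, G⟫ = 0` on
`∂Ω`; here `P` is any field normal to `∂Ω`. -/
structure NeumannData (Ω : Set E) (P : E → E) (lam : ℝ) (u : E → ℝ) (G : E → E) (f : E → ℝ) :
    Prop where
  continuousOn : ContinuousOn u (closure Ω)
  continuousOn_gradient : ContinuousOn G (closure Ω)
  continuousOn_source : ContinuousOn f (closure Ω)
  hasGradientAt : ∀ x ∈ Ω, HasGradientAt u (G x) x
  contDiffOn_gradient : ContDiffOn ℝ 1 G Ω
  divergence_gradient : ∀ x ∈ Ω, divergence G x = -lam * u x + f x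
  inner_normal_eq_zero : ∀ x ∈ frontier Ω, ⟪P x, G x⟫ = 0

namespace NeumannData

variable {Ω : Set E} {ψ : E → ℝ} {P : E → E} {lam : ℝ} {u : E → ℝ} {G : E → E} {f : E → ℝ}

theorem contDiffOn (h : NeumannData Ω P lam u G f) (hΩ : IsOpen Ω) : ContDiffOn ℝ 1 u Ω :=
  fun _ hx => ContDiffAt.contDiffWithinAt <| contDiffAt_one_iff.2
    ⟨fun y => InnerProductSpace.toDual ℝ E (G y), Ω, hΩ.mem_nhds hx,
      (InnerProductSpace.toDual ℝ E).continuous.comp_continuousOn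
        (h.continuousOn_gradient.mono subset_closure),
      fun y hy => (h.hasGradientAt y hy).hasFDerivAt⟩

theorem differentiableAt_gradient (h : NeumannData Ω P lam u G f) (hΩ : IsOpen Ω) {x : E}
    (hx : x ∈ Ω) : DifferentiableAt ℝ G x :=
  (h.contDiffOn_gradient.contDiffAt (hΩ.mem_nhds hx)).differentiableAt one_ne_zero

theorem inner_fderiv_gradient_comm (h : NeumannData Ω P lam u G f) (hΩ : IsOpen Ω) {x : E}
    (hx : x ∈ Ω) (v w : E) : ⟪fderiv ℝ G x v, w⟫ = ⟪v, fderiv ℝ G x w⟫ :=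
  NodalNeumann.inner_fderiv_gradient_comm
    (Filter.mem_of_superset (hΩ.mem_nhds hx) fun y hy => h.hasGradientAt y hy)
    (h.differentiableAt_gradient hΩ hx) v w

variable {ω : E → ℝ} {Q : E → E}

theorem differentiableAt_rellichField (h : NeumannData Ω P lam u G f) (hΩ : IsOpen Ω) {x : E}
    (hx : x ∈ Ω) (hω : HasGradientAt ω (Q x) x) {N : E → E} (hN : DifferentiableAt ℝ N x) :
    DifferentiableAt ℝ (fun y => (ω y * (‖G y‖ ^ 2 - lam * u y ^ 2)) • N y
      - (2 * ω y * ⟪N y, G y⟫) • G y) x ∧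
    divergence (fun y => (ω y * (‖G y‖ ^ 2 - lam * u y ^ 2)) • N y
      - (2 * ω y * ⟪N y, G y⟫) • G y) x =
      ω x * (‖G x‖ ^ 2 - lam * u x ^ 2) * divergence N x
      - 2 * ω x * ⟪fderiv ℝ N x (G x), G x⟫ + ((‖G x‖ ^ 2 - lam * u x ^ 2) * ⟪Q x, N x⟫
      - 2 * ⟪Q x, G x⟫ * ⟪N x, G x⟫ - 2 * ω x * ⟪N x, G x⟫ * f x) := by
  have hG := h.differentiableAt_gradient hΩ hx
  have hu := (h.hasGradientAt x hx).hasFDerivAt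
  have lagrangian := hω.hasFDerivAt.fun_mul (hG.hasFDerivAt.norm_sq.fun_sub
    ((hu.pow 2).const_mul lam))
  have multiplier := (hω.hasFDerivAt.const_mul 2).fun_mul (hN.hasFDerivAt.inner ℝ hG.hasFDerivAt)
  refine ⟨(lagrangian.differentiableAt.fun_smul hN).fun_sub
    (multiplier.differentiableAt.fun_smul hG), ?_⟩
  rw [divergence_sub (lagrangian.differentiableAt.fun_smul hN)
    (multiplier.differentiableAt.fun_smul hG), divergence_smul lagrangian hN,
    divergence_smul multiplier hG, h.divergence_gradient x hx]
  have hsymm : ⟪N x, fderiv ℝ G x (G x)⟫ = ⟪G x, fderiv ℝ G x (N x)⟫ := by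
    rw [← h.inner_fderiv_gradient_comm hΩ hx, real_inner_comm]
  simp [hsymm, real_inner_comm (N x) (G x)]
  ring

variable [MeasurableSpace E] [BorelSpace E]

theorem energy_identity (h : NeumannData Ω P lam u G f) (hd : IsDefiningFunction Ω ψ P)
    (hω : ∀ x, HasGradientAt ω (Q x) x) (hQ : Continuous Q) :
    IntegrableOn (fun x => ω x * (‖G x‖ ^ 2 - lam * u x ^ 2 + u x * f x) + u x * ⟪Q x, G x⟫) Ω ∧
    ∫ x in Ω, (ω x * (‖G x‖ ^ 2 - lam * u x ^ 2 + u x * f x) + u x * ⟪Q x, G x⟫) = 0 := by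
  have hωd := contDiff_one_of_hasGradientAt hω hQ
  have hωc := hωd.continuous
  have hu := h.continuousOn
  have hG := h.continuousOn_gradient
  have hf := h.continuousOn_source
  refine (fun hint => ⟨hint, ?_⟩) (hd.integrableOn (by fun_prop))
  refine hd.integral_divergence_eq_zero_of_tangential (F := fun x => (ω x * u x) • G x)
    (locallyLipschitzOn_of_contDiffOn hd.isOpen
      ((hωd.contDiffOn.mul (h.contDiffOn hd.isOpen)).smul h.contDiffOn_gradient))
    (by fun_prop) (fun x hx => ?_) hint ?_
  · rw [inner_smul_right, h.inner_normal_eq_zero x hx, mul_zero]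
  · filter_upwards [ae_restrict_mem hd.isOpen.measurableSet] with x hx
    have hωu := (hω x).hasFDerivAt.fun_mul (h.hasGradientAt x hx).hasFDerivAt
    have hGx := h.differentiableAt_gradient hd.isOpen hx
    refine ⟨(hωu.differentiableAt).fun_smul hGx, ?_⟩
    rw [divergence_smul hωu hGx, h.divergence_gradient x hx]
    simp
    ring

theorem hardy_identity (h : NeumannData Ω P lam u G f) (hd : IsDefiningFunction Ω ψ P)
    (hω : ∀ x, HasGradientAt ω (Q x) x) (hQ : Continuous Q) {N : E → E} {K : ℝ≥0}
    (hN : LipschitzWith K N) (hbd : ∀ x ∈ frontier Ω, ω x = 0 ∨ u x = 0) :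
    IntegrableOn (fun x => ⟪Q x, N x⟫ * u x ^ 2 + 2 * (ω x * u x) * ⟪N x, G x⟫
      + (ω x * u x ^ 2) * divergence N x) Ω ∧
    ∫ x in Ω, (⟪Q x, N x⟫ * u x ^ 2 + 2 * (ω x * u x) * ⟪N x, G x⟫
      + (ω x * u x ^ 2) * divergence N x) = 0 := by
  have hωd := contDiff_one_of_hasGradientAt hω hQ
  have hωc := hωd.continuous
  have hu := h.continuousOn
  have hG := h.continuousOn_gradient
  have hNc := hN.continuous
  refine (fun hint => ⟨hint, ?_⟩) ((hd.integrableOn (by fun_prop)).add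
    (hd.integrableOn_mul_divergence (by fun_prop) hN))
  refine hd.integral_divergence_eq_zero_of_tangential (F := fun x => (ω x * u x ^ 2) • N x)
    (locallyLipschitzOn_smul (locallyLipschitzOn_of_contDiffOn hd.isOpen
      (hωd.contDiffOn.mul ((h.contDiffOn hd.isOpen).pow 2)))
      hN.locallyLipschitz.locallyLipschitzOn)
    (by fun_prop) (fun x hx => ?_) hint ?_
  · rcases hbd x hx with h0 | h0 <;> simp [h0]
  · filter_upwards [ae_restrict_mem hd.isOpen.measurableSet,
      ae_restrict_of_ae hN.ae_differentiableAt] with x hx hNx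
    have hωu := (hω x).hasFDerivAt.fun_mul ((h.hasGradientAt x hx).hasFDerivAt.pow 2)
    refine ⟨hωu.differentiableAt.fun_smul hNx, ?_⟩
    rw [divergence_smul hωu hNx]
    simp [real_inner_comm (N x) (G x)]
    ring

theorem integrableOn_mul_inner_fderiv (h : NeumannData Ω P lam u G f)
    (hd : IsDefiningFunction Ω ψ P) {g : E → ℝ} (hg : ContinuousOn g (closure Ω)) {N : E → E}
    {K : ℝ≥0} (hN : LipschitzWith K N) :
    IntegrableOn (fun x => g x * ⟪fderiv ℝ N x (G x), G x⟫) Ω := by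
  have hG := h.continuousOn_gradient
  have hGm : AEStronglyMeasurable G (volume.restrict Ω) :=
    (hG.mono subset_closure).aestronglyMeasurable hd.isOpen.measurableSet
  have hDm : AEStronglyMeasurable (fun x => fderiv ℝ N x (G x)) (volume.restrict Ω) :=
    ((ContinuousLinearMap.apply ℝ E).flip.aestronglyMeasurable_comp₂
      (measurable_fderiv ℝ N).aestronglyMeasurable hGm)
  refine Integrable.mono (hd.integrableOn (g := fun x => g x * (K * (‖G x‖ * ‖G x‖))) (by fun_prop))
    (((hg.mono subset_closure).aestronglyMeasurable hd.isOpen.measurableSet).mul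
      (hDm.inner hGm)) (ae_of_all _ fun x => ?_)
  rw [norm_mul, norm_mul, ← mul_assoc (K : ℝ), Real.norm_of_nonneg (r := K * ‖G x‖ * ‖G x‖)
    (by positivity)]
  refine mul_le_mul_of_nonneg_left ?_ (norm_nonneg _)
  exact (norm_inner_le_norm _ _).trans (mul_le_mul_of_nonneg_right
    ((fderiv ℝ N x).le_of_opNorm_le (norm_fderiv_le_of_lipschitz ℝ hN) _) (norm_nonneg _))

theorem rellich_identity (h : NeumannData Ω P lam u G f) (hd : IsDefiningFunction Ω ψ P)
    (hω : ∀ x, HasGradientAt ω (Q x) x) (hQ : Continuous Q) {N : E → E} {K : ℝ≥0}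
    (hN : LipschitzWith K N) (hbd : ∀ x ∈ frontier Ω, ω x = 0 ∨ (u x = 0 ∧ G x = 0)) :
    IntegrableOn (fun x =>
      ω x * (‖G x‖ ^ 2 - lam * u x ^ 2) * divergence N x
      - 2 * ω x * ⟪fderiv ℝ N x (G x), G x⟫ + ((‖G x‖ ^ 2 - lam * u x ^ 2) * ⟪Q x, N x⟫
      - 2 * ⟪Q x, G x⟫ * ⟪N x, G x⟫ - 2 * ω x * ⟪N x, G x⟫ * f x)) Ω ∧
    ∫ x in Ω, (ω x * (‖G x‖ ^ 2 - lam * u x ^ 2) * divergence N x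
      - 2 * ω x * ⟪fderiv ℝ N x (G x), G x⟫ + ((‖G x‖ ^ 2 - lam * u x ^ 2) * ⟪Q x, N x⟫
      - 2 * ⟪Q x, G x⟫ * ⟪N x, G x⟫ - 2 * ω x * ⟪N x, G x⟫ * f x)) = 0 := by
  have hωd := contDiff_one_of_hasGradientAt hω hQ
  have hωc := hωd.continuous
  have hu := h.continuousOn
  have hG := h.continuousOn_gradient
  have hf := h.continuousOn_source
  have hNc := hN.continuous
  have hlag := locallyLipschitzOn_of_contDiffOn hd.isOpen (hωd.contDiffOn.mul
    ((h.contDiffOn_gradient.norm_sq ℝ).sub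
      ((contDiffOn_const (c := lam)).mul ((h.contDiffOn hd.isOpen).pow 2))))
  have hG_loc := locallyLipschitzOn_of_contDiffOn hd.isOpen h.contDiffOn_gradient
  have hN_loc : LocallyLipschitzOn Ω N := hN.locallyLipschitz.locallyLipschitzOn
  have hmult := locallyLipschitzOn_smul (locallyLipschitzOn_of_contDiffOn hd.isOpen
    (contDiffOn_const (c := (2 : ℝ)).mul hωd.contDiffOn)) (locallyLipschitzOn_inner hN_loc hG_loc)
  refine (fun hint => ⟨hint, hd.integral_divergence_eq_zero_of_tangential
      (F := fun x => (ω x * (‖G x‖ ^ 2 - lam * u x ^ 2)) • N x - (2 * ω x * ⟪N x, G x⟫) • G x)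
      (locallyLipschitzOn_sub (locallyLipschitzOn_smul hlag hN_loc)
        (locallyLipschitzOn_smul hmult hG_loc)) (by fun_prop) (fun x hx => ?_) hint ?_⟩)
    (((hd.integrableOn_mul_divergence (by fun_prop) hN).sub
      (h.integrableOn_mul_inner_fderiv hd (by fun_prop) hN)).add (hd.integrableOn (by fun_prop)))
  · rw [inner_sub_right, inner_smul_right, inner_smul_right, h.inner_normal_eq_zero x hx]
    rcases hbd x hx with h0 | ⟨h0, h1⟩
    · simp [h0]
    · simp [h0, h1]
  · filter_upwards [ae_restrict_mem hd.isOpen.measurableSet,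
      ae_restrict_of_ae hN.ae_differentiableAt] with x hx hNx
    exact h.differentiableAt_rellichField hd.isOpen hx (hω x) hNx

end NeumannData

end NeumannData

section CarlemanWeight

/-- The convexification `(e^{Ks} - 1) / K` of `s`; `K` is always positive. -/
def convexifiedHeight (K s : ℝ) : ℝ := (Real.exp (K * s) - 1) / K

/-- The Carleman weight `cosh (2τφ)`, `φ` the convexified height. Being even in `φ`, it has slope
zero at `s = 0`, so that it behaves like `e^{2τφ}` without producing boundary terms there. -/
def carlemanWeight (K τ s : ℝ) : ℝ := Real.cosh (2 * τ * convexifiedHeight K s)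

/-- Half the derivative of the Carleman weight. -/
def carlemanSlope (K τ s : ℝ) : ℝ :=
  τ * Real.exp (K * s) * Real.sinh (2 * τ * convexifiedHeight K s)

/-- The derivative of `carlemanSlope`. -/
def carlemanCurvature (K τ s : ℝ) : ℝ :=
  K * carlemanSlope K τ s + 2 * (τ * Real.exp (K * s)) ^ 2 * carlemanWeight K τ s

/-- The primitive of the Carleman weight that vanishes at `0`. -/
def carlemanPrimitive (K τ s : ℝ) : ℝ := ∫ t in (0 : ℝ)..s, carlemanWeight K τ t

theorem convexifiedHeight_zero (K : ℝ) : convexifiedHeight K 0 = 0 := by simp [convexifiedHeight]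

theorem carlemanSlope_zero (K τ : ℝ) : carlemanSlope K τ 0 = 0 := by
  simp [carlemanSlope, convexifiedHeight_zero]

theorem carlemanPrimitive_zero (K τ : ℝ) : carlemanPrimitive K τ 0 = 0 := by
  simp [carlemanPrimitive]

theorem one_le_carlemanWeight (K τ s : ℝ) : 1 ≤ carlemanWeight K τ s := Real.one_le_cosh _

theorem sinh_le_carlemanWeight (K τ s : ℝ) :
    Real.sinh (2 * τ * convexifiedHeight K s) ≤ carlemanWeight K τ s :=
  (Real.sinh_lt_cosh _).le

theorem carlemanPrimitive_nonneg (K τ : ℝ) {s : ℝ} (hs : 0 ≤ s) : 0 ≤ carlemanPrimitive K τ s :=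
  intervalIntegral.integral_nonneg hs fun t _ => zero_le_one.trans (one_le_carlemanWeight K τ t)

variable {K τ s t : ℝ}

theorem strictMono_convexifiedHeight (hK : 0 < K) : StrictMono (convexifiedHeight K) :=
  fun _ _ hab => div_lt_div_of_pos_right
    (sub_lt_sub_right (Real.exp_lt_exp.2 (mul_lt_mul_of_pos_left hab hK)) 1) hK

theorem convexifiedHeight_nonneg (hK : 0 < K) (hs : 0 ≤ s) : 0 ≤ convexifiedHeight K s :=
  (convexifiedHeight_zero K).symm.trans_le ((strictMono_convexifiedHeight hK).monotone hs)

theorem hasDerivAt_convexifiedHeight (hK : 0 < K) (s : ℝ) :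
    HasDerivAt (convexifiedHeight K) (Real.exp (K * s)) s := by
  refine ((((hasDerivAt_id s).const_mul K).exp.sub_const 1).div_const K).congr_deriv ?_
  simp only [id, mul_one]
  field_simp

theorem hasDerivAt_carlemanWeight (hK : 0 < K) (τ s : ℝ) :
    HasDerivAt (carlemanWeight K τ) (2 * carlemanSlope K τ s) s := by
  refine ((hasDerivAt_convexifiedHeight hK s).const_mul (2 * τ)).cosh.congr_deriv ?_
  unfold carlemanSlope
  ring

theorem hasDerivAt_sinh_convexifiedHeight (hK : 0 < K) (τ s : ℝ) :
    HasDerivAt (fun s => Real.sinh (2 * τ * convexifiedHeight K s))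
      (2 * (τ * Real.exp (K * s)) * carlemanWeight K τ s) s := by
  refine ((hasDerivAt_convexifiedHeight hK s).const_mul (2 * τ)).sinh.congr_deriv ?_
  unfold carlemanWeight
  ring

theorem hasDerivAt_carlemanSlope (hK : 0 < K) (τ s : ℝ) :
    HasDerivAt (carlemanSlope K τ) (carlemanCurvature K τ s) s := by
  refine ((((hasDerivAt_id s).const_mul K).exp.const_mul τ).fun_mul
    (hasDerivAt_sinh_convexifiedHeight hK τ s)).congr_deriv ?_
  simp only [id, mul_one, carlemanCurvature, carlemanSlope]
  ring

theorem continuous_carlemanWeight (hK : 0 < K) (τ : ℝ) : Continuous (carlemanWeight K τ) :=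
  continuous_iff_continuousAt.2 fun s => (hasDerivAt_carlemanWeight hK τ s).continuousAt

theorem continuous_carlemanSlope (hK : 0 < K) (τ : ℝ) : Continuous (carlemanSlope K τ) :=
  continuous_iff_continuousAt.2 fun s => (hasDerivAt_carlemanSlope hK τ s).continuousAt

theorem continuous_carlemanCurvature (hK : 0 < K) (τ : ℝ) : Continuous (carlemanCurvature K τ) := by
  have := continuous_carlemanSlope hK τ
  have := continuous_carlemanWeight hK τ
  unfold carlemanCurvature
  fun_prop

theorem hasDerivAt_carlemanPrimitive (hK : 0 < K) (τ s : ℝ) :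
    HasDerivAt (carlemanPrimitive K τ) (carlemanWeight K τ s) s :=
  ((continuous_carlemanWeight hK τ).integral_hasStrictDerivAt 0 s).hasDerivAt

theorem sinh_convexifiedHeight_nonneg (hK : 0 < K) (hτ : 1 ≤ τ) (hs : 0 ≤ s) :
    0 ≤ Real.sinh (2 * τ * convexifiedHeight K s) := by
  have := convexifiedHeight_nonneg hK hs
  exact Real.sinh_nonneg_iff.2 (by positivity)

theorem mul_sinh_le_carlemanSlope (hK : 0 < K) (hτ : 1 ≤ τ) (hs : 0 ≤ s) :
    τ * Real.sinh (2 * τ * convexifiedHeight K s) ≤ carlemanSlope K τ s :=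
  mul_le_mul_of_nonneg_right
    (le_mul_of_one_le_right (by linarith) (Real.one_le_exp (by positivity)))
    (sinh_convexifiedHeight_nonneg hK hτ hs)

theorem carlemanSlope_nonneg (hK : 0 < K) (hτ : 1 ≤ τ) (hs : 0 ≤ s) : 0 ≤ carlemanSlope K τ s :=
  (mul_nonneg (by linarith) (sinh_convexifiedHeight_nonneg hK hτ hs)).trans
    (mul_sinh_le_carlemanSlope hK hτ hs)

theorem mul_carlemanPrimitive_le_sinh (hK : 0 < K) (hτ : 1 ≤ τ) (hs : 0 ≤ s) :
    2 * τ * carlemanPrimitive K τ s ≤ Real.sinh (2 * τ * convexifiedHeight K s) := by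
  have gap_deriv := fun t => (hasDerivAt_sinh_convexifiedHeight hK τ t).fun_sub
    ((hasDerivAt_carlemanPrimitive hK τ t).const_mul (2 * τ))
  have gap_mono : MonotoneOn (fun s => Real.sinh (2 * τ * convexifiedHeight K s)
      - 2 * τ * carlemanPrimitive K τ s) (Ici 0) := by
    refine monotoneOn_of_deriv_nonneg (convex_Ici 0)
      (fun t _ => (gap_deriv t).continuousAt.continuousWithinAt)
      (fun t _ => (gap_deriv t).differentiableAt.differentiableWithinAt) fun t ht => ?_
    rw [interior_Ici, mem_Ioi] at ht
    rw [(gap_deriv t).deriv, sub_nonneg, ← mul_assoc]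
    exact mul_le_mul_of_nonneg_right
      (le_mul_of_one_le_right (by linarith) (Real.one_le_exp (by positivity)))
      (zero_le_one.trans (one_le_carlemanWeight K τ t))
  have gap_nonneg := gap_mono (mem_Ici.2 le_rfl) (mem_Ici.2 hs) hs
  simp only [convexifiedHeight_zero, carlemanPrimitive_zero, mul_zero, Real.sinh_zero,
    sub_zero] at gap_nonneg
  linarith

theorem sq_mul_carlemanPrimitive_le (hK : 0 < K) (hτ : 1 ≤ τ) (hs : 0 ≤ s) :
    τ ^ 2 * carlemanPrimitive K τ s ≤ carlemanSlope K τ s := by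
  have upper := mul_carlemanPrimitive_le_sinh hK hτ hs
  have lower := mul_sinh_le_carlemanSlope hK hτ hs
  nlinarith [mul_nonneg (sq_nonneg τ) (carlemanPrimitive_nonneg K τ hs)]

theorem carlemanPrimitive_le_carlemanWeight (hK : 0 < K) (hτ : 1 ≤ τ) (hs : 0 ≤ s) :
    carlemanPrimitive K τ s ≤ carlemanWeight K τ s := by
  have upper := mul_carlemanPrimitive_le_sinh hK hτ hs
  nlinarith [carlemanPrimitive_nonneg K τ hs, sinh_le_carlemanWeight K τ s]

/-- Since `cosh² - sinh² = 1`, the quadratic terms in `τ` cancel up to `2τ²e^{2Ks}`, which pays for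
the lower-order terms. -/
theorem le_carlemanCurvature_mul_carlemanWeight (hK : 0 < K) (hτ : 1 ≤ τ) (hτK : K ≤ 2 * τ ^ 2)
    (hs : 0 ≤ s) :
    K * (carlemanSlope (2 * K) τ s + carlemanWeight (2 * K) τ s) * carlemanWeight (2 * K) τ s
      + 2 * carlemanSlope (2 * K) τ s ^ 2
      ≤ carlemanCurvature (2 * K) τ s * carlemanWeight (2 * K) τ s := by
  have hK2 : 0 < 2 * K := by positivity
  have hsinh := sinh_convexifiedHeight_nonneg hK2 hτ hs
  have hslope := mul_sinh_le_carlemanSlope hK2 hτ hs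
  have hone := one_le_carlemanWeight (2 * K) τ s
  have hsinh_le := sinh_le_carlemanWeight (2 * K) τ s
  have cosh_sq : carlemanWeight (2 * K) τ s ^ 2
    = Real.sinh (2 * τ * convexifiedHeight (2 * K) s) ^ 2 + 1 := Real.cosh_sq _
  have slope_eq : carlemanSlope (2 * K) τ s
    = τ * Real.exp (2 * K * s) * Real.sinh (2 * τ * convexifiedHeight (2 * K) s) := rfl
  have exp_growth : τ ^ 2 ≤ (τ * Real.exp (2 * K * s)) ^ 2 :=
    pow_le_pow_left₀ (by linarith)
      (le_mul_of_one_le_right (by linarith) (Real.one_le_exp (by positivity))) 2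
  unfold carlemanCurvature
  set S := Real.sinh (2 * τ * convexifiedHeight (2 * K) s)
  set A := carlemanWeight (2 * K) τ s
  set b := carlemanSlope (2 * K) τ s
  set e := Real.exp (2 * K * s)
  have cancellation : 2 * (τ * e) ^ 2 * A * A - 2 * b ^ 2 = 2 * (τ * e) ^ 2 := by
    rw [slope_eq]
    linear_combination 2 * (τ * e) ^ 2 * cosh_sq
  have sinh_sq_le : S ^ 2 ≤ A * b := by
    rw [sq]
    exact mul_le_mul hsinh_le (by nlinarith) hsinh (by linarith)
  nlinarith [mul_le_mul_of_nonneg_left sinh_sq_le hK.le]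

theorem carlemanWeight_le_exp (hK : 0 < K) (hτ : 1 ≤ τ) (hs : 0 ≤ s) (hst : s ≤ t) :
    carlemanWeight K τ s ≤ Real.exp (2 * τ * convexifiedHeight K t) := by
  have hs' := convexifiedHeight_nonneg hK hs
  have hmono : 2 * τ * convexifiedHeight K s ≤ 2 * τ * convexifiedHeight K t :=
    mul_le_mul_of_nonneg_left ((strictMono_convexifiedHeight hK).monotone hst) (by positivity)
  have hpos : 0 ≤ 2 * τ * convexifiedHeight K s := by positivity
  rw [carlemanWeight, Real.cosh_eq]
  linarith [Real.exp_le_exp.2 hmono, Real.exp_le_exp.2 ((neg_nonpos.2 hpos).trans hpos)]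

theorem exp_div_two_le_carlemanWeight (hK : 0 < K) (hτ : 1 ≤ τ) (hst : s ≤ t) :
    Real.exp (2 * τ * convexifiedHeight K s) / 2 ≤ carlemanWeight K τ t := by
  have hmono : 2 * τ * convexifiedHeight K s ≤ 2 * τ * convexifiedHeight K t :=
    mul_le_mul_of_nonneg_left ((strictMono_convexifiedHeight hK).monotone hst) (by positivity)
  rw [carlemanWeight, Real.cosh_eq]
  linarith [Real.exp_le_exp.2 hmono, Real.exp_pos (-(2 * τ * convexifiedHeight K t))]

end CarlemanWeight

section NormalisedGradient

variable {V : Type*} [NormedAddCommGroup V] [InnerProductSpace ℝ V]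

/-- The inversion `v ↦ v / ‖v‖²`, truncated to the linear map `v / c` where `‖v‖² ≤ c`. -/
def truncatedInversion (c : ℝ) (v : V) : V := (max (‖v‖ ^ 2) c)⁻¹ • v

theorem norm_max_smul_sub_max_smul_sq_le {c : ℝ} (hc : 0 < c) (v w : V) :
    ‖max (‖w‖ ^ 2) c • v - max (‖v‖ ^ 2) c • w‖ ^ 2
      ≤ max (‖v‖ ^ 2) c * max (‖w‖ ^ 2) c * ‖v - w‖ ^ 2 := by
  wlog hvw : ‖v‖ ^ 2 ≤ ‖w‖ ^ 2 generalizing v w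
  · rw [norm_sub_rev, norm_sub_rev v, mul_comm (max (‖v‖ ^ 2) c)]
    exact this w v (le_of_not_ge hvw)
  have defect : (max (‖w‖ ^ 2) c - max (‖v‖ ^ 2) c)
      * (max (‖w‖ ^ 2) c * ‖v‖ ^ 2 - max (‖v‖ ^ 2) c * ‖w‖ ^ 2) ≤ 0 := by
    rcases le_total (‖w‖ ^ 2) c with hw | hw
    · rw [max_eq_right hw, max_eq_right (hvw.trans hw), sub_self, zero_mul]
    · rw [max_eq_left hw]
      exact mul_nonpos_of_nonneg_of_nonpos (sub_nonneg.2 (max_le hvw hw))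
        (by nlinarith [le_max_left (‖v‖ ^ 2) c, sq_nonneg ‖w‖])
  rw [norm_sub_sq_real, norm_sub_sq_real, norm_smul, norm_smul, real_inner_smul_left,
    real_inner_smul_right, Real.norm_of_nonneg (hc.le.trans (le_max_right _ _)),
    Real.norm_of_nonneg (hc.le.trans (le_max_right _ _))]
  nlinarith

theorem lipschitzWith_truncatedInversion {c : ℝ} (hc : 0 < c) :
    LipschitzWith (c⁻¹).toNNReal (truncatedInversion c : V → V) := by
  refine LipschitzWith.of_dist_le_mul fun v w => ?_
  rw [Real.coe_toNNReal _ (by positivity), dist_eq_norm, dist_eq_norm]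
  have key := norm_max_smul_sub_max_smul_sq_le hc v w
  have hμ : c ≤ max (‖v‖ ^ 2) c := le_max_right _ _
  have hν : c ≤ max (‖w‖ ^ 2) c := le_max_right _ _
  unfold truncatedInversion
  set μ := max (‖v‖ ^ 2) c
  set ν := max (‖w‖ ^ 2) c
  have hμ0 := hc.trans_le hμ
  have hν0 := hc.trans_le hν
  have common_denominator : μ⁻¹ • v - ν⁻¹ • w = (μ * ν)⁻¹ • (ν • v - μ • w) := by
    rw [smul_sub, smul_smul, smul_smul]
    congr 2 <;> field_simp
  refine (sq_le_sq₀ (norm_nonneg _) (by positivity)).1 ?_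
  rw [common_denominator, norm_smul, mul_pow, mul_pow, norm_inv,
    Real.norm_of_nonneg (by positivity)]
  calc ((μ * ν)⁻¹) ^ 2 * ‖ν • v - μ • w‖ ^ 2
      ≤ ((μ * ν)⁻¹) ^ 2 * (μ * ν * ‖v - w‖ ^ 2) := by gcongr
    _ = (μ * ν)⁻¹ * ‖v - w‖ ^ 2 := by field_simp
    _ ≤ c⁻¹ ^ 2 * ‖v - w‖ ^ 2 := by
        rw [inv_pow, sq c]
        gcongr

end NormalisedGradient

section CarlemanAlgebra

variable {a A b b' c₀ C₂ g n q u f M : ℝ}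

theorem neg_mul_le_carleman_quadratic (hA : 0 < A) (hg : 0 < g) (b q u M : ℝ) :
    -((2 * b ^ 2 / A + M * b + M ^ 2 * A / 2) * (g * u ^ 2))
      ≤ 2 * (A * q) * (q / g) + u * (2 * b * q) + 2 * (b * u) * q + M * (u * (A * q)) := by
  have complete_square : 2 * (A * q) * (q / g) + u * (2 * b * q) + 2 * (b * u) * q
        + M * (u * (A * q)) + (2 * b ^ 2 / A + M * b + M ^ 2 * A / 2) * (g * u ^ 2)
      = 2 * A / g * (q + (b / A + M / 4) * g * u) ^ 2 + 3 / 8 * M ^ 2 * A * (g * u ^ 2) := by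
    field_simp
    ring
  have : 0 ≤ 2 * A / g * (q + (b / A + M / 4) * g * u) ^ 2 + 3 / 8 * M ^ 2 * A * (g * u ^ 2) := by
    positivity
  linarith

theorem neg_le_mul_source (hc₀ : 0 < c₀) (hg : c₀ ≤ g) (ha : 0 ≤ a) (haA : a ≤ A)
    (hq : q ^ 2 ≤ g * n) (f : ℝ) :
    -(a * n / 2 + 2 / c₀ * (A * f ^ 2)) ≤ 2 * a * (q / g) * f := by
  have hg0 := hc₀.trans_le hg
  have hn : 0 ≤ n := nonneg_of_mul_nonneg_right ((sq_nonneg q).trans hq) hg0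
  have hquot : c₀ / 2 * (q / g) ^ 2 ≤ n / 2 := by
    have : c₀ * (q / g) ^ 2 ≤ n := by
      rw [div_pow, ← mul_div_assoc, div_le_iff₀ (by positivity)]
      nlinarith [mul_le_mul_of_nonneg_left hg (mul_nonneg hg0.le hn)]
    linarith
  have young : 0 ≤ c₀ / 2 * (q / g) ^ 2 + 2 * (q / g) * f + 2 / c₀ * f ^ 2 := by
    have : c₀ / 2 * (q / g) ^ 2 + 2 * (q / g) * f + 2 / c₀ * f ^ 2
        = c₀ / 2 * (q / g + 2 / c₀ * f) ^ 2 := by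
      field_simp
      ring
    rw [this]
    positivity
  have hf : 0 ≤ 2 / c₀ * f ^ 2 := by positivity
  linarith [mul_nonneg ha young, mul_le_mul_of_nonneg_left hquot ha,
    mul_le_mul_of_nonneg_right haA hf]

theorem neg_le_mul_mul {w W : ℝ} (hw : 0 ≤ w) (hwW : w ≤ W) (u f : ℝ) :
    -((W * u ^ 2 + W * f ^ 2) / 2) ≤ w * (u * f) := by
  linarith [mul_nonneg hw (sq_nonneg (u + f)),
    mul_le_mul_of_nonneg_right hwW (add_nonneg (sq_nonneg u) (sq_nonneg f))]

theorem carleman_zeroth_order_le {K D : ℝ} (hc₀ : 0 ≤ c₀) (hg : c₀ ≤ g) (hg2 : g ≤ C₂)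
    (hM : 0 ≤ M) (hK : 0 ≤ K) (hKb : D + M * C₂ ≤ K * c₀)
    (hKA : M ^ 2 * C₂ / 2 + 3 / 2 + M / 2 ≤ K * c₀) (hA : 0 < A) (hb : 0 ≤ b)
    (hb' : K * (b + A) * A + 2 * b ^ 2 ≤ b' * A) (u : ℝ) :
    D * (b * u ^ 2) + (3 / 2 + M / 2) * (A * u ^ 2)
      ≤ (b' - (2 * b ^ 2 / A + M * b + M ^ 2 * A / 2)) * (g * u ^ 2) := by
  have curvature_gain : K * (b + A) ≤ b' - 2 * b ^ 2 / A := by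
    have : 2 * b ^ 2 / A * A = 2 * b ^ 2 := div_mul_cancel₀ _ hA.ne'
    exact le_of_mul_le_mul_right (by linarith) hA
  have slope_part : D * b ≤ (K * b - M * b) * g := by
    have h₁ := mul_le_mul_of_nonneg_left hg (mul_nonneg hK hb)
    have h₂ := mul_le_mul_of_nonneg_left hg2 (mul_nonneg hM hb)
    linarith [mul_le_mul_of_nonneg_right hKb hb]
  have weight_part : (3 / 2 + M / 2) * A ≤ (K * A - M ^ 2 * A / 2) * g := by
    have h₁ := mul_le_mul_of_nonneg_left hg (mul_nonneg hK hA.le)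
    have h₂ := mul_le_mul_of_nonneg_left hg2 (mul_nonneg (sq_nonneg M) hA.le)
    linarith [mul_le_mul_of_nonneg_right hKA hA.le]
  have hgu : 0 ≤ g * u ^ 2 := mul_nonneg (hc₀.trans hg) (sq_nonneg u)
  linarith [mul_le_mul_of_nonneg_right curvature_gain hgu,
    mul_le_mul_of_nonneg_right slope_part (sq_nonneg u),
    mul_le_mul_of_nonneg_right weight_part (sq_nonneg u)]

/- The multiplier `M` pays for the error term `a * (dN * (n - lam * u ^ 2) - 2 * tN)`, and the
curvature `b'` of the weight for everything of order zero in `u`. -/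
theorem carleman_pointwise {τ lam dN tN dP K CP : ℝ} (hc₀ : 0 < c₀) (hg : c₀ ≤ g) (hg2 : g ≤ C₂)
    (hM : 1 ≤ M) (hK : 0 ≤ K) (hKb : CP + 2 * M + M * C₂ ≤ K * c₀)
    (hKA : M ^ 2 * C₂ / 2 + 3 / 2 + M / 2 ≤ K * c₀) (hlam : lam ≤ τ ^ 2) (ha : 0 ≤ a)
    (haA : a ≤ A) (hab : τ ^ 2 * a ≤ b) (hA : 1 ≤ A) (hb : 0 ≤ b)
    (hb' : K * (b + A) * A + 2 * b ^ 2 ≤ b' * A) (hq : q ^ 2 ≤ g * n)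
    (herr : |dN * (n - lam * u ^ 2) - 2 * tN| ≤ (M - 1) * (n + lam * u ^ 2)) (hdP : |dP| ≤ CP) :
    A * u ^ 2 ≤ (2 / c₀ + 1 / 2 + M / 2) * (A * f ^ 2)
      + (-(a * (n - lam * u ^ 2) * dN - 2 * a * tN
            + ((n - lam * u ^ 2) * A - 2 * (A * q) * (q / g) - 2 * a * (q / g) * f))
        + (A * (n - lam * u ^ 2 + u * f) + u * (2 * b * q))
        + (b' * g * u ^ 2 + 2 * (b * u) * q + (b * u ^ 2) * dP)
        + M * (a * (n - lam * u ^ 2 + u * f) + u * (A * q))) := by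
  have hg0 := hc₀.trans_le hg
  have hA0 := one_pos.trans_le hA
  have hn : 0 ≤ n := nonneg_of_mul_nonneg_right ((sq_nonneg q).trans hq) hg0
  have slope_absorbs_lam : a * (lam * u ^ 2) ≤ b * u ^ 2 := by
    rw [← mul_assoc]
    exact mul_le_mul_of_nonneg_right (by linarith [mul_le_mul_of_nonneg_left hlam ha])
      (sq_nonneg u)
  have error : a * (dN * (n - lam * u ^ 2) - 2 * tN) ≤ (M - 1) * (a * n + b * u ^ 2) := by
    have h₁ := mul_le_mul_of_nonneg_left (abs_le.1 herr).2 ha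
    have h₂ := mul_le_mul_of_nonneg_left slope_absorbs_lam (sub_nonneg.2 hM)
    linarith
  have divergence_part : -(CP * (b * u ^ 2)) ≤ b * u ^ 2 * dP := by
    linarith [mul_le_mul_of_nonneg_left (abs_le.1 hdP).1 (mul_nonneg hb (sq_nonneg u))]
  have square := neg_mul_le_carleman_quadratic hA0 hg0 b q u M
  have source := neg_le_mul_source hc₀ hg ha haA hq f
  have cross := neg_le_mul_mul hA0.le le_rfl u f
  have cross' := mul_le_mul_of_nonneg_left (neg_le_mul_mul ha haA u f) (zero_le_one.trans hM)
  have zeroth := carleman_zeroth_order_le hc₀.le hg hg2 (zero_le_one.trans hM) hK hKb hKA hA0 hb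
    hb' u
  have hM' := mul_le_mul_of_nonneg_left slope_absorbs_lam (zero_le_one.trans hM)
  have hbu := mul_nonneg hb (sq_nonneg u)
  linarith [mul_nonneg ha hn]

end CarlemanAlgebra

section Carleman

variable {E : Type*} [NormedAddCommGroup E] [InnerProductSpace ℝ E]

theorem hasGradientAt_comp [CompleteSpace E] {ψ : E → ℝ} {p x : E} {κ : ℝ → ℝ} {κ' : ℝ}
    (hψ : HasGradientAt ψ p x) (hκ : HasDerivAt κ κ' (ψ x)) :
    HasGradientAt (fun y => κ (ψ y)) (κ' • p) x := by
  rw [hasGradientAt_iff_hasFDerivAt, map_smul]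
  exact hκ.comp_hasFDerivAt x hψ.hasFDerivAt

theorem setIntegral_le_of_le_add_null {X : Type*} [MeasurableSpace X] {μ : Measure X} {Ω : Set X}
    (hΩ : MeasurableSet Ω) {U F R E₁ E₂ H : X → ℝ} {C M : ℝ} (iU : IntegrableOn U Ω μ)
    (iF : IntegrableOn F Ω μ) (hR : IntegrableOn R Ω μ ∧ ∫ x in Ω, R x ∂μ = 0)
    (hE₁ : IntegrableOn E₁ Ω μ ∧ ∫ x in Ω, E₁ x ∂μ = 0)
    (hE₂ : IntegrableOn E₂ Ω μ ∧ ∫ x in Ω, E₂ x ∂μ = 0)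
    (hH : IntegrableOn H Ω μ ∧ ∫ x in Ω, H x ∂μ = 0)
    (hp : ∀ x ∈ Ω, U x ≤ C * F x + (-R x + E₁ x + H x + M * E₂ x)) :
    ∫ x in Ω, U x ∂μ ≤ C * ∫ x in Ω, F x ∂μ := by
  have i₁ : IntegrableOn (fun x => -R x + E₁ x) Ω μ := hR.1.neg.add hE₁.1
  have i₂ : IntegrableOn (fun x => -R x + E₁ x + H x) Ω μ := i₁.add hH.1
  have i₃ : IntegrableOn (fun x => M * E₂ x) Ω μ := hE₂.1.const_mul M
  have i₄ : IntegrableOn (fun x => -R x + E₁ x + H x + M * E₂ x) Ω μ := i₂.add i₃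
  calc ∫ x in Ω, U x ∂μ ≤ ∫ x in Ω, (C * F x + (-R x + E₁ x + H x + M * E₂ x)) ∂μ :=
        setIntegral_mono_on iU ((iF.const_mul C).add i₄) hΩ hp
    _ = C * ∫ x in Ω, F x ∂μ := by
        rw [integral_add (iF.const_mul C) i₄, integral_add i₂ i₃, integral_add i₁ hH.1,
          integral_add (f := fun x => -R x) hR.1.neg hE₁.1, integral_neg, integral_const_mul,
          integral_const_mul, hR.2, hE₁.2, hE₂.2, hH.2]
        ring

theorem inner_sq_le_norm_sq_mul_norm_sq (v w : E) : ⟪v, w⟫ ^ 2 ≤ ‖v‖ ^ 2 * ‖w‖ ^ 2 := by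
  rw [← mul_pow]
  exact sq_le_sq.2 ((abs_real_inner_le_norm v w).trans (le_abs_self _))

theorem inner_truncatedInversion {c : ℝ} {v : E} (hv : c ≤ ‖v‖ ^ 2) (w : E) :
    ⟪truncatedInversion c v, w⟫ = ⟪v, w⟫ / ‖v‖ ^ 2 := by
  rw [truncatedInversion, max_eq_left hv, real_inner_smul_left]
  ring

theorem inner_self_truncatedInversion {c : ℝ} (hc : 0 < c) {v : E} (hv : c ≤ ‖v‖ ^ 2) :
    ⟪v, truncatedInversion c v⟫ = 1 := by
  rw [real_inner_comm, inner_truncatedInversion hv, real_inner_self_eq_norm_sq,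
    div_self (hc.trans_le hv).ne']

variable [FiniteDimensional ℝ E]

theorem abs_divergence_mul_sub_inner_fderiv_le {N : E → E} {K : ℝ≥0} (hN : LipschitzWith K N)
    (x v : E) {s : ℝ} (hs : 0 ≤ s) :
    |divergence N x * (‖v‖ ^ 2 - s) - 2 * ⟪fderiv ℝ N x v, v⟫|
      ≤ (Module.finrank ℝ E + 2) * K * (‖v‖ ^ 2 + s) := by
  have lagrangian : |‖v‖ ^ 2 - s| ≤ ‖v‖ ^ 2 + s :=
    abs_le.2 ⟨by linarith [sq_nonneg ‖v‖], by linarith⟩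
  have stress : |⟪fderiv ℝ N x v, v⟫| ≤ K * ‖v‖ ^ 2 :=
    calc |⟪fderiv ℝ N x v, v⟫| ≤ ‖fderiv ℝ N x v‖ * ‖v‖ := abs_real_inner_le_norm _ _
      _ ≤ K * ‖v‖ * ‖v‖ := by
        gcongr
        exact (fderiv ℝ N x).le_of_opNorm_le (norm_fderiv_le_of_lipschitz ℝ hN) v
      _ = K * ‖v‖ ^ 2 := by ring
  calc |divergence N x * (‖v‖ ^ 2 - s) - 2 * ⟪fderiv ℝ N x v, v⟫|
      ≤ |divergence N x| * |‖v‖ ^ 2 - s| + 2 * |⟪fderiv ℝ N x v, v⟫| := by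
        refine (abs_sub _ _).trans_eq ?_
        rw [abs_mul, abs_mul, abs_two]
    _ ≤ Module.finrank ℝ E * K * (‖v‖ ^ 2 + s) + 2 * (K * (‖v‖ ^ 2 + s)) := by
        gcongr
        · exact abs_divergence_le_of_lipschitzWith hN x
        · exact stress.trans (by gcongr; linarith)
    _ = (Module.finrank ℝ E + 2) * K * (‖v‖ ^ 2 + s) := by ring

variable [MeasurableSpace E] [BorelSpace E] {Ω : Set E} {ψ₀ ψ : E → ℝ} {P₀ P : E → E}

theorem NeumannData.carleman_of_le (hd : IsDefiningFunction Ω ψ₀ P₀)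
    (hψ : ∀ x, HasGradientAt ψ (P x) x) {L : ℝ≥0} (hP : LipschitzWith L P)
    {c₀ C₂ K M τ lam : ℝ} (hc₀ : 0 < c₀) (hK : 0 < K)
    (hM : M = (Module.finrank ℝ E + 2) * ((c₀⁻¹).toNNReal * L : ℝ≥0) + 1)
    (hKb : Module.finrank ℝ E * L + 2 * M + M * C₂ ≤ K * c₀)
    (hKA : M ^ 2 * C₂ / 2 + 3 / 2 + M / 2 ≤ K * c₀) (hτ : 1 ≤ τ) (hτK : K ≤ 2 * τ ^ 2)
    (hlam₀ : 0 ≤ lam) (hlam : lam ≤ τ ^ 2) {u : E → ℝ} {G : E → E} {f : E → ℝ}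
    (h : NeumannData Ω P₀ lam u G f) (hbd : ∀ x ∈ frontier Ω, ψ x = 0 ∨ (u x = 0 ∧ G x = 0))
    (hint : ∀ x ∈ Ω, (u x = 0 ∧ G x = 0) ∨ (0 ≤ ψ x ∧ c₀ ≤ ‖P x‖ ^ 2 ∧ ‖P x‖ ^ 2 ≤ C₂)) :
    ∫ x in Ω, carlemanWeight (2 * K) τ (ψ x) * u x ^ 2
      ≤ (2 / c₀ + 1 / 2 + M / 2) * ∫ x in Ω, carlemanWeight (2 * K) τ (ψ x) * f x ^ 2 := by
  have hK2 : 0 < 2 * K := by positivity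
  have hM1 : 1 ≤ M := hM.symm ▸ le_add_of_nonneg_left (by positivity)
  have hN := (lipschitzWith_truncatedInversion (V := E) hc₀).comp hP
  have hPc := hP.continuous
  have hψc := (contDiff_one_of_hasGradientAt hψ hPc).continuous
  have hAc := continuous_carlemanWeight hK2 τ
  have hbc := continuous_carlemanSlope hK2 τ
  have hb'c := continuous_carlemanCurvature hK2 τ
  have hu := h.continuousOn
  have hf := h.continuousOn_source
  have ha' := fun x => hasGradientAt_comp (hψ x) (hasDerivAt_carlemanPrimitive hK2 τ (ψ x))
  have hA' := fun x => hasGradientAt_comp (hψ x) (hasDerivAt_carlemanWeight hK2 τ (ψ x))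
  have hb' := fun x => hasGradientAt_comp (hψ x) (hasDerivAt_carlemanSlope hK2 τ (ψ x))
  have rellich := h.rellich_identity hd ha' (by fun_prop) hN fun x hx =>
    (hbd x hx).imp_left fun h0 => by rw [h0, carlemanPrimitive_zero]
  have hardy := h.hardy_identity hd hb' (by fun_prop) hP fun x hx =>
    (hbd x hx).imp (fun h0 => by rw [h0, carlemanSlope_zero]) And.left
  refine setIntegral_le_of_le_add_null (M := M) hd.isOpen.measurableSet
    (hd.integrableOn (by fun_prop)) (hd.integrableOn (by fun_prop)) rellich
    (h.energy_identity hd hA' (by fun_prop)) (h.energy_identity hd ha' (by fun_prop)) hardy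
    fun x hx => ?_
  rcases hint x hx with ⟨hux, hGx⟩ | ⟨hs, hg, hg2⟩
  · have hA0 := one_le_carlemanWeight (2 * K) τ (ψ x)
    have : 0 ≤ (2 / c₀ + 1 / 2 + M / 2) * (carlemanWeight (2 * K) τ (ψ x) * f x ^ 2) := by
      positivity
    simpa [hux, hGx] using this
  · have herr := abs_divergence_mul_sub_inner_fderiv_le hN x (G x)
      (mul_nonneg hlam₀ (sq_nonneg (u x)))
    have key := carleman_pointwise (u := u x) (f := f x) hc₀ hg hg2 hM1 hK.le hKb hKA hlam
      (carlemanPrimitive_nonneg _ _ hs)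
      (carlemanPrimitive_le_carlemanWeight hK2 hτ hs) (sq_mul_carlemanPrimitive_le hK2 hτ hs)
      (one_le_carlemanWeight _ _ _) (carlemanSlope_nonneg hK2 hτ hs)
      (le_carlemanCurvature_mul_carlemanWeight hK hτ hτK hs) (inner_sq_le_norm_sq_mul_norm_sq _ _)
      (by rw [hM, add_sub_cancel_right]; exact herr) (abs_divergence_le_of_lipschitzWith hP x)
    refine key.trans_eq ?_
    simp only [Function.comp_apply, real_inner_smul_left, inner_self_truncatedInversion hc₀ hg,
      inner_truncatedInversion hg, real_inner_self_eq_norm_sq]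
    ring

theorem NeumannData.exists_carleman (hd : IsDefiningFunction Ω ψ₀ P₀)
    (hψ : ∀ x, HasGradientAt ψ (P x) x) {L : ℝ≥0} (hP : LipschitzWith L P) {c₀ : ℝ}
    (hc₀ : 0 < c₀) (C₂ : ℝ) :
    ∃ C K τ₀ : ℝ, 0 < C ∧ 0 < K ∧ 1 ≤ τ₀ ∧ ∀ τ, τ₀ ≤ τ → ∀ lam u G f, 0 ≤ lam → lam ≤ τ ^ 2 →
      NeumannData Ω P₀ lam u G f → (∀ x ∈ frontier Ω, ψ x = 0 ∨ (u x = 0 ∧ G x = 0)) →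
      (∀ x ∈ Ω, (u x = 0 ∧ G x = 0) ∨ (0 ≤ ψ x ∧ c₀ ≤ ‖P x‖ ^ 2 ∧ ‖P x‖ ^ 2 ≤ C₂)) →
      ∫ x in Ω, carlemanWeight K τ (ψ x) * u x ^ 2
        ≤ C * ∫ x in Ω, carlemanWeight K τ (ψ x) * f x ^ 2 := by
  obtain ⟨M, hM⟩ : ∃ M : ℝ,
    M = (Module.finrank ℝ E + 2) * ((c₀⁻¹).toNNReal * L : ℝ≥0) + 1 := ⟨_, rfl⟩
  have hM0 : 0 < M := by rw [hM]; positivity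
  obtain ⟨K, hK, hK_large⟩ : ∃ K : ℝ, 0 < K ∧
      max (Module.finrank ℝ E * L + 2 * M + M * C₂) (M ^ 2 * C₂ / 2 + 3 / 2 + M / 2) ≤ K * c₀ :=
    (((eventually_gt_atTop 0).and
      ((tendsto_id.atTop_mul_const hc₀).eventually_ge_atTop _))).exists
  obtain ⟨hKb, hKA⟩ := max_le_iff.1 hK_large
  refine ⟨2 / c₀ + 1 / 2 + M / 2, 2 * K, max 1 K, by positivity, by positivity, le_max_left _ _,
    fun τ hτ lam u G f hlam₀ hlam h hbd hint => ?_⟩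
  obtain ⟨hτ1, hτK⟩ := max_le_iff.1 hτ
  exact h.carleman_of_le hd hψ hP hc₀ hK hM hKb hKA hτ1 (by nlinarith) hlam₀ hlam hbd hint

end Carleman

open scoped Gradient

section Localization

variable {E : Type*} [NormedAddCommGroup E] [InnerProductSpace ℝ E] [FiniteDimensional ℝ E]

theorem contDiff_gradient {ζ : E → ℝ} (hζ : ContDiff ℝ 2 ζ) : ContDiff ℝ 1 (∇ ζ) :=
  (InnerProductSpace.toDual ℝ E).symm.contDiff.comp (hζ.fderiv_right (by norm_num))

theorem gradient_eq_zero_of_eventuallyEq_const {ζ : E → ℝ} {c : ℝ} {x : E}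
    (h : ζ =ᶠ[𝓝 x] fun _ => c) : ∇ ζ x = 0 ∧ divergence (∇ ζ) x = 0 := by
  have hgrad : ∇ ζ =ᶠ[𝓝 x] fun _ => 0 := by
    filter_upwards [h.gradient] with y hy
    rw [hy, gradient_fun_const]
  refine ⟨hgrad.self_of_nhds, ?_⟩
  rw [divergence_eq_trace ((hasFDerivAt_const (0 : E) x).congr_of_eventuallyEq hgrad)]
  simp

theorem exists_contDiff_tsupport_subset_eventuallyEq_one {K U : Set E} (hK : IsCompact K)
    (hU : IsOpen U) (hKU : K ⊆ U) : ∃ η : E → ℝ, ContDiff ℝ 2 η ∧ (∀ x, η x ∈ Icc (0 : ℝ) 1) ∧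
      HasCompactSupport η ∧ tsupport η ⊆ U ∧ ∀ x ∈ K, η =ᶠ[𝓝 x] fun _ => 1 := by
  obtain ⟨L, hL, hKL, hLU⟩ := exists_compact_between hK hU hKU
  obtain ⟨η, hone, hzero, hη⟩ := exists_contMDiffMap_one_nhds_of_subset_interior (n := 2)
    (modelWithCornersSelf ℝ E) hK.isClosed hKL
  have hsupp : tsupport η ⊆ L := closure_minimal
    (fun x hx => by_contra fun hxL => hx (hzero x hxL)) hL.isClosed
  exact ⟨η, contMDiff_iff_contDiff.1 η.contMDiff, hη, hL.of_isClosed_subset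
    (isClosed_tsupport _) hsupp, hsupp.trans hLU, eventually_nhdsSet_iff_forall.1 hone⟩

variable {Ω : Set E} {ψ : E → ℝ} {P : E → E} {lam : ℝ} {u : E → ℝ} {G : E → E} {f : E → ℝ}

theorem IsDefiningFunction.exists_forall_norm_gradient_le (hd : IsDefiningFunction Ω ψ P)
    {ζ : E → ℝ} (hζ : ContDiff ℝ 2 ζ) :
    ∃ B, 0 ≤ B ∧ ∀ x ∈ Ω, ‖∇ ζ x‖ ≤ B ∧ |divergence (∇ ζ) x| ≤ B := by
  have hZ := contDiff_gradient hζ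
  obtain ⟨B₁, hB₁⟩ := hd.isCompact_closure.exists_bound_of_continuousOn hZ.continuous.continuousOn
  obtain ⟨B₂, hB₂⟩ := hd.isCompact_closure.exists_bound_of_continuousOn
    (continuous_divergence hZ).continuousOn
  refine ⟨max 0 (max B₁ B₂), le_max_left _ _, fun x hx => ?_⟩
  exact ⟨(hB₁ x (subset_closure hx)).trans (by simp), (hB₂ x (subset_closure hx)).trans (by simp)⟩

/-- The source `ζf + 2⟪∇ζ, ∇u⟫ + uΔζ` of the equation solved by `ζu` when `Δu + λu = f` and
`G = ∇u`. -/
def localizedSource (ζ u : E → ℝ) (G : E → E) (f : E → ℝ) (x : E) : ℝ :=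
  ζ x * f x + 2 * ⟪∇ ζ x, G x⟫ + u x * divergence (∇ ζ) x

theorem localizedSource_sq_le {ζ : E → ℝ} {x : E} {B : ℝ} (hζ : ζ x ∈ Icc (0 : ℝ) 1)
    (hZ : ‖∇ ζ x‖ ≤ B) (hdiv : |divergence (∇ ζ) x| ≤ B) :
    localizedSource ζ u G f x ^ 2 ≤ 3 * f x ^ 2 + 12 * B ^ 2 * (‖G x‖ ^ 2 + u x ^ 2) := by
  have hf : (ζ x * f x) ^ 2 ≤ f x ^ 2 := by
    rw [mul_pow]
    exact mul_le_of_le_one_left (sq_nonneg _) (pow_le_one₀ hζ.1 hζ.2)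
  have hG : ⟪∇ ζ x, G x⟫ ^ 2 ≤ B ^ 2 * ‖G x‖ ^ 2 := by
    rw [← mul_pow, ← sq_abs]
    exact pow_le_pow_left₀ (abs_nonneg _)
      ((abs_real_inner_le_norm _ _).trans (mul_le_mul_of_nonneg_right hZ (norm_nonneg _))) 2
  have hu : (u x * divergence (∇ ζ) x) ^ 2 ≤ B ^ 2 * u x ^ 2 := by
    rw [mul_pow, mul_comm, ← sq_abs (divergence _ _)]
    gcongr
  have := sq_nonneg (ζ x * f x - 2 * ⟪∇ ζ x, G x⟫)
  have := sq_nonneg (ζ x * f x - u x * divergence (∇ ζ) x)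
  have := sq_nonneg (2 * ⟪∇ ζ x, G x⟫ - u x * divergence (∇ ζ) x)
  have : 0 ≤ B ^ 2 * u x ^ 2 := by positivity
  rw [localizedSource]
  linarith

namespace NeumannData

theorem mul (h : NeumannData Ω P lam u G f) (hΩ : IsOpen Ω) {ζ : E → ℝ} (hζ : ContDiff ℝ 2 ζ)
    (hb : ∀ x ∈ frontier Ω, ∇ ζ x = 0) :
    NeumannData Ω P lam (fun x => ζ x * u x) (fun x => ζ x • G x + u x • ∇ ζ x)
      (localizedSource ζ u G f) := by
  have hu := h.continuousOn
  have hG := h.continuousOn_gradient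
  have hf := h.continuousOn_source
  have hζc := hζ.continuous
  have hZ := contDiff_gradient hζ
  have hZc := hZ.continuous
  have hdiv := continuous_divergence hZ
  have hgrad : ∀ x, HasGradientAt ζ (∇ ζ x) x := fun x =>
    (hζ.differentiable two_ne_zero x).hasGradientAt
  refine ⟨by fun_prop, by fun_prop, by unfold localizedSource; fun_prop, fun x hx => ?_,
    ((hζ.of_le one_le_two).contDiffOn.smul h.contDiffOn_gradient).add
      ((h.contDiffOn hΩ).smul hZ.contDiffOn), fun x hx => ?_, fun x hx => ?_⟩
  · rw [hasGradientAt_iff_hasFDerivAt, map_add, map_smul, map_smul]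
    exact (hgrad x).hasFDerivAt.fun_mul (h.hasGradientAt x hx).hasFDerivAt
  · have hGx := h.differentiableAt_gradient hΩ hx
    have hux := (h.hasGradientAt x hx).hasFDerivAt
    have hZx := hZ.differentiable one_ne_zero x
    rw [divergence_add ((hgrad x).hasFDerivAt.differentiableAt.fun_smul hGx)
      (hux.differentiableAt.fun_smul hZx), divergence_smul (hgrad x).hasFDerivAt hGx,
      divergence_smul hux hZx, h.divergence_gradient x hx, localizedSource]
    simp only [InnerProductSpace.toDual_apply_apply, real_inner_comm (∇ ζ x) (G x)]
    ring
  · simp [inner_smul_right, h.inner_normal_eq_zero x hx, hb x hx]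

variable [MeasurableSpace E] [BorelSpace E]

theorem integrableOn_sq (h : NeumannData Ω P lam u G f) (hd : IsDefiningFunction Ω ψ P) :
    IntegrableOn (fun x => u x ^ 2) Ω := hd.integrableOn (h.continuousOn.pow 2)

theorem integrableOn_source_sq (h : NeumannData Ω P lam u G f) (hd : IsDefiningFunction Ω ψ P) :
    IntegrableOn (fun x => f x ^ 2) Ω := hd.integrableOn (h.continuousOn_source.pow 2)

theorem integrableOn_energy (h : NeumannData Ω P lam u G f) (hd : IsDefiningFunction Ω ψ P) :
    IntegrableOn (fun x => ‖G x‖ ^ 2 + u x ^ 2) Ω :=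
  hd.integrableOn ((h.continuousOn_gradient.norm.pow 2).add (h.continuousOn.pow 2))

end NeumannData

theorem caccioppoli_pointwise {e q g u f B s lam : ℝ} (he : e ∈ Icc (0 : ℝ) 1)
    (hq : |q| ≤ B * g) (hs : 1 ≤ s) (hlam : 0 ≤ lam)
    (hlams : lam ≤ s ^ 2) :
    e ^ 2 * (g ^ 2 + u ^ 2) ≤ 2 * (e ^ 2 * (g ^ 2 - lam * u ^ 2 + u * f) + u * (2 * e * q)) +
      (4 + 4 * B ^ 2) * s ^ 2 * (u ^ 2 + f ^ 2) := by
  have he2 : e ^ 2 ≤ 1 := pow_le_one₀ he.1 he.2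
  have hs2 : 1 ≤ s ^ 2 := one_le_pow₀ hs
  have cross : |u * (4 * e * q)| ≤ e ^ 2 * g ^ 2 + 4 * B ^ 2 * u ^ 2 := by
    calc |u * (4 * e * q)| = 4 * e * |u| * |q| := by
          rw [abs_mul, abs_mul, abs_of_nonneg (mul_nonneg zero_le_four he.1)]
          ring
      _ ≤ 4 * e * |u| * (B * g) :=
          mul_le_mul_of_nonneg_left hq (mul_nonneg (mul_nonneg zero_le_four he.1) (abs_nonneg u))
      _ ≤ e ^ 2 * g ^ 2 + 4 * B ^ 2 * u ^ 2 := by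
          rw [← sq_abs u]
          linarith [sq_nonneg (e * g - 2 * B * |u|)]
  have source : -(e ^ 2 * (2 * (u * f))) ≤ u ^ 2 + f ^ 2 := by
    have hle : -(2 * (u * f)) ≤ u ^ 2 + f ^ 2 := by linarith [sq_nonneg (u + f)]
    calc -(e ^ 2 * (2 * (u * f))) = e ^ 2 * -(2 * (u * f)) := by ring
      _ ≤ e ^ 2 * (u ^ 2 + f ^ 2) := mul_le_mul_of_nonneg_left hle (sq_nonneg e)
      _ ≤ u ^ 2 + f ^ 2 := mul_le_of_le_one_left (by positivity) he2
  have spectral : e ^ 2 * (lam * u ^ 2) ≤ s ^ 2 * u ^ 2 :=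
    (mul_le_mul he2 (mul_le_mul_of_nonneg_right hlams (sq_nonneg u)) (by positivity)
      zero_le_one).trans_eq (one_mul _)
  have hu := le_mul_of_one_le_left (sq_nonneg u) hs2
  have hf := le_mul_of_one_le_left (sq_nonneg f) hs2
  have hBu := mul_le_mul_of_nonneg_left hu (sq_nonneg B)
  have hBf := mul_nonneg (sq_nonneg B) (mul_nonneg (sq_nonneg s) (sq_nonneg f))
  have heu := mul_le_of_le_one_left (sq_nonneg u) he2
  linarith [neg_abs_le (u * (4 * e * q)), sq_nonneg f]

theorem IsDefiningFunction.exists_caccioppoli [MeasurableSpace E] [BorelSpace E]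
    (hd : IsDefiningFunction Ω ψ P) {K U : Set E} (hK : IsCompact K) (hU : IsOpen U)
    (hKU : K ⊆ U) (hUΩ : U ⊆ Ω) :
    ∃ C, 0 ≤ C ∧ ∀ s lam u G f, 1 ≤ s → 0 ≤ lam → lam ≤ s ^ 2 → NeumannData Ω P lam u G f →
      ∫ x in K, (‖G x‖ ^ 2 + u x ^ 2) ≤ C * s ^ 2 * ((∫ x in U, u x ^ 2) + ∫ x in Ω, f x ^ 2) := by
  obtain ⟨η, hη, h01, -, hηU, hone⟩ :=
    exists_contDiff_tsupport_subset_eventuallyEq_one hK hU hKU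
  obtain ⟨B, -, hB⟩ := hd.exists_forall_norm_gradient_le hη
  refine ⟨4 + 4 * B ^ 2, by positivity, fun s lam u G f hs hlam hlams h => ?_⟩
  have hηc := hη.continuous
  have hGc := h.continuousOn_gradient
  have huc := h.continuousOn
  have hZc := (contDiff_gradient hη).continuous
  have hsq : ∀ x, HasGradientAt (fun x => η x ^ 2) ((2 * η x) • ∇ η x) x := fun x =>
    hasGradientAt_comp (κ := fun s => s ^ 2) (hη.differentiable two_ne_zero x).hasGradientAt
      (by simpa using hasDerivAt_pow 2 (η x))
  obtain ⟨hint, hzero⟩ := h.energy_identity hd hsq (by fun_prop)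
  have hu : IntegrableOn (U.indicator fun x => u x ^ 2) Ω :=
    (h.integrableOn_sq hd).indicator hU.measurableSet
  have hrem : IntegrableOn (fun x => (4 + 4 * B ^ 2) * s ^ 2 *
      (U.indicator (fun x => u x ^ 2) x + f x ^ 2)) Ω :=
    (hu.add (h.integrableOn_source_sq hd)).const_mul _
  calc ∫ x in K, (‖G x‖ ^ 2 + u x ^ 2) = ∫ x in K, η x ^ 2 * (‖G x‖ ^ 2 + u x ^ 2) :=
        setIntegral_congr_fun hK.measurableSet fun x hx => by simp [(hone x hx).self_of_nhds]
    _ ≤ ∫ x in Ω, η x ^ 2 * (‖G x‖ ^ 2 + u x ^ 2) :=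
        setIntegral_mono_set (hd.integrableOn (by fun_prop)) (ae_of_all _ fun x => by positivity)
          (ae_of_all _ (hKU.trans hUΩ))
    _ ≤ ∫ x in Ω, (2 * (η x ^ 2 * (‖G x‖ ^ 2 - lam * u x ^ 2 + u x * f x)
          + u x * ⟪(2 * η x) • ∇ η x, G x⟫)
          + (4 + 4 * B ^ 2) * s ^ 2 * (U.indicator (fun x => u x ^ 2) x + f x ^ 2)) := by
        refine setIntegral_mono_on (hd.integrableOn (by fun_prop)) ((hint.const_mul 2).add hrem)
          hd.isOpen.measurableSet fun x hx => ?_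
        by_cases hxU : x ∈ U
        · rw [indicator_of_mem hxU, real_inner_smul_left]
          exact caccioppoli_pointwise (h01 x) ((abs_real_inner_le_norm _ _).trans
            (mul_le_mul_of_nonneg_right (hB x hx).1 (norm_nonneg _))) hs hlam hlams
        · have h0 : η x = 0 := image_eq_zero_of_notMem_tsupport fun hx => hxU (hηU hx)
          simp only [h0, indicator_of_notMem hxU]
          simpa using mul_nonneg (by positivity : 0 ≤ (4 + 4 * B ^ 2) * s ^ 2) (sq_nonneg (f x))
    _ = _ := by
        rw [integral_add (hint.const_mul 2) hrem, integral_const_mul, hzero, integral_const_mul,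
          integral_add hu (h.integrableOn_source_sq hd), setIntegral_indicator hU.measurableSet,
          inter_eq_right.2 hUΩ, mul_zero, zero_add]

end Localization

section CutOffCarleman

variable {E : Type*} [NormedAddCommGroup E] [InnerProductSpace ℝ E] [FiniteDimensional ℝ E]
  {Ω : Set E} {ψ : E → ℝ} {P : E → E} {lam : ℝ} {u f : E → ℝ} {G : E → E}

theorem localizedSource_eq_zero_of_notMem_tsupport {ζ : E → ℝ} {x : E} (hx : x ∉ tsupport ζ) :
    localizedSource ζ u G f x = 0 := by
  have h0 := notMem_tsupport_iff_eventuallyEq.1 hx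
  obtain ⟨hgrad, hdiv⟩ := gradient_eq_zero_of_eventuallyEq_const h0
  rw [localizedSource, hgrad, hdiv, h0.self_of_nhds]
  simp

theorem mul_localizedSource_sq_le {ζ : E → ℝ} {x : E} {B w b : ℝ} (hζ : ζ x ∈ Icc (0 : ℝ) 1)
    (hZ : ‖∇ ζ x‖ ≤ B) (hdiv : |divergence (∇ ζ) x| ≤ B) (hw : 0 ≤ w)
    (hb : (∇ ζ x = 0 ∧ divergence (∇ ζ) x = 0) ∨ w * (‖G x‖ ^ 2 + u x ^ 2) ≤ b) (hb₀ : 0 ≤ b) :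
    w * localizedSource ζ u G f x ^ 2 ≤ 3 * (w * f x ^ 2) + 12 * B ^ 2 * b := by
  rcases hb with ⟨hgrad, hdiv0⟩ | hb
  · have hf : (ζ x * f x) ^ 2 ≤ f x ^ 2 := by
      rw [mul_pow]
      exact mul_le_of_le_one_left (sq_nonneg _) (pow_le_one₀ hζ.1 hζ.2)
    have hsrc : localizedSource ζ u G f x = ζ x * f x := by simp [localizedSource, hgrad, hdiv0]
    have := mul_le_mul_of_nonneg_left hf hw
    have := mul_nonneg hw (sq_nonneg (f x))
    rw [hsrc]
    nlinarith [mul_nonneg (sq_nonneg B) hb₀]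
  · have := mul_le_mul_of_nonneg_left
      (localizedSource_sq_le (f := f) (u := u) (G := G) hζ hZ hdiv) hw
    have := mul_le_mul_of_nonneg_left hb (sq_nonneg B)
    linarith

theorem mul_localizedSource_sq_le_indicator {ζ w : E → ℝ} {x : E} {B : ℝ}
    (hζ : ζ x ∈ Icc (0 : ℝ) 1) (hB : ‖∇ ζ x‖ ≤ B ∧ |divergence (∇ ζ) x| ≤ B) (hw : 0 ≤ w x)
    {S₁ S₂ : Set E} {E₁ E₂ : ℝ} (hE₁ : 0 ≤ E₁) (hE₂ : 0 ≤ E₂)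
    (hle : x ∈ tsupport ζ → w x ≤ E₁)
    (hS : x ∈ tsupport ζ →
      (∇ ζ x = 0 ∧ divergence (∇ ζ) x = 0) ∨ x ∈ S₁ ∨ (x ∈ S₂ ∧ w x ≤ E₂)) :
    w x * localizedSource ζ u G f x ^ 2 ≤ 3 * E₁ * f x ^ 2 + 12 * B ^ 2 *
      (E₁ * S₁.indicator (fun x => ‖G x‖ ^ 2 + u x ^ 2) x +
        E₂ * S₂.indicator (fun x => ‖G x‖ ^ 2 + u x ^ 2) x) := by
  set e : E → ℝ := fun x => ‖G x‖ ^ 2 + u x ^ 2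
  have he₀ : ∀ x, 0 ≤ e x := fun x => by positivity
  have h₁ := mul_nonneg hE₁ (indicator_nonneg (s := S₁) (fun x _ => he₀ x) x)
  have h₂ := mul_nonneg hE₂ (indicator_nonneg (s := S₂) (fun x _ => he₀ x) x)
  by_cases hxζ : x ∈ tsupport ζ
  · have hwf := mul_le_mul_of_nonneg_right (hle hxζ) (sq_nonneg (f x))
    refine (mul_localizedSource_sq_le hζ hB.1 hB.2 hw ((hS hxζ).imp_right ?_)
      (add_nonneg h₁ h₂)).trans (by linarith)
    rintro (hx₁ | ⟨hx₂, hwE₂⟩)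
    · have := mul_le_mul_of_nonneg_right (hle hxζ) (he₀ x)
      rw [indicator_of_mem hx₁]
      exact this.trans (le_add_of_nonneg_right h₂)
    · have := mul_le_mul_of_nonneg_right hwE₂ (he₀ x)
      rw [indicator_of_mem hx₂]
      exact this.trans (le_add_of_nonneg_left h₁)
  · rw [localizedSource_eq_zero_of_notMem_tsupport hxζ]
    have : 0 ≤ 12 * B ^ 2 * (E₁ * S₁.indicator e x + E₂ * S₂.indicator e x) := by positivity
    have : 0 ≤ 3 * E₁ * f x ^ 2 := by positivity
    linarith

variable [MeasurableSpace E] [BorelSpace E]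

theorem NeumannData.setIntegral_mul_localizedSource_sq_le (h : NeumannData Ω P lam u G f)
    (hd : IsDefiningFunction Ω ψ P) {ζ : E → ℝ} (hζ : ContDiff ℝ 2 ζ)
    (h01 : ∀ x, ζ x ∈ Icc (0 : ℝ) 1) {B : ℝ}
    (hB : ∀ x ∈ Ω, ‖∇ ζ x‖ ≤ B ∧ |divergence (∇ ζ) x| ≤ B) {w : E → ℝ} (hwc : Continuous w)
    (hw : ∀ x, 0 ≤ w x) {S₁ S₂ : Set E} (hS₁ : MeasurableSet S₁) (hS₂ : MeasurableSet S₂)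
    (hS₁Ω : S₁ ⊆ Ω) (hS₂Ω : S₂ ⊆ Ω) {E₁ E₂ : ℝ} (hE₁ : 0 ≤ E₁) (hE₂ : 0 ≤ E₂)
    (hle : ∀ x ∈ Ω ∩ tsupport ζ, w x ≤ E₁)
    (hS : ∀ x ∈ Ω ∩ tsupport ζ,
      (∇ ζ x = 0 ∧ divergence (∇ ζ) x = 0) ∨ x ∈ S₁ ∨ (x ∈ S₂ ∧ w x ≤ E₂)) :
    ∫ x in Ω, w x * localizedSource ζ u G f x ^ 2 ≤
      3 * E₁ * (∫ x in Ω, f x ^ 2) + 12 * B ^ 2 *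
        (E₁ * (∫ x in S₁, (‖G x‖ ^ 2 + u x ^ 2)) + E₂ * ∫ x in S₂, (‖G x‖ ^ 2 + u x ^ 2)) := by
  have hG := h.continuousOn_gradient
  have hu := h.continuousOn
  have hf := h.continuousOn_source
  have hζc := hζ.continuous
  have hZc := (contDiff_gradient hζ).continuous
  have hdivc := continuous_divergence (contDiff_gradient hζ)
  have hf₂ := h.integrableOn_source_sq hd
  set e : E → ℝ := fun x => ‖G x‖ ^ 2 + u x ^ 2
  have hi₁ : IntegrableOn (S₁.indicator e) Ω := (h.integrableOn_energy hd).indicator hS₁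
  have hi₂ : IntegrableOn (S₂.indicator e) Ω := (h.integrableOn_energy hd).indicator hS₂
  have hi : IntegrableOn (fun x => E₁ * S₁.indicator e x + E₂ * S₂.indicator e x) Ω :=
    (hi₁.const_mul E₁).add (hi₂.const_mul E₂)
  calc ∫ x in Ω, w x * localizedSource ζ u G f x ^ 2
      ≤ ∫ x in Ω, (3 * E₁ * f x ^ 2
          + 12 * B ^ 2 * (E₁ * S₁.indicator e x + E₂ * S₂.indicator e x)) := by
        refine setIntegral_mono_on
          (hd.integrableOn (by unfold localizedSource; fun_prop))
          ((hf₂.const_mul _).add (hi.const_mul _)) hd.isOpen.measurableSet fun x hx => ?_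
        exact mul_localizedSource_sq_le_indicator (h01 x) (hB x hx) (hw x) hE₁ hE₂
          (fun hxζ => hle x ⟨hx, hxζ⟩) fun hxζ => hS x ⟨hx, hxζ⟩
    _ = _ := by
        rw [integral_add (hf₂.const_mul _) (hi.const_mul _), integral_const_mul,
          integral_const_mul, integral_add (hi₁.const_mul _) (hi₂.const_mul _), integral_const_mul,
          integral_const_mul, setIntegral_indicator hS₁, setIntegral_indicator hS₂,
          inter_eq_right.2 hS₁Ω, inter_eq_right.2 hS₂Ω]

theorem mul_sq_le_exp {D s : ℝ} (hs : 1 ≤ s) (hD : 0 ≤ D) :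
    D * s ^ 2 ≤ Real.exp ((D + 2) * s) := by
  have hD' : D ≤ Real.exp (D * s) := by
    linarith [Real.add_one_le_exp (D * s), le_mul_of_one_le_right hD hs]
  have hs' : s ^ 2 ≤ Real.exp (2 * s) := by
    have : s ≤ Real.exp s := by linarith [Real.add_one_le_exp s]
    rw [two_mul, Real.exp_add, ← sq]
    gcongr
  calc D * s ^ 2 ≤ Real.exp (D * s) * Real.exp (2 * s) := by gcongr
    _ = Real.exp ((D + 2) * s) := by rw [← Real.exp_add, add_mul]

end CutOffCarleman

theorem setIntegral_le_add_of_subset_union {α : Type*} [MeasurableSpace α] {μ : Measure α}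
    {g : α → ℝ} (hg : 0 ≤ g) {S T₁ T₂ : Set α} (hS : S ⊆ T₁ ∪ T₂) (h₁ : IntegrableOn g T₁ μ)
    (h₂ : IntegrableOn g T₂ μ) :
    ∫ x in S, g x ∂μ ≤ (∫ x in T₁, g x ∂μ) + ∫ x in T₂, g x ∂μ :=
  calc ∫ x in S, g x ∂μ ≤ ∫ x in T₁ ∪ T₂, g x ∂μ :=
        setIntegral_mono_set (h₁.union h₂) (ae_of_all _ hg) (ae_of_all _ hS)
    _ ≤ ∫ x, g x ∂(μ.restrict T₁ + μ.restrict T₂) :=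
        integral_mono_measure (Measure.restrict_union_le T₁ T₂) (ae_of_all _ hg)
          (integrable_add_measure.2 ⟨h₁, h₂⟩)
    _ = _ := integral_add_measure h₁ h₂

section Boundary

variable {E : Type*} [NormedAddCommGroup E] [InnerProductSpace ℝ E] [FiniteDimensional ℝ E]
  {Ω : Set E} {ψ : E → ℝ} {P : E → E}

theorem IsDefiningFunction.exists_isCompact_lt_norm_gradient_sq (hd : IsDefiningFunction Ω ψ P) :
    ∃ K ⊆ Ω, IsCompact K ∧ ∃ c > 0, ∀ x ∈ Ω \ K, c ≤ ‖P x‖ ^ 2 := by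
  obtain ⟨c, hc, δ, hδ, h⟩ := hd.exists_lt_norm_gradient_sq
  refine ⟨closure Ω ∩ {x | δ ≤ ψ x}, fun x hx => ?_,
    hd.isCompact_closure.inter_right (isClosed_le continuous_const hd.continuous), c, hc,
    fun x hx => (h x (subset_closure hx.1) (not_le.1 fun hδx =>
      hx.2 ⟨subset_closure hx.1, hδx⟩)).le⟩
  refine (hd.mem_or_mem_frontier hx.1).resolve_right fun hxf => ?_
  have := hd.eq_zero x hxf
  exact absurd hx.2 (by simpa [this] using hδ)

variable [MeasurableSpace E] [BorelSpace E]

theorem NeumannData.setIntegral_sq_mono {lam : ℝ} {u f : E → ℝ} {G : E → E}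
    (h : NeumannData Ω P lam u G f) (hd : IsDefiningFunction Ω ψ P) {S T : Set E} (hST : S ⊆ T)
    (hT : T ⊆ Ω) : ∫ x in S, u x ^ 2 ≤ ∫ x in T, u x ^ 2 :=
  setIntegral_mono_set ((h.integrableOn_sq hd).mono_set hT) (ae_of_all _ fun _ => sq_nonneg _)
    (ae_of_all _ hST)

theorem NeumannData.mul_setIntegral_sq_le {lam : ℝ} {u f : E → ℝ} {G : E → E}
    (h : NeumannData Ω P lam u G f) (hd : IsDefiningFunction Ω ψ P) {w ζ : E → ℝ}
    (hwc : Continuous w) (hw : ∀ x, 0 ≤ w x) (hζ : Continuous ζ) {S : Set E}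
    (hS : MeasurableSet S) (hSΩ : S ⊆ Ω) {b : ℝ} (hζone : ∀ x ∈ S, ζ x = 1)
    (hb : ∀ x ∈ S, b ≤ w x) :
    b * ∫ x in S, u x ^ 2 ≤ ∫ x in Ω, w x * (ζ x * u x) ^ 2 := by
  have hu := h.continuousOn
  have hi : IntegrableOn (fun x => w x * (ζ x * u x) ^ 2) Ω := hd.integrableOn (by fun_prop)
  calc b * ∫ x in S, u x ^ 2 = ∫ x in S, b * u x ^ 2 := (integral_const_mul _ _).symm
    _ ≤ ∫ x in S, w x * (ζ x * u x) ^ 2 :=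
        setIntegral_mono_on (((h.integrableOn_sq hd).mono_set hSΩ).const_mul _)
          (hi.mono_set hSΩ) hS fun x hx => by
            rw [hζone x hx, one_mul]
            exact mul_le_mul_of_nonneg_right (hb x hx) (sq_nonneg _)
    _ ≤ _ := setIntegral_mono_set hi (ae_of_all _ fun x => mul_nonneg (hw x) (sq_nonneg _))
        (ae_of_all _ hSΩ)

theorem IsDefiningFunction.exists_localized_carleman {ψ₀ : E → ℝ} {P₀ : E → E}
    (hd : IsDefiningFunction Ω ψ₀ P₀) (hψ : ∀ x, HasGradientAt ψ (P x) x) {L : ℝ≥0}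
    (hP : LipschitzWith L P) {ζ : E → ℝ} (hζ : ContDiff ℝ 2 ζ) (h01 : ∀ x, ζ x ∈ Icc (0 : ℝ) 1)
    (hfr : ∀ x ∈ frontier Ω, ∇ ζ x = 0 ∧ (ψ x = 0 ∨ x ∉ tsupport ζ)) {c t₁ t₂ : ℝ} (hc : 0 < c)
    (hsupp : ∀ x ∈ Ω ∩ tsupport ζ, ψ x ∈ Icc 0 t₁ ∧ c ≤ ‖P x‖ ^ 2) {S₁ S₂ : Set E}
    (hS₁ : MeasurableSet S₁) (hS₂ : MeasurableSet S₂) (hS₁Ω : S₁ ⊆ Ω) (hS₂Ω : S₂ ⊆ Ω)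
    (hS : ∀ x ∈ Ω ∩ tsupport ζ,
      (∇ ζ x = 0 ∧ divergence (∇ ζ) x = 0) ∨ x ∈ S₁ ∨ (x ∈ S₂ ∧ ψ x ≤ t₂)) :
    ∃ C Λ τ₀, 0 < C ∧ 0 < Λ ∧ 1 ≤ τ₀ ∧ ∀ τ, τ₀ ≤ τ → ∀ lam u G f, 0 ≤ lam → lam ≤ τ ^ 2 →
      NeumannData Ω P₀ lam u G f →
      ∫ x in Ω, carlemanWeight Λ τ (ψ x) * (ζ x * u x) ^ 2 ≤
        C * (Real.exp (2 * τ * convexifiedHeight Λ t₁) *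
            ((∫ x in Ω, f x ^ 2) + ∫ x in S₁, (‖G x‖ ^ 2 + u x ^ 2)) +
          Real.exp (2 * τ * convexifiedHeight Λ t₂) * ∫ x in S₂, (‖G x‖ ^ 2 + u x ^ 2)) := by
  have hzero : ∀ x ∉ tsupport ζ, ζ x = 0 ∧ ∇ ζ x = 0 := fun x hx =>
    ⟨image_eq_zero_of_notMem_tsupport hx,
      (gradient_eq_zero_of_eventuallyEq_const (notMem_tsupport_iff_eventuallyEq.1 hx)).1⟩
  obtain ⟨B, -, hB⟩ := hd.exists_forall_norm_gradient_le hζ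
  obtain ⟨C₂, hC₂⟩ := hd.isCompact_closure.exists_bound_of_continuousOn
    (hP.continuous.norm.pow 2).continuousOn
  obtain ⟨C, Λ, τ₀, hC, hΛ, hτ₀, hcarl⟩ := NeumannData.exists_carleman hd hψ hP hc C₂
  refine ⟨C * (3 + 12 * B ^ 2), Λ, τ₀, by positivity, hΛ, hτ₀,
    fun τ hτ lam u G f hlam hlamτ h => ?_⟩
  have hψc : Continuous ψ :=
    continuous_iff_continuousAt.2 fun x => (hψ x).hasFDerivAt.continuousAt
  have hcarl' := hcarl τ hτ lam _ _ _ hlam hlamτ (h.mul hd.isOpen hζ fun x hx => (hfr x hx).1)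
    (fun x hx => (hfr x hx).2.imp_right fun hxζ => by simp [hzero x hxζ]) fun x hx => by
      by_cases hxζ : x ∈ tsupport ζ
      · exact Or.inr ⟨(hsupp x ⟨hx, hxζ⟩).1.1, (hsupp x ⟨hx, hxζ⟩).2,
          (le_abs_self _).trans (hC₂ x (subset_closure hx))⟩
      · exact Or.inl (by simp [hzero x hxζ])
  have hsource := h.setIntegral_mul_localizedSource_sq_le hd hζ h01 hB
    ((continuous_carlemanWeight hΛ τ).comp hψc)
    (fun x => zero_le_one.trans (one_le_carlemanWeight Λ τ (ψ x))) hS₁ hS₂ hS₁Ω hS₂Ω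
    (Real.exp_nonneg _) (Real.exp_nonneg _)
    (fun x hx => carlemanWeight_le_exp hΛ (hτ₀.trans hτ) (hsupp x hx).1.1 (hsupp x hx).1.2)
    fun x hx => (hS x hx).imp_right <| Or.imp_right fun ⟨hx₂, ht₂⟩ =>
      ⟨hx₂, carlemanWeight_le_exp hΛ (hτ₀.trans hτ) (hsupp x hx).1.1 ht₂⟩
  refine hcarl'.trans ((mul_le_mul_of_nonneg_left hsource hC.le).trans ?_)
  rw [mul_assoc C (3 + 12 * B ^ 2)]
  refine mul_le_mul_of_nonneg_left ?_ hC.le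
  have hF : 0 ≤ Real.exp (2 * τ * convexifiedHeight Λ t₁) * ∫ x in Ω, f x ^ 2 :=
    mul_nonneg (Real.exp_nonneg _) (integral_nonneg fun x => sq_nonneg _)
  have hI : ∀ (S : Set E) t, 0 ≤
      Real.exp (2 * τ * convexifiedHeight Λ t) * ∫ x in S, (‖G x‖ ^ 2 + u x ^ 2) := fun S t =>
    mul_nonneg (Real.exp_nonneg _) (integral_nonneg fun x => by positivity)
  linarith [hI S₁ t₁, hI S₂ t₂, mul_nonneg (sq_nonneg B) hF]

theorem IsDefiningFunction.exists_collar_estimate (hd : IsDefiningFunction Ω ψ P) {K U : Set E}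
    (hK : IsCompact K) (hU : IsOpen U) (hKU : K ⊆ U) (hUΩ : U ⊆ Ω) {c : ℝ} (hc : 0 < c)
    (hP : ∀ x ∈ Ω \ K, c ≤ ‖P x‖ ^ 2) :
    ∃ L ⊆ U, IsCompact L ∧ ∃ C T, 0 ≤ C ∧ 0 ≤ T ∧ ∀ s lam u G f, 1 ≤ s → 0 ≤ lam → lam ≤ s ^ 2 →
      NeumannData Ω P lam u G f → ∫ x in Ω \ L, u x ^ 2 ≤
        C * Real.exp (T * s) * ((∫ x in Ω, f x ^ 2) + ∫ x in L, (‖G x‖ ^ 2 + u x ^ 2)) := by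
  obtain ⟨η, hη, h01, hηc, hηU, hone⟩ :=
    exists_contDiff_tsupport_subset_eventuallyEq_one hK hU hKU
  have hLΩ := hηU.trans hUΩ
  have hζone : ∀ x ∉ tsupport η, (fun x => 1 - η x) =ᶠ[𝓝 x] fun _ => 1 := fun x hx =>
    (notMem_tsupport_iff_eventuallyEq.1 hx).mono fun z hz => by simp [hz]
  have hζzero : ∀ x ∈ K, x ∉ tsupport fun x => 1 - η x := fun x hx =>
    notMem_tsupport_iff_eventuallyEq.2 <| (hone x hx).mono fun z hz => by simp [hz]
  obtain ⟨M, hM⟩ := hd.isCompact_closure.exists_bound_of_continuousOn hd.continuous.continuousOn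
  obtain ⟨κ, hκ⟩ := hd.exists_lipschitzWith
  obtain ⟨C, Λ, τ₀, hC, hΛ, hτ₀, hcarl⟩ := hd.exists_localized_carleman hd.hasGradientAt hκ
    (ζ := fun x => 1 - η x) (S₁ := tsupport η) (S₂ := ∅) (t₁ := max M 0) (t₂ := 0)
    (contDiff_const.sub hη) (fun x => ⟨sub_nonneg.2 (h01 x).2, sub_le_self _ (h01 x).1⟩)
    (fun x hx => ⟨(gradient_eq_zero_of_eventuallyEq_const (hζone x fun hxη =>
      disjoint_left.1 (disjoint_frontier_iff_isOpen.2 hd.isOpen) hx (hLΩ hxη))).1,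
      Or.inl (hd.eq_zero x hx)⟩) hc
    (fun x hx => ⟨⟨(hd.pos x hx.1).le, le_max_of_le_left <|
      (le_abs_self _).trans (hM x (subset_closure hx.1))⟩,
      hP x ⟨hx.1, fun hxK => hζzero x hxK hx.2⟩⟩)
    (isClosed_tsupport η).measurableSet .empty hLΩ (empty_subset _)
    fun x _ => (em (x ∈ tsupport η)).symm.imp
      (fun hx => gradient_eq_zero_of_eventuallyEq_const (hζone x hx)) Or.inl
  refine ⟨tsupport η, hηU, hηc, C, 2 * τ₀ * convexifiedHeight Λ (max M 0), hC.le,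
    mul_nonneg (by positivity) (convexifiedHeight_nonneg hΛ (le_max_right _ _)),
    fun s lam u G f hs hlam hlams h => ?_⟩
  have hcarl' := hcarl (τ₀ * s) (le_mul_of_one_le_right (by linarith) hs) lam u G f hlam
    (hlams.trans (pow_le_pow_left₀ (by linarith) (le_mul_of_one_le_left (by linarith) hτ₀) 2)) h
  rw [setIntegral_empty, mul_zero, add_zero, ← mul_assoc C,
    show 2 * (τ₀ * s) * convexifiedHeight Λ (max M 0) =
      2 * τ₀ * convexifiedHeight Λ (max M 0) * s by ring] at hcarl'
  refine le_trans ?_ hcarl'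
  simpa using h.mul_setIntegral_sq_le hd (b := 1)
    ((continuous_carlemanWeight hΛ (τ₀ * s)).comp hd.continuous)
    (fun x => zero_le_one.trans (one_le_carlemanWeight _ _ _))
    (continuous_const.sub hη.continuous)
    (hd.isOpen.measurableSet.diff (isClosed_tsupport η).measurableSet) sdiff_subset
    (fun x hx => (hζone x hx.2).self_of_nhds) fun x _ => one_le_carlemanWeight _ _ _

theorem IsDefiningFunction.exists_boundary_estimate (hd : IsDefiningFunction Ω ψ P) :
    ∃ K ⊆ Ω, IsCompact K ∧ ∃ A, 0 ≤ A ∧ ∀ s lam u G f, 1 ≤ s → 0 ≤ lam → lam ≤ s ^ 2 →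
      NeumannData Ω P lam u G f →
      ∫ x in Ω, u x ^ 2 ≤ Real.exp (A * s) * ((∫ x in K, u x ^ 2) + ∫ x in Ω, f x ^ 2) := by
  obtain ⟨K₀, hK₀Ω, hK₀, c, hc, hP⟩ := hd.exists_isCompact_lt_norm_gradient_sq
  obtain ⟨K, hK, hK₀K, hKΩ⟩ := exists_compact_between hK₀ hd.isOpen hK₀Ω
  have hUΩ := interior_subset.trans hKΩ
  obtain ⟨L, hLK, hL, C₁, T, hC₁, hT, hcollar⟩ :=
    hd.exists_collar_estimate hK₀ isOpen_interior hK₀K hUΩ hc hP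
  obtain ⟨C₂, hC₂, hcac⟩ := hd.exists_caccioppoli hL isOpen_interior hLK hUΩ
  refine ⟨K, hKΩ, hK, 1 + C₁ * (1 + C₂) + 2 + T, by positivity,
    fun s lam u G f hs hlam hlams h => ?_⟩
  have hu := h.integrableOn_sq hd
  have hLΩ := hLK.trans hUΩ
  set I := ∫ x in K, u x ^ 2
  set F := ∫ x in Ω, f x ^ 2
  have hF : 0 ≤ F := integral_nonneg fun x => sq_nonneg _
  have hI : 0 ≤ I := integral_nonneg fun x => sq_nonneg _
  have hE : 1 ≤ Real.exp (T * s) := Real.one_le_exp (by positivity)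
  have hs₂ : I + F ≤ s ^ 2 * (I + F) := le_mul_of_one_le_left (by positivity) (one_le_pow₀ hs)
  have henergy : ∫ x in L, (‖G x‖ ^ 2 + u x ^ 2) ≤ C₂ * s ^ 2 * (I + F) :=
    (hcac s lam u G f hs hlam hlams h).trans <| by
      gcongr
      exact h.setIntegral_sq_mono hd interior_subset hKΩ
  have hinner : ∫ x in L, u x ^ 2 ≤ Real.exp (T * s) * (s ^ 2 * (I + F)) :=
    calc ∫ x in L, u x ^ 2 ≤ I := h.setIntegral_sq_mono hd (hLK.trans interior_subset) hKΩ
      _ ≤ s ^ 2 * (I + F) := (le_add_of_nonneg_right hF).trans hs₂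
      _ ≤ _ := le_mul_of_one_le_left (by positivity) hE
  have houter : ∫ x in Ω \ L, u x ^ 2 ≤
      C₁ * Real.exp (T * s) * (s ^ 2 * (I + F) + C₂ * s ^ 2 * (I + F)) :=
    (hcollar s lam u G f hs hlam hlams h).trans <| by
      gcongr
      exact (le_add_of_nonneg_left hI).trans hs₂
  calc ∫ x in Ω, u x ^ 2 ≤ (∫ x in L, u x ^ 2) + ∫ x in Ω \ L, u x ^ 2 :=
        setIntegral_le_add_of_subset_union (fun x => sq_nonneg _) (by simp)
          (hu.mono_set hLΩ) (hu.mono_set sdiff_subset)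
    _ ≤ (1 + C₁ * (1 + C₂)) * s ^ 2 * Real.exp (T * s) * (I + F) := by linarith
    _ ≤ Real.exp ((1 + C₁ * (1 + C₂) + 2) * s) * Real.exp (T * s) * (I + F) := by
        gcongr
        exact mul_sq_le_exp hs (by positivity)
    _ = _ := by rw [← Real.exp_add, ← add_mul]

end Boundary

theorem lipschitzWith_smul_sub {E : Type*} [SeminormedAddCommGroup E] [NormedSpace ℝ E] (y : E)
    (c : ℝ) : LipschitzWith ‖c‖₊ fun x : E => c • (x - y) :=
  .of_dist_le_mul fun x z => by simp [dist_eq_norm, ← smul_sub, norm_smul]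

theorem add_le_of_mul_le_weighted_add {C Em Ei Eo J X Y q s : ℝ} (hC : 0 ≤ C) (hEm : 1 ≤ Em)
    (hEi : 1 ≤ Ei) (hEo : 0 ≤ Eo) (hX : 0 ≤ X) (hY : 0 ≤ Y) (hq : 0 ≤ q) (hs : 1 ≤ s)
    (h : Em / 2 * J ≤ C * (Ei * (q * s ^ 2 * X) + Eo * (q * s ^ 2 * Y))) :
    J + X ≤ (1 + 2 * C * q) * s ^ 2 * (Ei * X + Eo / Em * Y) := by
  have hJ : J ≤ 2 * C * q * s ^ 2 * (Ei * X + Eo / Em * Y) :=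
    calc J = 2 / Em * (Em / 2 * J) := by field_simp
      _ ≤ 2 / Em * (C * (Ei * (q * s ^ 2 * X) + Eo * (q * s ^ 2 * Y))) := by gcongr
      _ = 2 * C * q * s ^ 2 * (Ei / Em * X + Eo / Em * Y) := by ring
      _ ≤ 2 * C * q * s ^ 2 * (Ei * X + Eo / Em * Y) := by
          gcongr
          exact div_le_self (by linarith) hEm
  have hX' : X ≤ s ^ 2 * (Ei * X + Eo / Em * Y) :=
    calc X ≤ Ei * X := le_mul_of_one_le_left hX hEi
      _ ≤ Ei * X + Eo / Em * Y := le_add_of_nonneg_right (by positivity)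
      _ ≤ _ := le_mul_of_one_le_left (by positivity) (one_le_pow₀ hs)
  linarith

section ThreeBalls

variable {E : Type*} [NormedAddCommGroup E] [InnerProductSpace ℝ E] [FiniteDimensional ℝ E]
  {Ω : Set E} {ψ : E → ℝ} {P : E → E}

theorem exists_annulus_cutoff (y : E) {a R : ℝ} (ha : 0 < a) (haR : 4 * a ≤ R) :
    ∃ η : E → ℝ, ContDiff ℝ 2 η ∧ (∀ x, η x ∈ Icc (0 : ℝ) 1) ∧ HasCompactSupport η ∧
      (∀ x ∈ tsupport η, a < dist x y ∧ dist x y < R) ∧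
      ∀ x, 2 * a ≤ dist x y → dist x y ≤ 3 * R / 4 → η =ᶠ[𝓝 x] fun _ => 1 := by
  obtain ⟨η, hη, h01, hηc, hηU, hone⟩ := exists_contDiff_tsupport_subset_eventuallyEq_one
    (K := closedBall y (3 * R / 4) ∩ {x | 2 * a ≤ dist x y})
    (U := {x | a < dist x y} ∩ ball y R)
    ((isCompact_closedBall y _).inter_right (isClosed_le continuous_const (by fun_prop)))
    ((isOpen_lt continuous_const (by fun_prop)).inter isOpen_ball) fun x ⟨hx, hx'⟩ =>
      ⟨by simp only [mem_ofPred_eq] at hx' ⊢; linarith,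
        by rw [mem_ball]; rw [mem_closedBall] at hx; linarith⟩
  exact ⟨η, hη, h01, hηc, fun x hx => hηU hx, fun x h₁ h₂ => hone x ⟨h₂, h₁⟩⟩

theorem hasGradientAt_sub_dist_sq (y : E) (b : ℝ) (x : E) :
    HasGradientAt (fun x => b - dist x y ^ 2) ((-2 : ℝ) • (x - y)) x := by
  have h := ((hasFDerivAt_id x).sub_const y).norm_sq.const_sub b
  simp only [dist_eq_norm]
  rw [hasGradientAt_iff_hasFDerivAt]
  refine h.congr_fderiv ?_
  ext v
  simp

variable [MeasurableSpace E] [BorelSpace E]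

theorem IsDefiningFunction.exists_annulus_carleman (hd : IsDefiningFunction Ω ψ P) {y : E}
    {a R : ℝ} (ha : 0 < a) (haR : 4 * a ≤ R) (hball : closedBall y R ⊆ Ω) :
    ∃ η : E → ℝ, Continuous η ∧ HasCompactSupport η ∧ tsupport η ⊆ Ω ∧
      (∀ x ∈ ball y (R / 2) \ closedBall y (2 * a), η x = 1) ∧
      ∃ C Λ τ₀, 0 < C ∧ 0 < Λ ∧ 1 ≤ τ₀ ∧ ∀ τ, τ₀ ≤ τ → ∀ lam u G f, 0 ≤ lam → lam ≤ τ ^ 2 →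
        NeumannData Ω P lam u G f →
        ∫ x in Ω, carlemanWeight Λ τ (R ^ 2 - dist x y ^ 2) * (η x * u x) ^ 2 ≤
          C * (Real.exp (2 * τ * convexifiedHeight Λ (R ^ 2)) *
              ((∫ x in Ω, f x ^ 2) + ∫ x in closedBall y (2 * a), (‖G x‖ ^ 2 + u x ^ 2)) +
            Real.exp (2 * τ * convexifiedHeight Λ (7 * R ^ 2 / 16)) *
              ∫ x in tsupport η, (‖G x‖ ^ 2 + u x ^ 2)) := by
  have hR : 0 < R := by linarith
  obtain ⟨η, hη, h01, hηc, hannulus, hone⟩ := exists_annulus_cutoff y ha haR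
  have hLΩ : tsupport η ⊆ Ω := fun x hx => hball (hannulus x hx).2.le
  have hfrontier : ∀ x ∈ frontier Ω, x ∉ tsupport η := fun x hx hxη =>
    disjoint_left.1 (disjoint_frontier_iff_isOpen.2 hd.isOpen) hx (hLΩ hxη)
  have hnorm : ∀ x : E, ‖(-2 : ℝ) • (x - y)‖ ^ 2 = 4 * dist x y ^ 2 := fun x => by
    rw [norm_smul, mul_pow, dist_eq_norm]
    norm_num
  refine ⟨η, hη.continuous, hηc, hLΩ, fun x ⟨h₁, h₂⟩ => ?_, hd.exists_localized_carleman
    (hasGradientAt_sub_dist_sq y (R ^ 2)) (lipschitzWith_smul_sub y (-2)) hη h01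
    (c := 4 * a ^ 2)
    (fun x hx => ⟨(gradient_eq_zero_of_eventuallyEq_const
      (notMem_tsupport_iff_eventuallyEq.1 (hfrontier x hx))).1, Or.inr (hfrontier x hx)⟩)
    (by positivity) (fun x ⟨_, hx⟩ => ?_)
    measurableSet_closedBall (isClosed_tsupport η).measurableSet
    ((closedBall_subset_closedBall (by linarith)).trans hball) hLΩ fun x ⟨_, hx⟩ => ?_⟩
  · rw [mem_ball] at h₁
    rw [mem_closedBall, not_le] at h₂
    exact (hone x h₂.le (by linarith)).self_of_nhds
  · obtain ⟨h₁, h₂⟩ := hannulus x hx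
    rw [hnorm]
    exact ⟨⟨sub_nonneg.2 (by gcongr), sub_le_self _ (sq_nonneg _)⟩, by gcongr⟩
  · rcases le_or_gt (dist x y) (2 * a) with hinner | hinner
    · exact Or.inr (Or.inl hinner)
    rcases le_or_gt (dist x y) (3 * R / 4) with houter | houter
    · exact Or.inl (gradient_eq_zero_of_eventuallyEq_const (hone x hinner.le houter))
    · have := pow_le_pow_left₀ (by positivity) houter.le 2
      exact Or.inr (Or.inr ⟨hx, by linarith⟩)

theorem IsDefiningFunction.exists_annulus_energy_estimate (hd : IsDefiningFunction Ω ψ P) {y : E}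
    {a R : ℝ} (ha : 0 < a) (haR : 4 * a ≤ R) (hball : closedBall y R ⊆ Ω) :
    ∃ L ⊆ Ω, IsCompact L ∧ ∃ C Λ τ₀, 0 < C ∧ 0 < Λ ∧ 1 ≤ τ₀ ∧ ∀ τ, τ₀ ≤ τ → ∀ lam u G f,
      0 ≤ lam → lam ≤ τ ^ 2 → NeumannData Ω P lam u G f →
      Real.exp (2 * τ * convexifiedHeight Λ (3 * R ^ 2 / 4)) / 2 *
          ∫ x in ball y (R / 2) \ closedBall y (2 * a), u x ^ 2 ≤
        C * (Real.exp (2 * τ * convexifiedHeight Λ (R ^ 2)) *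
            ((∫ x in Ω, f x ^ 2) + ∫ x in closedBall y (2 * a), (‖G x‖ ^ 2 + u x ^ 2)) +
          Real.exp (2 * τ * convexifiedHeight Λ (7 * R ^ 2 / 16)) *
            ∫ x in L, (‖G x‖ ^ 2 + u x ^ 2)) := by
  obtain ⟨η, hη, hηc, hηΩ, hone, C, Λ, τ₀, hC, hΛ, hτ₀, hcarl⟩ :=
    hd.exists_annulus_carleman ha haR hball
  refine ⟨tsupport η, hηΩ, hηc, C, Λ, τ₀, hC, hΛ, hτ₀, fun τ hτ lam u G f hlam hlamτ h =>
    (h.mul_setIntegral_sq_le hd ((continuous_carlemanWeight hΛ τ).comp (by fun_prop))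
      (fun x => zero_le_one.trans (one_le_carlemanWeight _ _ _)) hη
      (measurableSet_ball.diff measurableSet_closedBall) ?_ hone fun x hx => ?_).trans
      (hcarl τ hτ lam u G f hlam hlamτ h)⟩
  · exact (sdiff_subset.trans ball_subset_closedBall).trans
      ((closedBall_subset_closedBall (by linarith)).trans hball)
  · refine exp_div_two_le_carlemanWeight hΛ (hτ₀.trans hτ) ?_
    have := pow_le_pow_left₀ dist_nonneg (mem_ball.1 hx.1).le 2
    linarith

theorem IsDefiningFunction.exists_annulus_estimate (hd : IsDefiningFunction Ω ψ P) {y : E}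
    {a R : ℝ} (ha : 0 < a) (haR : 4 * a ≤ R) (hball : closedBall y R ⊆ Ω) :
    ∃ C q Λ τ₀, 0 ≤ C ∧ 0 ≤ q ∧ 0 < Λ ∧ 1 ≤ τ₀ ∧ ∀ τ s lam u G f, τ₀ ≤ τ → 1 ≤ s → s ≤ τ →
      0 ≤ lam → lam ≤ s ^ 2 → NeumannData Ω P lam u G f →
      Real.exp (2 * τ * convexifiedHeight Λ (3 * R ^ 2 / 4)) / 2 *
          ∫ x in ball y (R / 2) \ closedBall y (2 * a), u x ^ 2 ≤
        C * (Real.exp (2 * τ * convexifiedHeight Λ (R ^ 2)) *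
            (q * s ^ 2 * ((∫ x in ball y (3 * a), u x ^ 2) + ∫ x in Ω, f x ^ 2)) +
          Real.exp (2 * τ * convexifiedHeight Λ (7 * R ^ 2 / 16)) *
            (q * s ^ 2 * ((∫ x in Ω, u x ^ 2) + ∫ x in Ω, f x ^ 2))) := by
  obtain ⟨L, hLΩ, hL, C, Λ, τ₀, hC, hΛ, hτ₀, hannulus⟩ :=
    hd.exists_annulus_energy_estimate ha haR hball
  obtain ⟨C₁, hC₁, hcac₁⟩ := hd.exists_caccioppoli (isCompact_closedBall y (2 * a)) isOpen_ball
    (closedBall_subset_ball (by linarith : 2 * a < 3 * a))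
    ((ball_subset_closedBall.trans (closedBall_subset_closedBall (by linarith))).trans hball)
  obtain ⟨C₂, hC₂, hcac₂⟩ := hd.exists_caccioppoli hL hd.isOpen hLΩ subset_rfl
  refine ⟨C, 1 + C₁ + C₂, Λ, τ₀, hC.le, by positivity, hΛ, hτ₀,
    fun τ s lam u G f hτ hs hsτ hlam hlams h => ?_⟩
  refine (hannulus τ hτ lam u G f hlam
    (hlams.trans (pow_le_pow_left₀ (by linarith) hsτ 2)) h).trans ?_
  have hinner := hcac₁ s lam u G f hs hlam hlams h
  have houter := hcac₂ s lam u G f hs hlam hlams h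
  have hF : 0 ≤ ∫ x in Ω, f x ^ 2 := integral_nonneg fun x => sq_nonneg _
  have hI : 0 ≤ ∫ x in ball y (3 * a), u x ^ 2 := integral_nonneg fun x => sq_nonneg _
  have hT : 0 ≤ ∫ x in Ω, u x ^ 2 := integral_nonneg fun x => sq_nonneg _
  have := (le_add_of_nonneg_left hI).trans
    (le_mul_of_one_le_left (add_nonneg hI hF) (one_le_pow₀ hs (n := 2)))
  have := mul_nonneg (mul_nonneg hC₂ (sq_nonneg s)) (add_nonneg hI hF)
  have := mul_nonneg (mul_nonneg (add_nonneg zero_le_one hC₁) (sq_nonneg s)) (add_nonneg hT hF)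
  gcongr <;> linarith

theorem IsDefiningFunction.exists_three_ball (hd : IsDefiningFunction Ω ψ P) {y : E}
    {a R : ℝ} (ha : 0 < a) (haR : 4 * a ≤ R) (hball : closedBall y R ⊆ Ω) :
    ∃ D c' c τ₀ : ℝ, 0 ≤ D ∧ 0 ≤ c' ∧ 0 < c ∧ 1 ≤ τ₀ ∧ ∀ τ s lam u G f, τ₀ ≤ τ → 1 ≤ s → s ≤ τ →
      0 ≤ lam → lam ≤ s ^ 2 → NeumannData Ω P lam u G f →
      (∫ x in ball y (R / 2), u x ^ 2) + (∫ x in Ω, f x ^ 2) ≤ D * s ^ 2 *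
        (Real.exp (c' * τ) * ((∫ x in ball y (3 * a), u x ^ 2) + ∫ x in Ω, f x ^ 2) +
          Real.exp (-(c * τ)) * ((∫ x in Ω, u x ^ 2) + ∫ x in Ω, f x ^ 2)) := by
  have hR : 0 < R := by linarith
  have hballΩ : ∀ r ≤ R, ball y r ⊆ Ω := fun r hr =>
    (ball_subset_closedBall.trans (closedBall_subset_closedBall hr)).trans hball
  obtain ⟨C, q, Λ, τ₀, hC, hq, hΛ, hτ₀, hannulus⟩ := hd.exists_annulus_estimate ha haR hball
  have hheight : convexifiedHeight Λ (7 * R ^ 2 / 16) < convexifiedHeight Λ (3 * R ^ 2 / 4) :=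
    strictMono_convexifiedHeight hΛ (by linarith [pow_pos hR 2])
  refine ⟨1 + 2 * C * q, 2 * convexifiedHeight Λ (R ^ 2),
    2 * (convexifiedHeight Λ (3 * R ^ 2 / 4) - convexifiedHeight Λ (7 * R ^ 2 / 16)), τ₀,
    by positivity, mul_nonneg zero_le_two (convexifiedHeight_nonneg hΛ (sq_nonneg R)),
    by linarith, hτ₀, fun τ s lam u G f hτ hs hsτ hlam hlams h => ?_⟩
  have hu := h.integrableOn_sq hd
  have hexp : ∀ t, 0 ≤ t → 1 ≤ Real.exp (2 * τ * convexifiedHeight Λ t) := fun t ht =>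
    Real.one_le_exp (mul_nonneg (by linarith) (convexifiedHeight_nonneg hΛ ht))
  have hsplit := setIntegral_le_add_of_subset_union (S := ball y (R / 2))
    (T₁ := ball y (R / 2) \ closedBall y (2 * a)) (T₂ := ball y (3 * a))
    (g := fun x => u x ^ 2) (μ := volume) (fun x => sq_nonneg _)
    (fun x hx => (em (x ∈ closedBall y (2 * a))).symm.imp (⟨hx, ·⟩)
      fun hxa => closedBall_subset_ball (by linarith) hxa)
    (hu.mono_set (sdiff_subset.trans (hballΩ _ (by linarith))))
    (hu.mono_set (hballΩ _ (by linarith)))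
  have hfinal := add_le_of_mul_le_weighted_add hC (hexp _ (by positivity)) (hexp _ (sq_nonneg R))
    (Real.exp_nonneg _)
    (add_nonneg (integral_nonneg fun x => sq_nonneg _) (integral_nonneg fun x => sq_nonneg _))
    (add_nonneg (integral_nonneg fun x => sq_nonneg _) (integral_nonneg fun x => sq_nonneg _))
    hq hs (hannulus τ s lam u G f hτ hs hsτ hlam hlams h)
  rw [← Real.exp_sub] at hfinal
  refine (by linarith : _ ≤ _).trans (hfinal.trans_eq ?_)
  ring_nf

end ThreeBalls

section Propagation

variable {E : Type*} [NormedAddCommGroup E] [InnerProductSpace ℝ E] [FiniteDimensional ℝ E]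
  [MeasurableSpace E] [BorelSpace E]
  {Ω : Set E} {ψ : E → ℝ} {P : E → E} {S T S₁ S₂ : Set E}

/-- The size of a solution `u` observed on `S`, together with the size of its source `f` on all of
`Ω`. -/
def observedMass (Ω : Set E) (u f : E → ℝ) (S : Set E) : ℝ :=
  (∫ x in S, u x ^ 2) + ∫ x in Ω, f x ^ 2

/-- Observability transfers from `S` to `T`: if a solution with frequency at most `s` is determined
by its size on `S` up to a factor `e^{As}`, then it is determined by its size on `T` up to a factor
`e^{A's}`, where `A'` depends on `A` only. This is the form in which smallness is propagated from
`T` to `S`. -/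
def ObservabilityTransfers (Ω : Set E) (P : E → E) (S T : Set E) : Prop :=
  ∀ A : ℝ, ∃ A' : ℝ, ∀ s lam u G f, 1 ≤ s → 0 ≤ lam → lam ≤ s ^ 2 → NeumannData Ω P lam u G f →
    observedMass Ω u f Ω ≤ Real.exp (A * s) * observedMass Ω u f S →
    observedMass Ω u f Ω ≤ Real.exp (A' * s) * observedMass Ω u f T

theorem observedMass_nonneg (Ω : Set E) (u f : E → ℝ) (S : Set E) : 0 ≤ observedMass Ω u f S :=
  add_nonneg (integral_nonneg fun _ => sq_nonneg _) (integral_nonneg fun _ => sq_nonneg _)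

theorem observedMass_mono {u f : E → ℝ} (hST : S ⊆ T) (hu : IntegrableOn (fun x => u x ^ 2) T) :
    observedMass Ω u f S ≤ observedMass Ω u f T :=
  add_le_add_left (setIntegral_mono_set hu (ae_of_all _ fun _ => sq_nonneg _) (ae_of_all _ hST)) _

theorem observedMass_union_le {u f : E → ℝ} (h₁ : IntegrableOn (fun x => u x ^ 2) S₁)
    (h₂ : IntegrableOn (fun x => u x ^ 2) S₂) :
    observedMass Ω u f (S₁ ∪ S₂) ≤ observedMass Ω u f S₁ + observedMass Ω u f S₂ := by
  have hle := setIntegral_le_add_of_subset_union (g := fun x => u x ^ 2)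
    (fun x => sq_nonneg (u x)) subset_rfl h₁ h₂
  have hf : 0 ≤ ∫ x in Ω, f x ^ 2 := integral_nonneg fun _ => sq_nonneg _
  unfold observedMass
  linarith

theorem two_le_exp {s : ℝ} (hs : 1 ≤ s) : 2 ≤ Real.exp s := by
  linarith [Real.add_one_le_exp s]

namespace ObservabilityTransfers

theorem trans {R : Set E} (h₁ : ObservabilityTransfers Ω P R S)
    (h₂ : ObservabilityTransfers Ω P S T) : ObservabilityTransfers Ω P R T := fun A => by
  obtain ⟨A₁, hA₁⟩ := h₁ A
  obtain ⟨A₂, hA₂⟩ := h₂ A₁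
  exact ⟨A₂, fun s lam u G f hs hlam hlams h hA =>
    hA₂ s lam u G f hs hlam hlams h (hA₁ s lam u G f hs hlam hlams h hA)⟩

theorem of_subset (hd : IsDefiningFunction Ω ψ P) (hST : S ⊆ T) (hT : T ⊆ Ω) :
    ObservabilityTransfers Ω P S T := fun A => ⟨A, fun _ _ _ _ _ _ _ _ h hA =>
  hA.trans (mul_le_mul_of_nonneg_left
    (observedMass_mono hST ((h.integrableOn_sq hd).mono_set hT)) (Real.exp_nonneg _))⟩

theorem union (hd : IsDefiningFunction Ω ψ P) (hS₁ : S₁ ⊆ Ω) (hS₂ : S₂ ⊆ Ω)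
    (h₁ : ObservabilityTransfers Ω P S₁ T) (h₂ : ObservabilityTransfers Ω P S₂ T) :
    ObservabilityTransfers Ω P (S₁ ∪ S₂) T := fun A => by
  obtain ⟨A₁, hA₁⟩ := h₁ (A + 1)
  obtain ⟨A₂, hA₂⟩ := h₂ (A + 1)
  refine ⟨max A₁ A₂, fun s lam u G f hs hlam hlams h hA => ?_⟩
  have hu := h.integrableOn_sq hd
  have hunion := observedMass_union_le (Ω := Ω) (f := f) (hu.mono_set hS₁) (hu.mono_set hS₂)
  have of_le : ∀ S, observedMass Ω u f (S₁ ∪ S₂) ≤ 2 * observedMass Ω u f S →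
      observedMass Ω u f Ω ≤ Real.exp ((A + 1) * s) * observedMass Ω u f S := fun S hS =>
    calc observedMass Ω u f Ω ≤ Real.exp (A * s) * (2 * observedMass Ω u f S) :=
          hA.trans (mul_le_mul_of_nonneg_left hS (Real.exp_nonneg _))
      _ ≤ Real.exp (A * s) * (Real.exp s * observedMass Ω u f S) := by
          gcongr
          exacts [observedMass_nonneg Ω u f S, two_le_exp hs]
      _ = _ := by rw [← mul_assoc, ← Real.exp_add, add_one_mul]
  have hT := observedMass_nonneg Ω u f T
  rcases le_total (observedMass Ω u f S₁) (observedMass Ω u f S₂) with hle | hle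
  · refine (hA₂ s lam u G f hs hlam hlams h (of_le S₂ (by linarith))).trans ?_
    gcongr
    exact le_max_right _ _
  · refine (hA₁ s lam u G f hs hlam hlams h (of_le S₁ (by linarith))).trans ?_
    gcongr
    exact le_max_left _ _

end ObservabilityTransfers

/-- The choice `τ = θ s` with `θ` large absorbs the last term of the three-ball inequality. -/
theorem exists_forall_le_exp_mul_of_forall_le (A : ℝ) {D c c' τ₀ : ℝ} (hD : 0 ≤ D) (hc : 0 < c) :
    ∃ A', ∀ s M N Q : ℝ, 1 ≤ s → 0 ≤ M → 0 ≤ Q → Q ≤ Real.exp (A * s) * N →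
      (∀ τ, τ₀ ≤ τ → s ≤ τ →
        N ≤ D * s ^ 2 * (Real.exp (c' * τ) * M + Real.exp (-(c * τ)) * Q)) →
      Q ≤ Real.exp (A' * s) * M := by
  set θ := max (max τ₀ 1) ((A + D + 3) / c)
  have hθτ₀ : τ₀ ≤ θ := (le_max_left _ _).trans (le_max_left _ _)
  have hθ₁ : 1 ≤ θ := (le_max_right _ _).trans (le_max_left _ _)
  have hcθ : A + D + 3 ≤ c * θ := (div_le_iff₀' hc).1 (le_max_right _ _)
  refine ⟨1 + (A + (D + 2) + c' * θ), fun s M N Q hs hM hQ hN h => ?_⟩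
  have hs₀ : 0 ≤ s := zero_le_one.trans hs
  have hsmall : Real.exp ((A + (D + 2) - c * θ) * s) ≤ 1 / 2 :=
    calc Real.exp ((A + (D + 2) - c * θ) * s) ≤ Real.exp (-1) :=
          Real.exp_le_exp.2 (by linarith [mul_le_mul_of_nonneg_right hcθ hs₀])
      _ ≤ 1 / 2 := by
          rw [Real.exp_neg, one_div]
          exact inv_anti₀ two_pos (two_le_exp le_rfl)
  have hQle : Q ≤ Real.exp ((A + (D + 2) + c' * θ) * s) * M + 1 / 2 * Q :=
    calc Q ≤ Real.exp (A * s) * (D * s ^ 2 *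
          (Real.exp (c' * (θ * s)) * M + Real.exp (-(c * (θ * s))) * Q)) := by
          refine hN.trans (mul_le_mul_of_nonneg_left (h (θ * s) ?_ ?_) (Real.exp_nonneg _))
          · exact hθτ₀.trans (le_mul_of_one_le_right (by linarith) hs)
          · exact le_mul_of_one_le_left hs₀ hθ₁
      _ ≤ Real.exp (A * s) * (Real.exp ((D + 2) * s) *
          (Real.exp (c' * (θ * s)) * M + Real.exp (-(c * (θ * s))) * Q)) := by
          gcongr
          exact mul_sq_le_exp hs hD
      _ = Real.exp ((A + (D + 2) + c' * θ) * s) * M +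
          Real.exp ((A + (D + 2) - c * θ) * s) * Q := by
          simp only [add_mul, sub_mul, Real.exp_add, Real.exp_sub, Real.exp_neg, mul_assoc]
          ring
      _ ≤ _ := by gcongr
  calc Q ≤ 2 * (Real.exp ((A + (D + 2) + c' * θ) * s) * M) := by linarith
    _ ≤ Real.exp s * (Real.exp ((A + (D + 2) + c' * θ) * s) * M) := by
        gcongr
        exact two_le_exp hs
    _ = _ := by rw [← mul_assoc, ← Real.exp_add, one_add_mul]

namespace IsDefiningFunction

theorem observabilityTransfers_ball (hd : IsDefiningFunction Ω ψ P) {y : E} {a R : ℝ} (ha : 0 < a)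
    (haR : 4 * a ≤ R) (hball : closedBall y R ⊆ Ω) :
    ObservabilityTransfers Ω P (ball y (R / 2)) (ball y (3 * a)) := fun A => by
  obtain ⟨D, c', c, τ₀, hD, -, hc, -, hthree⟩ := hd.exists_three_ball ha haR hball
  obtain ⟨A', hA'⟩ := exists_forall_le_exp_mul_of_forall_le A (c' := c') (τ₀ := τ₀) hD hc
  exact ⟨A', fun s lam u G f hs hlam hlams h hA => hA' s _ _ _ hs (observedMass_nonneg _ _ _ _)
    (observedMass_nonneg _ _ _ _) hA fun τ hτ hsτ => hthree τ s lam u G f hτ hs hsτ hlam hlams h⟩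

theorem exists_isCompact_observabilityTransfers (hd : IsDefiningFunction Ω ψ P) :
    ∃ K ⊆ Ω, IsCompact K ∧ ObservabilityTransfers Ω P Ω K := by
  obtain ⟨K, hKΩ, hK, A, hA, hest⟩ := hd.exists_boundary_estimate
  refine ⟨K, hKΩ, hK, fun _ => ⟨1 + A, fun s lam u G f hs hlam hlams h _ => ?_⟩⟩
  have hF : ∫ x in Ω, f x ^ 2 ≤ observedMass Ω u f K :=
    le_add_of_nonneg_left (integral_nonneg fun _ => sq_nonneg _)
  have hle := le_mul_of_one_le_left (observedMass_nonneg Ω u f K)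
    (Real.one_le_exp (by positivity : 0 ≤ A * s))
  calc observedMass Ω u f Ω
      ≤ Real.exp (A * s) * observedMass Ω u f K + Real.exp (A * s) * observedMass Ω u f K :=
        add_le_add (hest s lam u G f hs hlam hlams h) (hF.trans hle)
    _ = 2 * (Real.exp (A * s) * observedMass Ω u f K) := (two_mul _).symm
    _ ≤ Real.exp s * (Real.exp (A * s) * observedMass Ω u f K) := by
        gcongr
        exacts [mul_nonneg (Real.exp_nonneg _) (observedMass_nonneg Ω u f K), two_le_exp hs]
    _ = _ := by rw [← mul_assoc, ← Real.exp_add, one_add_mul]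

theorem exists_ball_observabilityTransfers_of_mem_closure (hd : IsDefiningFunction Ω ψ P) {x : E}
    (hx : x ∈ Ω)
    (hcl : x ∈ closure {x | ∃ r > 0, ball x r ⊆ Ω ∧ ObservabilityTransfers Ω P (ball x r) T}) :
    ∃ r > 0, ball x r ⊆ Ω ∧ ObservabilityTransfers Ω P (ball x r) T := by
  obtain ⟨ε, hε, hεΩ⟩ := Metric.isOpen_iff.1 hd.isOpen x hx
  obtain ⟨y, ⟨r, hr, hrΩ, hrT⟩, hxy⟩ := Metric.mem_closure_iff.1 hcl (ε / 8) (by positivity)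
  have hball : closedBall y (ε / 2) ⊆ Ω :=
    (closedBall_subset_ball' (by rw [dist_comm]; linarith)).trans hεΩ
  have hsub : ball x (ε / 8) ⊆ ball y (ε / 2 / 2) := ball_subset_ball' (by linarith)
  have hyΩ : ball y (ε / 2 / 2) ⊆ Ω :=
    (ball_subset_closedBall.trans (closedBall_subset_closedBall (by linarith))).trans hball
  have ha : 4 * min (ε / 8) (r / 3) ≤ ε / 2 := by linarith [min_le_left (ε / 8) (r / 3)]
  have har : 3 * min (ε / 8) (r / 3) ≤ r := by linarith [min_le_right (ε / 8) (r / 3)]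
  exact ⟨ε / 8, by positivity, hsub.trans hyΩ,
    ((ObservabilityTransfers.of_subset hd hsub hyΩ).trans
      (hd.observabilityTransfers_ball (by positivity) ha hball)).trans
      ((ObservabilityTransfers.of_subset hd (ball_subset_ball har) hrΩ).trans hrT)⟩

theorem exists_ball_observabilityTransfers (hd : IsDefiningFunction Ω ψ P)
    (hconn : IsPreconnected Ω) {z : E} {ρ : ℝ} (hρ : 0 < ρ) (hz : ball z ρ ⊆ Ω) {x : E}
    (hx : x ∈ Ω) :
    ∃ r > 0, ball x r ⊆ Ω ∧ ObservabilityTransfers Ω P (ball x r) (ball z ρ) := by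
  refine hconn.subset_of_closure_inter_subset
    (u := {x | ∃ r > 0, ball x r ⊆ Ω ∧ ObservabilityTransfers Ω P (ball x r) (ball z ρ)})
    (Metric.isOpen_iff.2 ?_)
    ⟨z, hz (mem_ball_self hρ), ρ, hρ, hz, ObservabilityTransfers.of_subset hd subset_rfl hz⟩
    (fun x ⟨hcl, hx⟩ => hd.exists_ball_observabilityTransfers_of_mem_closure hx hcl) hx
  rintro x ⟨r, hr, hrΩ, hrT⟩
  refine ⟨r / 2, half_pos hr, fun y hy => ⟨r / 2, half_pos hr, ?_⟩⟩
  have hsub : ball y (r / 2) ⊆ ball x r := ball_subset_ball' (by linarith [mem_ball.1 hy])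
  exact ⟨hsub.trans hrΩ, (ObservabilityTransfers.of_subset hd hsub hrΩ).trans hrT⟩

theorem observabilityTransfers_ball_of_isPreconnected (hd : IsDefiningFunction Ω ψ P)
    (hconn : IsPreconnected Ω) {z : E} {ρ : ℝ} (hρ : 0 < ρ) (hz : ball z ρ ⊆ Ω) :
    ObservabilityTransfers Ω P Ω (ball z ρ) := by
  obtain ⟨K, hKΩ, hK, hΩK⟩ := hd.exists_isCompact_observabilityTransfers
  refine hΩK.trans <| And.right <| hK.induction_on
    (p := fun S => S ⊆ Ω ∧ ObservabilityTransfers Ω P S (ball z ρ))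
    ⟨empty_subset _, .of_subset hd (empty_subset _) hz⟩
    (fun S T hST hT => ⟨hST.trans hT.1, (ObservabilityTransfers.of_subset hd hST hT.1).trans hT.2⟩)
    (fun S₁ S₂ h₁ h₂ => ⟨union_subset h₁.1 h₂.1, .union hd h₁.1 h₂.1 h₁.2 h₂.2⟩) fun x hx => ?_
  obtain ⟨r, hr, hrΩ, hrz⟩ := hd.exists_ball_observabilityTransfers hconn hρ hz (hKΩ hx)
  exact ⟨ball x r, mem_nhdsWithin_of_mem_nhds (ball_mem_nhds x hr), hrΩ, hrz⟩

theorem exists_propagation_of_smallness (hd : IsDefiningFunction Ω ψ P)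
    (hconn : IsPreconnected Ω) {z : E} {ρ : ℝ} (hρ : 0 < ρ) (hz : ball z ρ ⊆ Ω) :
    ∃ A, 0 ≤ A ∧ ∀ s lam u G f, 1 ≤ s → 0 ≤ lam → lam ≤ s ^ 2 → NeumannData Ω P lam u G f →
      observedMass Ω u f Ω ≤ Real.exp (A * s) * observedMass Ω u f (ball z ρ) := by
  obtain ⟨A, hA⟩ := hd.observabilityTransfers_ball_of_isPreconnected hconn hρ hz 0
  refine ⟨max A 0, le_max_right _ _, fun s lam u G f hs hlam hlams h =>
    (hA s lam u G f hs hlam hlams h (by simp)).trans ?_⟩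
  gcongr
  exacts [observedMass_nonneg _ _ _ _, le_max_left _ _]

end IsDefiningFunction

end Propagation

section SegmentAverages

variable {E : Type*} [NormedAddCommGroup E] [InnerProductSpace ℝ E]

theorem sq_setIntegral_Icc_le {φ : ℝ → ℝ} (hφ : ContinuousOn φ (Icc 0 1)) :
    (∫ t in Icc (0 : ℝ) 1, φ t) ^ 2 ≤ ∫ t in Icc (0 : ℝ) 1, φ t ^ 2 := by
  have : IsProbabilityMeasure (volume.restrict (Icc (0 : ℝ) 1)) := ⟨by simp⟩
  exact even_two.convexOn_pow.map_integral_le (continuous_pow 2).continuousOn isClosed_univ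
    (by simp) hφ.integrableOn_Icc (hφ.pow 2).integrableOn_Icc

theorem sub_eq_integral_inner_gradient {s : Set E} (hs : Convex ℝ s) [CompleteSpace E] {u : E → ℝ}
    {G : E → E} (hu : ∀ x ∈ s, HasGradientAt u (G x) x) (hG : ContinuousOn G s) {x y : E}
    (hx : x ∈ s) (hy : y ∈ s) :
    ContinuousOn (fun t : ℝ => G (x + t • (y - x))) (Icc 0 1) ∧
      u y - u x = ∫ t in Icc (0 : ℝ) 1, ⟪G (x + t • (y - x)), y - x⟫ := by
  have hseg : ∀ t ∈ Icc (0 : ℝ) 1, x + t • (y - x) ∈ s := fun t ht =>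
    hs.add_smul_sub_mem hx hy ht
  have hcont : ContinuousOn (fun t : ℝ => G (x + t • (y - x))) (Icc 0 1) :=
    hG.comp (by fun_prop) hseg
  have hderiv : ∀ t ∈ uIcc (0 : ℝ) 1, HasDerivAt (fun t : ℝ => u (x + t • (y - x)))
      ⟪G (x + t • (y - x)), y - x⟫ t := fun t ht => by
    have hline : HasDerivAt (fun t : ℝ => x + t • (y - x)) (y - x) t := by
      simpa using ((hasDerivAt_id t).smul_const (y - x)).const_add x
    rw [uIcc_of_le zero_le_one] at ht
    exact (hu _ (hseg t ht)).hasFDerivAt.comp_hasDerivAt t hline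
  refine ⟨hcont, ?_⟩
  rw [integral_Icc_eq_integral_Ioc, ← intervalIntegral.integral_of_le zero_le_one,
    intervalIntegral.integral_eq_sub_of_hasDerivAt hderiv]
  · simp
  · exact (ContinuousOn.inner (𝕜 := ℝ) (by rwa [uIcc_of_le zero_le_one])
      continuousOn_const).intervalIntegrable

theorem ofReal_sub_sq_le_lintegral_segment [CompleteSpace E] {s : Set E} (hs : Convex ℝ s)
    {u : E → ℝ} {G : E → E} (hu : ∀ x ∈ s, HasGradientAt u (G x) x) (hG : ContinuousOn G s)
    {x y : E} (hx : x ∈ s) (hy : y ∈ s) :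
    ENNReal.ofReal ((u y - u x) ^ 2) ≤ ENNReal.ofReal (‖y - x‖ ^ 2) *
      ∫⁻ t in Icc (0 : ℝ) 1, ENNReal.ofReal (‖G (x + t • (y - x))‖ ^ 2) := by
  obtain ⟨hcont, hftc⟩ := sub_eq_integral_inner_gradient hs hu hG hx hy
  have hinner : ContinuousOn (fun t : ℝ => ⟪G (x + t • (y - x)), y - x⟫) (Icc 0 1) :=
    hcont.inner continuousOn_const
  have hsq : IntegrableOn (fun t : ℝ => ‖G (x + t • (y - x))‖ ^ 2) (Icc 0 1) :=
    (hcont.norm.pow 2).integrableOn_Icc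
  rw [← ofReal_integral_eq_lintegral_ofReal hsq (ae_of_all _ fun _ => sq_nonneg _),
    ← ENNReal.ofReal_mul (sq_nonneg _), ← integral_const_mul, hftc]
  refine ENNReal.ofReal_le_ofReal <| (sq_setIntegral_Icc_le hinner).trans <|
    setIntegral_mono_on (hinner.pow 2).integrableOn_Icc (hsq.const_mul _) measurableSet_Icc
      fun t _ => ?_
  rw [mul_comm, ← mul_pow]
  exact sq_le_sq.2 ((abs_real_inner_le_norm _ _).trans (le_abs_self _))

variable [FiniteDimensional ℝ E] [MeasurableSpace E] [BorelSpace E]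

theorem setLIntegral_ball_sub_le (F : E → ℝ≥0∞) {x z : E} {ρ : ℝ} (hx : x ∈ ball z ρ) :
    ∫⁻ y in ball z ρ, F (y - x) ≤ ∫⁻ h in ball (0 : E) (2 * ρ), F h :=
  calc ∫⁻ y in ball z ρ, F (y - x)
      = ∫⁻ y in ball z ρ, (ball (0 : E) (2 * ρ)).indicator F (y - x) := by
        refine setLIntegral_congr_fun measurableSet_ball fun y hy => (indicator_of_mem ?_ F).symm
        rw [mem_ball_zero_iff, ← dist_eq_norm]
        linarith [dist_triangle_right y x z, mem_ball.1 hx, mem_ball.1 hy]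
    _ ≤ ∫⁻ y, (ball (0 : E) (2 * ρ)).indicator F (y - x) := setLIntegral_le_lintegral _ _
    _ = ∫⁻ h in ball (0 : E) (2 * ρ), F h := by
        rw [lintegral_sub_right_eq_self, lintegral_indicator measurableSet_ball]

theorem lintegral_lintegral_segment_ball_le {g : E → ℝ≥0∞} (hg : Measurable g) (z : E) (ρ : ℝ) :
    ∫⁻ x in ball z ρ, ∫⁻ y in ball z ρ, ∫⁻ t in Icc (0 : ℝ) 1, g (x + t • (y - x)) ≤
      volume (ball (0 : E) (2 * ρ)) * ∫⁻ x, g x := by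
  have hmeas : Measurable fun q : (E × E) × ℝ => g (q.1.1 + q.2 • q.1.2) := by fun_prop
  calc ∫⁻ x in ball z ρ, ∫⁻ y in ball z ρ, ∫⁻ t in Icc (0 : ℝ) 1, g (x + t • (y - x))
      ≤ ∫⁻ x in ball z ρ, ∫⁻ h in ball (0 : E) (2 * ρ), ∫⁻ t in Icc (0 : ℝ) 1, g (x + t • h) :=
        setLIntegral_mono' measurableSet_ball fun x hx => setLIntegral_ball_sub_le _ hx
    _ ≤ ∫⁻ x, ∫⁻ h in ball (0 : E) (2 * ρ), ∫⁻ t in Icc (0 : ℝ) 1, g (x + t • h) :=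
        setLIntegral_le_lintegral _ _
    _ = ∫⁻ h in ball (0 : E) (2 * ρ), ∫⁻ x, ∫⁻ t in Icc (0 : ℝ) 1, g (x + t • h) :=
        lintegral_lintegral_swap hmeas.lintegral_prod_right'.aemeasurable
    _ = ∫⁻ _ in ball (0 : E) (2 * ρ), ∫⁻ x, g x := by
        refine lintegral_congr fun h => ?_
        rw [lintegral_lintegral_swap (Measurable.aemeasurable (by fun_prop))]
        simp_rw [lintegral_add_right_eq_self]
        simp
    _ = _ := by rw [setLIntegral_const, mul_comm]

/-- The constant in the Poincaré inequality on a ball of radius `ρ` in `E`. -/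
def poincareConst (E : Type*) [NormedAddCommGroup E] [InnerProductSpace ℝ E] (ρ : ℝ) : ℝ :=
  4 * ρ ^ 2 * 2 ^ Module.finrank ℝ E

theorem lintegral_lintegral_sub_sq_le {u : E → ℝ} {G : E → E} {z : E} {ρ : ℝ} (hρ : 0 < ρ)
    (hu : ∀ x ∈ ball z ρ, HasGradientAt u (G x) x) (hG : ContinuousOn G (ball z ρ)) :
    ∫⁻ x in ball z ρ, ∫⁻ y in ball z ρ, ENNReal.ofReal ((u y - u x) ^ 2) ≤
      volume (ball z ρ) * (ENNReal.ofReal (poincareConst E ρ) *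
        ∫⁻ x in ball z ρ, ENNReal.ofReal (‖G x‖ ^ 2)) := by
  set g : E → ℝ≥0∞ := (ball z ρ).indicator fun p => ENNReal.ofReal (‖G p‖ ^ 2) with hgdef
  have hg : Measurable g := by
    classical
    rw [hgdef, ← piecewise_eq_indicator]
    exact (ENNReal.continuous_ofReal.comp_continuousOn (hG.norm.pow 2)).measurable_piecewise
      continuousOn_const measurableSet_ball
  have hpointwise : ∀ x ∈ ball z ρ, ∀ y ∈ ball z ρ, ENNReal.ofReal ((u y - u x) ^ 2) ≤
      ENNReal.ofReal (4 * ρ ^ 2) * ∫⁻ t in Icc (0 : ℝ) 1, g (x + t • (y - x)) := fun x hx y hy => by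
    refine (ofReal_sub_sq_le_lintegral_segment (convex_ball z ρ) hu hG hx hy).trans ?_
    gcongr ENNReal.ofReal ?_ * ?_
    · rw [show 4 * ρ ^ 2 = (2 * ρ) ^ 2 by ring, ← dist_eq_norm]
      have := dist_triangle_right y x z
      gcongr
      linarith [mem_ball.1 hx, mem_ball.1 hy]
    · refine setLIntegral_mono' measurableSet_Icc fun t ht => ?_
      rw [hgdef, indicator_of_mem ((convex_ball z ρ).add_smul_sub_mem hx hy ht)]
  calc ∫⁻ x in ball z ρ, ∫⁻ y in ball z ρ, ENNReal.ofReal ((u y - u x) ^ 2)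
      ≤ ∫⁻ x in ball z ρ, ∫⁻ y in ball z ρ, ENNReal.ofReal (4 * ρ ^ 2) *
          ∫⁻ t in Icc (0 : ℝ) 1, g (x + t • (y - x)) :=
        setLIntegral_mono' measurableSet_ball fun x hx =>
          setLIntegral_mono' measurableSet_ball (hpointwise x hx)
    _ = ENNReal.ofReal (4 * ρ ^ 2) * ∫⁻ x in ball z ρ, ∫⁻ y in ball z ρ,
          ∫⁻ t in Icc (0 : ℝ) 1, g (x + t • (y - x)) := by
        simp_rw [lintegral_const_mul' _ _ ENNReal.ofReal_ne_top]
    _ ≤ ENNReal.ofReal (4 * ρ ^ 2) * (volume (ball (0 : E) (2 * ρ)) * ∫⁻ x, g x) := by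
        gcongr
        exact lintegral_lintegral_segment_ball_le hg z ρ
    _ = _ := by
        rw [hgdef, lintegral_indicator measurableSet_ball,
          Measure.addHaar_ball_mul_of_pos _ _ two_pos,
          ← Measure.addHaar_ball_center volume z, poincareConst,
          ENNReal.ofReal_mul (p := 4 * ρ ^ 2) (by positivity)]
        ring

theorem exists_setLIntegral_sub_const_sq_le {u : E → ℝ} {G : E → E} {z : E} {ρ : ℝ} (hρ : 0 < ρ)
    (hu : ∀ x ∈ ball z ρ, HasGradientAt u (G x) x) (hG : ContinuousOn G (ball z ρ)) :
    ∃ c, ∫⁻ y in ball z ρ, ENNReal.ofReal ((u y - c) ^ 2) ≤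
      ENNReal.ofReal (poincareConst E ρ) * ∫⁻ x in ball z ρ, ENNReal.ofReal (‖G x‖ ^ 2) := by
  have hcont : ContinuousOn u (ball z ρ) := fun x hx =>
    (hu x hx).hasFDerivAt.continuousAt.continuousWithinAt
  have hmeas : AEMeasurable u (volume.restrict (ball z ρ)) := hcont.aemeasurable measurableSet_ball
  have hpos : volume (ball z ρ) ≠ 0 := (measure_ball_pos _ _ hρ).ne'
  obtain ⟨x, -, hx⟩ := exists_le_setLAverage hpos measure_ball_lt_top.ne
    (f := fun x => ∫⁻ y in ball z ρ, ENNReal.ofReal ((u y - u x) ^ 2))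
    ((hmeas.comp_snd.sub hmeas.comp_fst).pow_const 2).ennreal_ofReal.lintegral_prod_right'
  refine ⟨u x, hx.trans ?_⟩
  rw [setLAverage_eq]
  exact ENNReal.div_le_of_le_mul' (lintegral_lintegral_sub_sq_le hρ hu hG)

end SegmentAverages

section SpectralGap

variable {E : Type*} [NormedAddCommGroup E] [InnerProductSpace ℝ E] [FiniteDimensional ℝ E]
  {Ω : Set E} {ψ : E → ℝ} {P : E → E} {lam : ℝ} {u : E → ℝ} {G : E → E} {f : E → ℝ}

theorem NeumannData.sub_const (h : NeumannData Ω P lam u G f) (c : ℝ) :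
    NeumannData Ω P 0 (fun x => u x - c) G (fun x => -lam * u x + f x) where
  __ := h
  continuousOn := h.continuousOn.sub continuousOn_const
  continuousOn_source := (continuousOn_const.mul h.continuousOn).add h.continuousOn_source
  hasGradientAt x hx :=
    hasGradientAt_iff_hasFDerivAt.2 ((h.hasGradientAt x hx).hasFDerivAt.sub_const c)
  divergence_gradient x hx := by rw [h.divergence_gradient x hx]; ring

variable [MeasurableSpace E] [BorelSpace E]

namespace NeumannData

theorem exists_poincare_ball (h : NeumannData Ω P lam u G f) (hd : IsDefiningFunction Ω ψ P)
    {z : E} {ρ : ℝ} (hρ : 0 < ρ) (hz : ball z ρ ⊆ Ω) :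
    ∃ c, ∫ x in ball z ρ, (u x - c) ^ 2 ≤ poincareConst E ρ * ∫ x in Ω, ‖G x‖ ^ 2 := by
  have hG : IntegrableOn (fun x => ‖G x‖ ^ 2) Ω :=
    hd.integrableOn (h.continuousOn_gradient.norm.pow 2)
  obtain ⟨c, hc⟩ := exists_setLIntegral_sub_const_sq_le hρ
    (fun x hx => h.hasGradientAt x (hz hx)) (h.continuousOn_gradient.mono (hz.trans subset_closure))
  have hu := ((h.sub_const c).integrableOn_sq hd).mono_set hz
  have hconst : 0 ≤ poincareConst E ρ := by unfold poincareConst; positivity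
  rw [← ofReal_integral_eq_lintegral_ofReal hu (ae_of_all _ fun _ => sq_nonneg _),
    ← ofReal_integral_eq_lintegral_ofReal (hG.mono_set hz) (ae_of_all _ fun _ => sq_nonneg _),
    ← ENNReal.ofReal_mul hconst, ENNReal.ofReal_le_ofReal_iff
      (mul_nonneg hconst (integral_nonneg fun _ => sq_nonneg _))] at hc
  refine ⟨c, hc.trans (mul_le_mul_of_nonneg_left ?_ hconst)⟩
  exact setIntegral_mono_set hG (ae_of_all _ fun _ => sq_nonneg _) (ae_of_all _ hz)

theorem integral_norm_gradient_sq (h : NeumannData Ω P lam u G f)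
    (hd : IsDefiningFunction Ω ψ P) :
    ∫ x in Ω, ‖G x‖ ^ 2 = (lam * ∫ x in Ω, u x ^ 2) - ∫ x in Ω, u x * f x := by
  have henergy := (h.energy_identity hd (ω := fun _ => 1) (Q := fun _ => 0)
    (fun x => hasGradientAt_const x 1) continuous_const).2
  have hG : IntegrableOn (fun x => ‖G x‖ ^ 2) Ω :=
    hd.integrableOn (h.continuousOn_gradient.norm.pow 2)
  have hu : IntegrableOn (fun x => lam * u x ^ 2) Ω := (h.integrableOn_sq hd).const_mul lam
  have huf : IntegrableOn (fun x => u x * f x) Ω :=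
    hd.integrableOn (h.continuousOn.mul h.continuousOn_source)
  have hGu : IntegrableOn (fun x => ‖G x‖ ^ 2 - lam * u x ^ 2) Ω := hG.sub hu
  simp only [one_mul, inner_zero_left, mul_zero, add_zero] at henergy
  rw [integral_add hGu huf, integral_sub hG hu, integral_const_mul] at henergy
  linarith

/-- Comparing the energy of `u` with that of `u - 1`. -/
theorem integral_eq_zero (h : NeumannData Ω P lam u G fun _ => 0)
    (hd : IsDefiningFunction Ω ψ P) (hlam : lam ≠ 0) : ∫ x in Ω, u x = 0 := by
  have henergy := h.integral_norm_gradient_sq hd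
  have hshift := (h.sub_const 1).integral_norm_gradient_sq hd
  have hu : IntegrableOn u Ω := hd.integrableOn h.continuousOn
  have hexpand : ∀ x, (u x - 1) * (-lam * u x + 0) = -lam * u x ^ 2 + lam * u x := fun x => by ring
  simp_rw [hexpand] at hshift
  rw [integral_add ((h.integrableOn_sq hd).const_mul _) (hu.const_mul _), integral_const_mul,
    integral_const_mul] at hshift
  simp only [mul_zero, integral_zero] at henergy
  exact (mul_eq_zero.1 (show lam * ∫ x in Ω, u x = 0 by linarith)).resolve_left hlam

theorem integral_sq_le_integral_sub_const_sq (h : NeumannData Ω P lam u G fun _ => 0)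
    (hd : IsDefiningFunction Ω ψ P) (hlam : lam ≠ 0) (c : ℝ) :
    ∫ x in Ω, u x ^ 2 ≤ ∫ x in Ω, (u x - c) ^ 2 := by
  have hu : IntegrableOn u Ω := hd.integrableOn h.continuousOn
  have hlin : IntegrableOn (fun x => 2 * c * u x) Ω := hu.const_mul _
  have hdiff : IntegrableOn (fun x => u x ^ 2 - 2 * c * u x) Ω := (h.integrableOn_sq hd).sub hlin
  calc ∫ x in Ω, u x ^ 2 = ∫ x in Ω, (u x ^ 2 - 2 * c * u x) := by
        rw [integral_sub (h.integrableOn_sq hd) hlin, integral_const_mul,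
          h.integral_eq_zero hd hlam, mul_zero, sub_zero]
    _ ≤ ∫ x in Ω, (u x - c) ^ 2 :=
        integral_mono hdiff ((h.sub_const c).integrableOn_sq hd)
          fun x => by linarith [sq_nonneg c, sub_sq' (u x) c]

end NeumannData

/-- For small `λ` the Poincaré inequality on a ball, propagated to `Ω`, would make an eigenfunction
close to a constant, although it has mean zero. -/
theorem IsDefiningFunction.exists_pos_le_eigenvalue (hd : IsDefiningFunction Ω ψ P)
    (hconn : IsConnected Ω) :
    ∃ lam₁ > 0, ∀ lam u G, 0 < lam → NeumannData Ω P lam u G (fun _ => 0) →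
      0 < ∫ x in Ω, u x ^ 2 → lam₁ ≤ lam := by
  obtain ⟨z, hz⟩ := hconn.nonempty
  obtain ⟨ρ, hρ, hzρ⟩ := Metric.isOpen_iff.1 hd.isOpen z hz
  obtain ⟨A, -, hprop⟩ := hd.exists_propagation_of_smallness hconn.isPreconnected hρ hzρ
  have hconst : 0 ≤ poincareConst E ρ := by unfold poincareConst; positivity
  set C := Real.exp A * (poincareConst E ρ + 1)
  have hC : 0 < C := by positivity
  refine ⟨min 1 (1 / C), by positivity, fun lam u G hlam h hpos => ?_⟩
  by_contra! hlt
  obtain ⟨hlam₁, hlamC⟩ := lt_min_iff.1 hlt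
  rw [lt_div_iff₀ hC] at hlamC
  set M := ∫ x in Ω, u x ^ 2
  obtain ⟨c, hc⟩ := h.exists_poincare_ball hd hρ hzρ
  have henergy : ∫ x in Ω, ‖G x‖ ^ 2 = lam * M := by
    simpa using h.integral_norm_gradient_sq hd
  have hsource : ∫ x in Ω, (-lam * u x + 0) ^ 2 = lam ^ 2 * M := by
    simp only [add_zero, mul_pow, neg_sq, integral_const_mul, M]
  have hmean := h.integral_sq_le_integral_sub_const_sq hd hlam.ne' c
  have hv := hprop 1 0 _ _ _ le_rfl le_rfl (by norm_num) (h.sub_const c)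
  rw [henergy] at hc
  rw [mul_one, observedMass, observedMass, hsource] at hv
  refine lt_irrefl M ?_
  calc M ≤ Real.exp A * ((∫ x in ball z ρ, (u x - c) ^ 2) + lam ^ 2 * M) := by
        nlinarith [mul_nonneg (sq_nonneg lam) hpos.le]
    _ ≤ Real.exp A * (poincareConst E ρ * (lam * M) + lam * M) := by
        gcongr
        nlinarith
    _ = lam * C * M := by ring
    _ < M := mul_lt_of_lt_one_left hpos hlamC

end SpectralGap

section BoundaryChart

variable {E : Type*} [NormedAddCommGroup E] [InnerProductSpace ℝ E] [FiniteDimensional ℝ E]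
  {Ω U : Set E} {ψ : E → ℝ} {P : E → E} {e : E}

/-- Inside the open set `U` the set `Ω` is `{ψ > 0}`, where `P = ∇ψ` is locally Lipschitz and `ψ`
has slope one along `e`: a `C^{1,1}` boundary chart, in the form of a defining function rather
than of a graph. -/
structure BoundaryChart (Ω U : Set E) (ψ : E → ℝ) (P : E → E) (e : E) : Prop where
  isOpen : IsOpen U
  hasGradientAt : ∀ p, HasGradientAt ψ (P p) p
  locallyLipschitz : LocallyLipschitz P
  mem_iff : ∀ p ∈ U, (p ∈ Ω ↔ 0 < ψ p)
  apply_add_smul : ∀ p (s : ℝ), ψ (p + s • e) = ψ p + s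

theorem hasDerivAt_add_smul {V : Type*} [NormedAddCommGroup V] [NormedSpace ℝ V] (p v : V) :
    HasDerivAt (fun s : ℝ => p + s • v) v 0 := by
  simpa using ((hasDerivAt_id (0 : ℝ)).smul_const v).const_add p

theorem hasDerivAt_comp_add_smul {g : E → ℝ} {a p : E} (h : HasGradientAt g a p) (v : E) :
    HasDerivAt (fun s : ℝ => g (p + s • v)) ⟪a, v⟫ 0 :=
  h.hasFDerivAt.hasLineDerivAt v

namespace BoundaryChart

theorem congr {Ω' V : Set E} (h : BoundaryChart Ω U ψ P e) (hV : IsOpen V)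
    (hΩ : Ω' ∩ V = Ω ∩ U ∩ V) (hVU : V ⊆ U) : BoundaryChart Ω' V ψ P e where
  __ := h
  isOpen := hV
  mem_iff p hp := by
    have hmem := Set.ext_iff.1 hΩ p
    simp only [mem_inter_iff, hp, hVU hp, and_true] at hmem
    rw [hmem, h.mem_iff p (hVU hp)]

theorem preimage (h : BoundaryChart Ω U ψ P e) (T : E ≃ᵃⁱ[ℝ] E) :
    BoundaryChart (T ⁻¹' Ω) (T ⁻¹' U) (fun p => ψ (T p))
      (fun p => T.linearIsometryEquiv.symm (P (T p))) (T.linearIsometryEquiv.symm e) where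
  isOpen := h.isOpen.preimage T.continuous
  hasGradientAt p := by
    have hT : HasFDerivAt T (T.linearIsometryEquiv : E →L[ℝ] E) p :=
      T.toAffineIsometry.toContinuousAffineMap.hasFDerivAt
    refine (hasGradientAt_iff_hasFDerivAt.2
      (((h.hasGradientAt (T p)).hasFDerivAt.comp p hT).congr_fderiv ?_))
    ext v
    simp [LinearIsometryEquiv.inner_map_eq_flip]
  locallyLipschitz :=
    T.linearIsometryEquiv.symm.lipschitz.locallyLipschitz.comp
      (h.locallyLipschitz.comp T.lipschitz.locallyLipschitz)
  mem_iff p hp := h.mem_iff _ hp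
  apply_add_smul p s := by
    rw [add_comm p, ← vadd_eq_add, T.map_vadd, map_smul, LinearIsometryEquiv.apply_symm_apply,
      vadd_eq_add, add_comm, h.apply_add_smul]

theorem continuous (h : BoundaryChart Ω U ψ P e) : Continuous ψ :=
  continuous_iff_continuousAt.2 fun p => (h.hasGradientAt p).continuousAt

theorem inner_direction (h : BoundaryChart Ω U ψ P e) (p : E) : ⟪P p, e⟫ = 1 := by
  have hline := hasDerivAt_comp_add_smul (h.hasGradientAt p) e
  simp_rw [h.apply_add_smul] at hline
  exact hline.unique ((hasDerivAt_id (0 : ℝ)).const_add (ψ p))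

theorem gradient_ne_zero (h : BoundaryChart Ω U ψ P e) (p : E) : P p ≠ 0 := fun hp => by
  simpa [hp] using h.inner_direction p

theorem eventually_add_smul_mem (h : BoundaryChart Ω U ψ P e) {p v : E} (hp : ψ p = 0)
    (hU : p ∈ U) (hv : 0 < ⟪P p, v⟫) : ∀ᶠ s : ℝ in 𝓝[>] 0, p + s • v ∈ Ω := by
  have hline := hasDerivAt_comp_add_smul (h.hasGradientAt p) v
  have hsign := eventually_nhdsWithin_sign_eq_of_deriv_pos (hv.trans_eq hline.deriv.symm)
    (by simpa using hp)
  have hmem : ∀ᶠ s : ℝ in 𝓝 0, p + s • v ∈ U :=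
    (hasDerivAt_add_smul p v).continuousAt.eventually_mem (h.isOpen.mem_nhds (by simpa using hU))
  filter_upwards [nhdsWithin_le_nhds hsign, nhdsWithin_le_nhds hmem, self_mem_nhdsWithin]
    with s hs hsU hpos
  rw [h.mem_iff _ hsU]
  exact sign_eq_one_iff.1 (hs.trans (by rw [sub_zero, sign_pos hpos]))

theorem mem_frontier_iff (h : BoundaryChart Ω U ψ P e) {p : E} (hU : p ∈ U) :
    p ∈ frontier Ω ↔ ψ p = 0 := by
  have hΩ : Ω ∩ U = {q | 0 < ψ q} ∩ U := by
    ext q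
    exact and_congr_left (h.mem_iff q)
  have hfrontier : p ∈ frontier Ω ↔ p ∈ frontier {q | 0 < ψ q} := by
    have := Set.ext_iff.1 (frontier_inter_open_inter (s := Ω) h.isOpen) p
    rw [hΩ, frontier_inter_open_inter h.isOpen] at this
    simpa [hU] using this.symm
  rw [hfrontier]
  refine ⟨fun hp => (frontier_lt_subset_eq continuous_const h.continuous hp).symm, fun hp => ?_⟩
  rw [← hfrontier]
  have hin := h.eventually_add_smul_mem hp hU (v := e) (by simp [h.inner_direction])
  have htendsto : Tendsto (fun s : ℝ => p + s • e) (𝓝[>] 0) (𝓝 p) := by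
    simpa using (hasDerivAt_add_smul p e).continuousAt.tendsto.mono_left nhdsWithin_le_nhds
  exact ⟨mem_closure_of_tendsto htendsto hin,
    fun hint => ((h.mem_iff p hU).1 (interior_subset hint)).ne' hp⟩

theorem uniqueDiffWithinAt_closure (h : BoundaryChart Ω U ψ P e) {p : E} (hp : p ∈ frontier Ω)
    (hU : p ∈ U) : UniqueDiffWithinAt ℝ (closure Ω) p := by
  have hcone : {v | 0 < ⟪P p, v⟫} ⊆ tangentConeAt ℝ (closure Ω) p := fun v hv =>
    mem_tangentConeAt_of_add_smul_mem (l := 𝓝[>] (0 : ℝ)) (c := fun s => s)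
      (tendsto_nhdsWithin_mono_right (fun _ hs => (ne_of_gt hs)) tendsto_id)
      ((h.eventually_add_smul_mem ((h.mem_frontier_iff hU).1 hp) hU hv).mono
        fun _ hs => subset_closure hs)
  have hspan : Submodule.span ℝ (tangentConeAt ℝ (closure Ω) p) = ⊤ := by
    refine Submodule.eq_top_of_nonempty_interior' _ ⟨e, ?_⟩
    rw [mem_interior]
    exact ⟨{v | 0 < ⟪P p, v⟫}, hcone.trans Submodule.subset_span,
      isOpen_lt continuous_const (by fun_prop), by simp [h.inner_direction]⟩
  exact ⟨hspan ▸ dense_univ, subset_closure (frontier_subset_closure hp)⟩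

theorem hasDerivAt_frontier_curve (h : BoundaryChart Ω U ψ P e) (p v : E) :
    HasDerivAt (fun s : ℝ => p + s • v - ψ (p + s • v) • e) (v - ⟪P p, v⟫ • e) 0 :=
  (hasDerivAt_add_smul p v).sub ((hasDerivAt_comp_add_smul (h.hasGradientAt p) v).smul_const e)

theorem tendsto_frontier_curve (h : BoundaryChart Ω U ψ P e) {p : E} (hp : p ∈ frontier Ω)
    (hU : p ∈ U) (v : E) :
    Tendsto (fun s : ℝ => p + s • v - ψ (p + s • v) • e) (𝓝 0) (𝓝[frontier Ω] p) := by
  have hzero := (h.mem_frontier_iff hU).1 hp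
  have hcurve : Tendsto (fun s : ℝ => p + s • v - ψ (p + s • v) • e) (𝓝 0) (𝓝 p) := by
    simpa [hzero] using (h.hasDerivAt_frontier_curve p v).continuousAt.tendsto
  refine tendsto_nhdsWithin_iff.2 ⟨hcurve, ?_⟩
  filter_upwards [hcurve (h.isOpen.mem_nhds hU)] with s hs
  refine (h.mem_frontier_iff hs).2 ?_
  beta_reduce
  rw [sub_eq_add_neg, ← neg_smul, h.apply_add_smul, add_neg_cancel]

theorem eq_inner_smul_of_isLittleO (h : BoundaryChart Ω U ψ P e) {p ν : E}
    (hp : p ∈ frontier Ω) (hU : p ∈ U)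
    (hν : (fun y => ⟪ν, y - p⟫) =o[𝓝[frontier Ω] p] fun y => ‖y - p‖) : ν = ⟪ν, e⟫ • P p := by
  refine ext_inner_right ℝ fun v => ?_
  set γ : ℝ → E := fun s => p + s • v - ψ (p + s • v) • e with hγ
  have hγ₀ : γ 0 = p := by simp [hγ, (h.mem_frontier_iff hU).1 hp]
  have hderiv : HasDerivAt γ (v - ⟪P p, v⟫ • e) 0 := h.hasDerivAt_frontier_curve p v
  have hbigO : (fun s => ‖γ s - p‖) =O[𝓝 0] fun s : ℝ => s := by
    simpa [hγ₀] using hderiv.isBigO_sub.norm_left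
  have hlittleO : (fun s => ⟪ν, γ s - p⟫) =o[𝓝 0] fun s : ℝ => s :=
    (hν.comp_tendsto (h.tendsto_frontier_curve hp hU v)).trans_isBigO hbigO
  have hzero : HasDerivAt (fun s => ⟪ν, γ s - p⟫) 0 0 := by
    rw [hasDerivAt_iff_isLittleO]
    simpa [hγ₀] using hlittleO
  have hinner : HasDerivAt (fun s => ⟪ν, γ s - p⟫) ⟪ν, v - ⟪P p, v⟫ • e⟫ 0 :=
    (innerSL ℝ ν).hasFDerivAt.comp_hasDerivAt 0 (hderiv.sub_const p)
  have htangent := hinner.unique hzero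
  rw [inner_sub_right, inner_smul_right] at htangent
  rw [real_inner_smul_left]
  linarith

theorem exists_pos_eq_neg_smul (h : BoundaryChart Ω U ψ P e) {p ν : E} (hp : p ∈ frontier Ω)
    (hU : p ∈ U) (hν₀ : ν ≠ 0) (hout : ∀ᶠ t : ℝ in 𝓝[>] (0 : ℝ), p + t • ν ∉ closure Ω)
    (hν : (fun y => ⟪ν, y - p⟫) =o[𝓝[frontier Ω] p] fun y => ‖y - p‖) :
    ∃ κ : ℝ, 0 < κ ∧ P p = -κ • ν := by
  have heq := h.eq_inner_smul_of_isLittleO hp hU hν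
  have hne : ⟪ν, e⟫ ≠ 0 := fun hzero => hν₀ (by rw [heq, hzero, zero_smul])
  have hnonpos : ⟪ν, e⟫ ≤ 0 := by
    by_contra! hpos
    have hin : 0 < ⟪P p, ν⟫ := by
      rw [heq, inner_smul_right]
      exact mul_pos hpos (real_inner_self_pos.2 (h.gradient_ne_zero p))
    obtain ⟨s, hs, hs'⟩ :=
      (hout.and (h.eventually_add_smul_mem ((h.mem_frontier_iff hU).1 hp) hU hin)).exists
    exact hs (subset_closure hs')
  refine ⟨-⟪ν, e⟫⁻¹, neg_pos.2 (inv_lt_zero.2 (hnonpos.lt_of_ne hne)), ?_⟩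
  rw [neg_neg, eq_inv_smul_iff₀ hne, ← heq]

end BoundaryChart

end BoundaryChart

section Graph

variable {n : ℕ}

/-- The map `front` as a continuous linear map. -/
def frontCLM (n : ℕ) : Euc (n + 1) →L[ℝ] Euc n :=
  (EuclideanSpace.equiv (Fin n) ℝ).symm.toContinuousLinearMap ∘L
    ContinuousLinearMap.pi fun i : Fin n => EuclideanSpace.proj (𝕜 := ℝ) i.castSucc

/-- The map `lastc` as a continuous linear map. -/
def lastCLM (n : ℕ) : Euc (n + 1) →L[ℝ] ℝ := EuclideanSpace.proj (𝕜 := ℝ) (Fin.last n)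

theorem frontCLM_apply (y : Euc (n + 1)) : frontCLM n y = front y := rfl

theorem lastCLM_apply (y : Euc (n + 1)) : lastCLM n y = lastc y := rfl

theorem front_single_last : front (EuclideanSpace.single (Fin.last n) (1 : ℝ)) = 0 := by
  ext i
  simp [front, Fin.castSucc_ne_last]

theorem lastc_single_last : lastc (EuclideanSpace.single (Fin.last n) (1 : ℝ)) = 1 := by
  simp [lastc]

/-- The gradient of `y ↦ lastc y - f (front y)`, as a function of the derivative of `f`. -/
def graphGradient (L : Euc n →L[ℝ] ℝ) : Euc (n + 1) :=
  (InnerProductSpace.toDual ℝ (Euc (n + 1))).symm (lastCLM n - L ∘L frontCLM n)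

theorem boundaryChart_graph {f : Euc n → ℝ} (hf : Differentiable ℝ f)
    (hf' : LocallyLipschitz (fderiv ℝ f)) :
    BoundaryChart {y | f (front y) < lastc y} univ (fun y => lastc y - f (front y))
      (fun y => graphGradient (fderiv ℝ f (front y))) (EuclideanSpace.single (Fin.last n) 1) where
  isOpen := isOpen_univ
  hasGradientAt y := by
    rw [hasGradientAt_iff_hasFDerivAt, graphGradient, LinearIsometryEquiv.apply_symm_apply]
    exact (lastCLM n).hasFDerivAt.sub
      ((hf (front y)).hasFDerivAt.comp y (frontCLM n).hasFDerivAt)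
  locallyLipschitz := by
    have hgraph : ContDiff ℝ 1 (graphGradient (n := n)) :=
      (InnerProductSpace.toDual ℝ (Euc (n + 1))).symm.contDiff.comp
        (contDiff_const.sub (contDiff_id.clm_comp contDiff_const))
    exact hgraph.locallyLipschitz.comp
      (hf'.comp (frontCLM n).lipschitz.locallyLipschitz)
  mem_iff y _ := (sub_pos (a := lastc y)).symm
  apply_add_smul y s := by
    rw [← lastCLM_apply, ← frontCLM_apply]
    simp only [map_add, map_smul, frontCLM_apply, lastCLM_apply, front_single_last,
      lastc_single_last, smul_zero, add_zero, smul_eq_mul, mul_one]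
    ring

theorem IsGraphBall.exists_boundaryChart {Ω : Set (Euc (n + 1))} {x : Euc (n + 1)} {ρ : ℝ}
    {M : ℝ≥0} (h : IsGraphBall Ω x ρ (IsC11FunWith M)) :
    ∃ ψ P e, BoundaryChart Ω (ball x ρ) ψ P e := by
  obtain ⟨T, f, ⟨hf, -, hf'⟩, hT, -, hΩ⟩ := h
  refine ⟨_, _, _, ((boundaryChart_graph hf hf'.locallyLipschitz).preimage T.symm).congr
    isOpen_ball ?_ (subset_univ _)⟩
  have hzero : T.symm x = 0 := by rw [← hT, T.symm_apply_apply]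
  rw [hΩ]
  ext p
  constructor
  · rintro ⟨y, ⟨hy, hfy⟩, rfl⟩
    have hdist := T.dist_map y 0
    rw [hT] at hdist
    exact ⟨⟨by simpa using hfy, mem_univ _⟩, hdist.trans_lt hy⟩
  · rintro ⟨⟨hp, -⟩, hpx⟩
    refine ⟨T.symm p, ⟨?_, hp⟩, T.apply_symm_apply p⟩
    rwa [← hzero, mem_ball, T.symm.dist_map]

end Graph

section PartialDefiningFunction

variable {E : Type*} [NormedAddCommGroup E] [InnerProductSpace ℝ E] [FiniteDimensional ℝ E]
  {Ω U K : Set E} {ν : E → E} {φ φ' ψ : E → ℝ} {R R' P : E → E} {e : E}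

/-- A nonnegative `C^{1,1}` summand `φ`, with gradient `R`, of a defining function: its gradient on
`∂Ω` is a nonnegative multiple, possibly zero, of the inward normal `-ν`. Unlike defining functions,
these can be added up. -/
structure PartialDefiningFunction (Ω : Set E) (ν : E → E) (φ : E → ℝ) (R : E → E) : Prop where
  hasGradientAt : ∀ p, HasGradientAt φ (R p) p
  exists_lipschitzWith : ∃ K : ℝ≥0, LipschitzWith K R
  nonneg : ∀ p ∈ Ω, 0 ≤ φ p
  eq_zero : ∀ p ∈ frontier Ω, φ p = 0
  exists_eq_neg_smul : ∀ p ∈ frontier Ω, ∃ κ : ℝ, 0 ≤ κ ∧ R p = -κ • ν p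

namespace PartialDefiningFunction

theorem zero (Ω : Set E) (ν : E → E) : PartialDefiningFunction Ω ν (fun _ => 0) (fun _ => 0) where
  hasGradientAt p := hasGradientAt_const p 0
  exists_lipschitzWith := ⟨0, LipschitzWith.const 0⟩
  nonneg _ _ := le_rfl
  eq_zero _ _ := rfl
  exists_eq_neg_smul _ _ := ⟨0, le_rfl, by simp⟩

theorem add (h : PartialDefiningFunction Ω ν φ R) (h' : PartialDefiningFunction Ω ν φ' R') :
    PartialDefiningFunction Ω ν (fun p => φ p + φ' p) (fun p => R p + R' p) where
  hasGradientAt p := by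
    rw [hasGradientAt_iff_hasFDerivAt, map_add]
    exact (h.hasGradientAt p).hasFDerivAt.add (h'.hasGradientAt p).hasFDerivAt
  exists_lipschitzWith := by
    obtain ⟨K, hK⟩ := h.exists_lipschitzWith
    obtain ⟨K', hK'⟩ := h'.exists_lipschitzWith
    exact ⟨K + K', hK.add hK'⟩
  nonneg p hp := add_nonneg (h.nonneg p hp) (h'.nonneg p hp)
  eq_zero p hp := by rw [h.eq_zero p hp, h'.eq_zero p hp, add_zero]
  exists_eq_neg_smul p hp := by
    obtain ⟨κ, hκ, hR⟩ := h.exists_eq_neg_smul p hp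
    obtain ⟨κ', hκ', hR'⟩ := h'.exists_eq_neg_smul p hp
    exact ⟨κ + κ', add_nonneg hκ hκ', by rw [hR, hR', ← add_smul, neg_add]⟩

theorem add_ne_zero (h : PartialDefiningFunction Ω ν φ R)
    (h' : PartialDefiningFunction Ω ν φ' R') {p : E} (hp : p ∈ frontier Ω)
    (hne : R p ≠ 0 ∨ R' p ≠ 0) : R p + R' p ≠ 0 := by
  obtain ⟨κ, hκ, hR⟩ := h.exists_eq_neg_smul p hp
  obtain ⟨κ', hκ', hR'⟩ := h'.exists_eq_neg_smul p hp
  rw [hR, hR', smul_ne_zero_iff, smul_ne_zero_iff, neg_ne_zero, neg_ne_zero] at hne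
  rw [hR, hR', ← add_smul, smul_ne_zero_iff]
  refine ⟨fun hsum => ?_, hne.elim And.right And.right⟩
  rcases hne with ⟨hne, -⟩ | ⟨hne, -⟩
  · exact hne (by linarith)
  · exact hne (by linarith)

end PartialDefiningFunction

theorem BoundaryChart.exists_partialDefiningFunction (h : BoundaryChart Ω U ψ P e)
    (hν : ∀ p ∈ frontier Ω ∩ U, ∃ κ : ℝ, 0 < κ ∧ P p = -κ • ν p) (hK : IsCompact K)
    (hKU : K ⊆ U) : ∃ φ R, PartialDefiningFunction Ω ν φ R ∧ ∀ p ∈ K ∩ frontier Ω, R p ≠ 0 := by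
  obtain ⟨η, hη, hη₀₁, hcompact, hsupp, hone⟩ :=
    exists_contDiff_tsupport_subset_eventuallyEq_one hK h.isOpen hKU
  have hηgrad := contDiff_gradient hη
  have hoff : ∀ p ∉ tsupport η, η p = 0 ∧ ∇ η p = 0 := fun p hp =>
    have hzero := notMem_tsupport_iff_eventuallyEq.1 hp
    ⟨hzero.self_of_nhds, (gradient_eq_zero_of_eventuallyEq_const hzero).1⟩
  have hfrontier : ∀ p ∈ frontier Ω, η p * ψ p = 0 ∧ ψ p • ∇ η p = 0 := fun p hp => by
    by_cases hpη : p ∈ tsupport η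
    · simp [(h.mem_frontier_iff (hsupp hpη)).1 hp]
    · simp [hoff p hpη]
  refine ⟨fun p => η p * ψ p, fun p => η p • P p + ψ p • ∇ η p,
    ⟨fun p => ?_, ?_, fun p hp => ?_, fun p hp => (hfrontier p hp).1, fun p hp => ?_⟩,
    fun p ⟨hpK, hp⟩ => ?_⟩
  · rw [hasGradientAt_iff_hasFDerivAt, map_add, map_smul, map_smul]
    exact ((hη.differentiable two_ne_zero p).hasGradientAt.hasFDerivAt).fun_mul
      (h.hasGradientAt p).hasFDerivAt
  · have hψ := contDiff_one_of_hasGradientAt h.hasGradientAt h.locallyLipschitz.continuous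
    have hsmul : ContDiff ℝ 1 fun q : (ℝ × E) × ℝ × E => q.1.1 • q.1.2 + q.2.1 • q.2.2 := by
      fun_prop
    refine exists_lipschitzWith_of_hasCompactSupport (hsmul.locallyLipschitz.comp
      (((hη.of_le one_le_two).locallyLipschitz.prodMk h.locallyLipschitz).prodMk
        (hψ.locallyLipschitz.prodMk hηgrad.locallyLipschitz))) ?_
    exact hcompact.mono' fun p hp => by_contra fun hpη => hp (by simp [hoff p hpη])
  · by_cases hpη : p ∈ tsupport η
    · exact mul_nonneg (hη₀₁ p).1 ((h.mem_iff p (hsupp hpη)).1 hp).le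
    · simp [hoff p hpη]
  · rw [(hfrontier p hp).2, add_zero]
    by_cases hpη : p ∈ tsupport η
    · obtain ⟨κ, hκ, hP⟩ := hν p ⟨hp, hsupp hpη⟩
      exact ⟨η p * κ, mul_nonneg (hη₀₁ p).1 hκ.le, by rw [hP, smul_smul, mul_neg]⟩
    · exact ⟨0, le_rfl, by simp [hoff p hpη]⟩
  · beta_reduce
    rw [(hfrontier p hp).2, (hone p hpK).self_of_nhds, one_smul, add_zero]
    exact h.gradient_ne_zero p

theorem exists_partialDefiningFunction_pos (hΩ : IsOpen Ω) (hb : Bornology.IsBounded Ω)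
    (ν : E → E) : ∃ φ R, PartialDefiningFunction Ω ν φ R ∧ ∀ p ∈ Ω, 0 < φ p := by
  obtain ⟨χ, hsupp, hχ, hrange⟩ := hΩ.exists_contDiff_support_eq (n := 2)
  have hnonneg : ∀ p, 0 ≤ χ p := fun p => (hrange (mem_range_self p)).1
  have hoff : ∀ p ∉ Ω, χ p = 0 := fun p hp => Function.notMem_support.1 (hsupp ▸ hp)
  have hgrad : ∀ p ∉ Ω, ∇ χ p = 0 := fun p hp => by
    have hmin : IsLocalMin χ p := Eventually.of_forall fun q => by
      rw [hoff p hp]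
      exact hnonneg q
    rw [gradient, hmin.fderiv_eq_zero, map_zero]
  have hfrontier : ∀ p ∈ frontier Ω, p ∉ Ω := fun p hp => (hΩ.frontier_eq ▸ hp).2
  refine ⟨χ, ∇ χ, ⟨fun p => (hχ.differentiable two_ne_zero p).hasGradientAt, ?_,
    fun p _ => hnonneg p, fun p hp => hoff p (hfrontier p hp),
    fun p hp => ⟨0, le_rfl, by simp [hgrad p (hfrontier p hp)]⟩⟩, fun p hp => ?_⟩
  · exact exists_lipschitzWith_of_hasCompactSupport (contDiff_gradient hχ).locallyLipschitz
      (HasCompactSupport.intro hb.isCompact_closure fun p hp =>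
        hgrad p fun hp' => hp (subset_closure hp'))
  · exact (hnonneg p).lt_of_ne' (Function.mem_support.1 (hsupp.symm ▸ hp))

theorem exists_partialDefiningFunction_gradient_ne_zero (hb : Bornology.IsBounded Ω)
    (hloc : ∀ x ∈ frontier Ω, ∃ t ∈ 𝓝[frontier Ω] x, ∃ φ R, PartialDefiningFunction Ω ν φ R ∧
      ∀ p ∈ t ∩ frontier Ω, R p ≠ 0) :
    ∃ φ R, PartialDefiningFunction Ω ν φ R ∧ ∀ p ∈ frontier Ω, R p ≠ 0 := by
  have hcompact : IsCompact (frontier Ω) :=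
    hb.isCompact_closure.of_isClosed_subset isClosed_frontier frontier_subset_closure
  refine (hcompact.induction_on (p := fun S => ∃ φ R, PartialDefiningFunction Ω ν φ R ∧
    ∀ p ∈ S ∩ frontier Ω, R p ≠ 0) ⟨_, _, .zero Ω ν, by simp⟩ ?_ ?_ hloc).imp fun _ ⟨R, h, hne⟩ =>
      ⟨R, h, fun p hp => hne p ⟨hp, hp⟩⟩
  · rintro S T hST ⟨φ, R, h, hne⟩
    exact ⟨φ, R, h, fun p hp => hne p ⟨hST hp.1, hp.2⟩⟩
  · rintro S T ⟨φ, R, h, hne⟩ ⟨φ', R', h', hne'⟩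
    exact ⟨_, _, h.add h', fun p hp => h.add_ne_zero h' hp.2
      (hp.1.imp (fun hS => hne p ⟨hS, hp.2⟩) fun hT => hne' p ⟨hT, hp.2⟩)⟩

end PartialDefiningFunction

section C11Domain

variable {n : ℕ} {Ω : Set (Euc (n + 1))} {ν : Euc (n + 1) → Euc (n + 1)}

theorem IsC11Domain.exists_boundaryChart (hΩ : IsC11Domain Ω) {x : Euc (n + 1)}
    (hx : x ∈ frontier Ω) : ∃ ρ > 0, ∃ ψ P e, BoundaryChart Ω (ball x ρ) ψ P e := by
  obtain ⟨ρ, M, -, -, hρ, hgraph⟩ := hΩ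
  exact ⟨ρ, hρ, (hgraph x hx).exists_boundaryChart⟩

theorem IsC11Domain.uniqueDiffOn_closure (hΩ : IsC11Domain Ω) : UniqueDiffOn ℝ (closure Ω) := by
  have hopen : IsOpen Ω := hΩ.elim fun _ ⟨_, h⟩ => h.1
  intro p hp
  by_cases hpΩ : p ∈ Ω
  · exact (hopen.uniqueDiffWithinAt hpΩ).mono subset_closure
  · have hfrontier : p ∈ frontier Ω := hopen.frontier_eq ▸ ⟨hp, hpΩ⟩
    obtain ⟨ρ, hρ, ψ, P, e, h⟩ := hΩ.exists_boundaryChart hfrontier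
    exact h.uniqueDiffWithinAt_closure hfrontier (mem_ball_self hρ)

theorem IsC11Domain.exists_isDefiningFunction (hΩ : IsC11Domain Ω) (hb : Bornology.IsBounded Ω)
    (hν : OutwardNormalFieldOn Ω ν univ) : ∃ ψ P, IsDefiningFunction Ω ψ P ∧
      ∀ p ∈ frontier Ω, ∃ κ : ℝ, P p = κ • ν p := by
  have hopen : IsOpen Ω := hΩ.elim fun _ ⟨_, h⟩ => h.1
  obtain ⟨φ, R, h, hne⟩ := exists_partialDefiningFunction_gradient_ne_zero (ν := ν) hb
    fun x hx => by
      obtain ⟨ρ, hρ, ψ, P, e, hchart⟩ := hΩ.exists_boundaryChart hx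
      refine ⟨closedBall x (ρ / 2), mem_nhdsWithin_of_mem_nhds
        (closedBall_mem_nhds x (by positivity)), hchart.exists_partialDefiningFunction ?_
        (isCompact_closedBall x _) (closedBall_subset_ball (by linarith))⟩
      rintro p ⟨hp, hpU⟩
      obtain ⟨hunit, hout, -, hortho⟩ := hν p ⟨hp, mem_univ p⟩
      exact hchart.exists_pos_eq_neg_smul hp hpU
        (norm_ne_zero_iff.1 (hunit.trans_ne one_ne_zero)) hout hortho
  obtain ⟨χ, Z, hχ, hpos⟩ := exists_partialDefiningFunction_pos hopen hb ν
  have hsum := h.add hχ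
  exact ⟨_, _, ⟨hopen, hb, hsum.hasGradientAt, hsum.exists_lipschitzWith,
    fun p hp => add_pos_of_nonneg_of_pos (h.nonneg p hp) (hpos p hp), hsum.eq_zero,
    fun p hp => h.add_ne_zero hχ hp (.inl (hne p hp))⟩,
    fun p hp => (hsum.exists_eq_neg_smul p hp).imp' Neg.neg fun _ hκ => hκ.2⟩

end C11Domain

section Eigenfunction

variable {m : ℕ} {Ω : Set (Euc m)}

theorem divergence_gradient_eq_laplacian {u : Euc m → ℝ} {x : Euc m} (hu : ContDiffAt ℝ 2 u x) :
    divergence (∇ u) x = laplacian u x := by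
  have hgrad : DifferentiableAt ℝ (∇ u) x :=
    ((InnerProductSpace.toDual ℝ (Euc m)).symm.contDiff.contDiffAt.comp x
      (hu.fderiv_right (m := 1) (by norm_num))).differentiableAt one_ne_zero
  rw [divergence, LinearMap.trace_eq_sum_inner _ (EuclideanSpace.basisFun (Fin m) ℝ), laplacian]
  refine Finset.sum_congr rfl fun i _ => ?_
  have hinner : (fun y => fderiv ℝ u y (EuclideanSpace.single i 1)) =
      fun y => ⟪∇ u y, EuclideanSpace.single i 1⟫ := funext fun y => inner_gradient_left.symm
  rw [hinner, fderiv_inner_apply ℝ hgrad (differentiableAt_const _)]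
  simp [real_inner_comm]

theorem NeumannData.of_eigenfunction {P ν : Euc m → Euc m} {lam : ℝ} {u : Euc m → ℝ}
    (hΩ : IsOpen Ω) (hP : ∀ p ∈ frontier Ω, ∃ κ : ℝ, P p = κ • ν p)
    (hunique : UniqueDiffOn ℝ (closure Ω)) (hu₂ : ContDiffOn ℝ 2 u Ω)
    (hu₁ : ContDiffOn ℝ 1 u (closure Ω)) (hlap : ∀ x ∈ Ω, laplacian u x + lam * u x = 0)
    (hN : NeumannBC Ω ν u univ) :
    NeumannData Ω P lam u (gradientWithin u (closure Ω)) (fun _ => 0) := by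
  have hinterior : ∀ x ∈ Ω, gradientWithin u (closure Ω) x = ∇ u x := fun x hx => by
    rw [gradientWithin, gradient,
      fderivWithin_of_mem_nhds (mem_of_superset (hΩ.mem_nhds hx) subset_closure)]
  have hu : ∀ x ∈ Ω, ContDiffAt ℝ 2 u x := fun x hx => hu₂.contDiffAt (hΩ.mem_nhds hx)
  have hdual := (InnerProductSpace.toDual ℝ (Euc m)).symm.contDiff (n := 1)
  refine ⟨hu₁.continuousOn, ?_, continuousOn_const, fun x hx => ?_, ?_, fun x hx => ?_,
    fun x hx => ?_⟩
  · exact hdual.continuous.comp_continuousOn (hu₁.continuousOn_fderivWithin hunique le_rfl)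
  · rw [hinterior x hx]
    exact ((hu x hx).differentiableAt two_ne_zero).hasGradientAt
  · exact (hdual.comp_contDiffOn (hu₂.fderiv_of_isOpen hΩ (by norm_num))).congr hinterior
  · have heq : gradientWithin u (closure Ω) =ᶠ[𝓝 x] ∇ u :=
      mem_of_superset (hΩ.mem_nhds hx) hinterior
    rw [divergence, heq.fderiv_eq, ← divergence, divergence_gradient_eq_laplacian (hu x hx)]
    linarith [hlap x hx]
  · obtain ⟨κ, hκ⟩ := hP x hx
    rw [hκ, real_inner_smul_left, inner_gradientWithin_right, (hN x ⟨hx, mem_univ x⟩).2]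
    simp

end Eigenfunction

section UniformObservability

theorem exists_finset_ball_subset_inter_ball {X : Type*} [PseudoMetricSpace X] {Ω : Set X}
    (hΩ : IsOpen Ω) (hc : IsCompact (closure Ω)) {r : ℝ} (hr : 0 < r) :
    ∃ (t : Finset Ω) (ρ : Ω → ℝ), (∀ q, 0 < ρ q) ∧ (∀ q : Ω, ball (q : X) (ρ q) ⊆ Ω) ∧
      ∀ x ∈ closure Ω, ∃ q ∈ t, ball (q : X) (ρ q) ⊆ ball x r ∩ Ω := by
  have hball : ∀ q : Ω, ∃ ρ > 0, ρ ≤ r / 2 ∧ ball (q : X) ρ ⊆ Ω := fun q => by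
    obtain ⟨ε, hε, hq⟩ := Metric.isOpen_iff.1 hΩ q q.2
    exact ⟨min ε (r / 2), lt_min hε (half_pos hr), min_le_right _ _,
      (ball_subset_ball (min_le_left _ _)).trans hq⟩
  choose ρ hρ hρr hρΩ using hball
  obtain ⟨t, ht⟩ := hc.elim_finite_subcover (fun q : Ω => ball (q : X) (r / 2))
    (fun _ => isOpen_ball) fun x hx => by
      obtain ⟨q, hq, hxq⟩ := Metric.mem_closure_iff.1 hx (r / 2) (half_pos hr)
      exact mem_iUnion.2 ⟨⟨q, hq⟩, hxq⟩
  refine ⟨t, ρ, hρ, hρΩ, fun x hx => ?_⟩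
  obtain ⟨q, hq, hxq⟩ := mem_iUnion₂.1 (ht hx)
  refine ⟨q, hq, subset_inter (ball_subset_ball' ?_) (hρΩ q)⟩
  linarith [hρr q, mem_ball'.1 hxq]

variable {E : Type*} [NormedAddCommGroup E] [InnerProductSpace ℝ E] [FiniteDimensional ℝ E]
  [MeasurableSpace E] [BorelSpace E] {Ω : Set E} {ψ : E → ℝ} {P : E → E}

theorem IsDefiningFunction.exists_integral_sq_le_exp_mul_ball (hd : IsDefiningFunction Ω ψ P)
    (hconn : IsPreconnected Ω) {r : ℝ} (hr : 0 < r) :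
    ∃ A : ℝ, 0 ≤ A ∧ ∀ x ∈ closure Ω, ∀ s lam u G, 1 ≤ s → 0 ≤ lam → lam ≤ s ^ 2 →
      NeumannData Ω P lam u G (fun _ => 0) →
      ∫ p in Ω, u p ^ 2 ≤ Real.exp (A * s) * ∫ p in ball x r ∩ Ω, u p ^ 2 := by
  obtain ⟨t, ρ, hρ, hρΩ, ht⟩ :=
    exists_finset_ball_subset_inter_ball hd.isOpen hd.isCompact_closure hr
  choose A hA hprop using fun q : Ω =>
    hd.exists_propagation_of_smallness hconn (hρ q) (hρΩ q)
  refine ⟨∑ q ∈ t, A q, Finset.sum_nonneg fun q _ => hA q, fun x hx s lam u G hs hlam hlams h => ?_⟩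
  obtain ⟨q, hq, hsub⟩ := ht x hx
  have hA_le : A q ≤ ∑ q ∈ t, A q := Finset.single_le_sum (fun q _ => hA q) hq
  calc ∫ p in Ω, u p ^ 2 ≤ Real.exp (A q * s) * ∫ p in ball (q : E) (ρ q), u p ^ 2 := by
        simpa [observedMass] using hprop q s lam u G _ hs hlam hlams h
    _ ≤ Real.exp ((∑ q ∈ t, A q) * s) * ∫ p in ball x r ∩ Ω, u p ^ 2 := by
        have hball : ∫ p in ball (q : E) (ρ q), u p ^ 2 ≤ ∫ p in ball x r ∩ Ω, u p ^ 2 :=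
          setIntegral_mono_set ((h.integrableOn_sq hd).mono_set inter_subset_right)
            (ae_of_all _ fun _ => sq_nonneg _) (ae_of_all _ hsub)
        have _ : 0 ≤ ∫ p in ball x r ∩ Ω, u p ^ 2 := integral_nonneg fun _ => sq_nonneg _
        gcongr

theorem one_le_mul_sqrt_and_le_sq {lam lam₁ : ℝ} (h₁ : 0 < lam₁) (h : lam₁ ≤ lam) :
    1 ≤ (1 + 1 / √lam₁) * √lam ∧ lam ≤ ((1 + 1 / √lam₁) * √lam) ^ 2 := by
  have hratio : 1 ≤ 1 / √lam₁ * √lam := by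
    rw [one_div_mul_eq_div]
    exact (one_le_div (Real.sqrt_pos.2 h₁)).2 (Real.sqrt_le_sqrt h)
  have hsqrt : √lam ≤ (1 + 1 / √lam₁) * √lam := by linarith
  exact ⟨by linarith [Real.sqrt_nonneg lam], (Real.sqrt_le_left (by positivity)).1 hsqrt⟩

theorem IsDefiningFunction.exists_integral_sq_le_exp_sqrt_mul_ball
    (hd : IsDefiningFunction Ω ψ P) (hconn : IsConnected Ω) {r : ℝ} (hr : 0 < r) :
    ∃ A : ℝ, 0 ≤ A ∧ ∀ x ∈ closure Ω, ∀ lam u G, 0 < lam →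
      NeumannData Ω P lam u G (fun _ => 0) → 0 < ∫ p in Ω, u p ^ 2 →
      ∫ p in Ω, u p ^ 2 ≤ Real.exp (A * √lam) * ∫ p in ball x r ∩ Ω, u p ^ 2 := by
  obtain ⟨lam₁, hlam₁, hgap⟩ := hd.exists_pos_le_eigenvalue hconn
  obtain ⟨A, hA, hobs⟩ := hd.exists_integral_sq_le_exp_mul_ball hconn.isPreconnected hr
  refine ⟨A * (1 + 1 / √lam₁), by positivity, fun x hx lam u G hlam h hpos => ?_⟩
  obtain ⟨hone, hsq⟩ := one_le_mul_sqrt_and_le_sq hlam₁ (hgap lam u G hlam h hpos)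
  rw [mul_assoc]
  exact hobs x hx _ lam u G hone hlam.le hsq h

theorem NeumannData.integral_sq_pos {lam : ℝ} {u : E → ℝ} {G : E → E} {f : E → ℝ}
    (h : NeumannData Ω P lam u G f) (hd : IsDefiningFunction Ω ψ P) (hne : ∃ x ∈ Ω, u x ≠ 0) :
    0 < ∫ x in Ω, u x ^ 2 := by
  obtain ⟨x, hx, hux⟩ := hne
  refine (integral_nonneg fun _ => sq_nonneg _).lt_of_ne fun hzero => hux ?_
  have hae := (setIntegral_eq_zero_iff_of_nonneg_ae (ae_of_all _ fun p => sq_nonneg (u p))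
    (h.integrableOn_sq hd)).1 hzero.symm
  simpa using Measure.eqOn_open_of_ae_eq hae hd.isOpen
    ((h.continuousOn.mono subset_closure).pow 2) continuousOn_const hx

end UniformObservability

section Slab

variable {m : ℕ} {𝕜 : Type*} [RCLike 𝕜] {I : Set ℝ} {S : Set (Euc m)}

/-- The measurable identification `ℝ^{m+1} ≃ ℝ × ℝᵐ`, `y ↦ (y'', y')`. -/
def lastFrontEquiv (m : ℕ) : Euc (m + 1) ≃ᵐ ℝ × Euc m :=
  ((MeasurableEquiv.toLp 2 (Fin (m + 1) → ℝ)).symm.trans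
    (MeasurableEquiv.piFinSuccAbove (fun _ : Fin (m + 1) => ℝ) (Fin.last m))).trans
    (MeasurableEquiv.prodCongr (MeasurableEquiv.refl ℝ) (MeasurableEquiv.toLp 2 (Fin m → ℝ)))

theorem lastFrontEquiv_apply (y : Euc (m + 1)) : lastFrontEquiv m y = (lastc y, front y) := by
  refine Prod.ext rfl ?_
  ext i
  simp only [lastFrontEquiv, MeasurableEquiv.trans_apply, MeasurableEquiv.prodCongr,
    MeasurableEquiv.piFinSuccAbove, MeasurableEquiv.coe_mk, Fin.insertNthEquiv]
  simp [front]
  rfl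

theorem measurePreserving_lastFrontEquiv :
    MeasurePreserving (lastFrontEquiv m) volume volume :=
  ((EuclideanSpace.volume_preserving_symm_measurableEquiv_toLp (Fin (m + 1))).trans
    (volume_preserving_piFinSuccAbove (fun _ : Fin (m + 1) => ℝ) (Fin.last m))).trans
    ((MeasurePreserving.id volume).prod
      (EuclideanSpace.volume_preserving_symm_measurableEquiv_toLp (Fin m)).symm)

/-- The cylinder `S × I ⊆ ℝ^{m+1}` with base `S ⊆ ℝᵐ` and heights in `I ⊆ ℝ`. -/
def slab (I : Set ℝ) (S : Set (Euc m)) : Set (Euc (m + 1)) :=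
  {y | lastc y ∈ I ∧ front y ∈ S}

theorem preimage_lastFrontEquiv_prod (I : Set ℝ) (S : Set (Euc m)) :
    lastFrontEquiv m ⁻¹' I ×ˢ S = slab I S := by
  ext y
  rw [mem_preimage, lastFrontEquiv_apply]
  rfl

theorem setIntegral_slab_mul (I : Set ℝ) (S : Set (Euc m)) (g : ℝ → 𝕜) (w : Euc m → 𝕜) :
    ∫ y in slab I S, g (lastc y) * w (front y) = (∫ t in I, g t) * ∫ x in S, w x := by
  rw [← setIntegral_prod_mul, ← preimage_lastFrontEquiv_prod, ← Measure.volume_eq_prod,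
    ← measurePreserving_lastFrontEquiv.setIntegral_preimage_emb
      (lastFrontEquiv m).measurableEmbedding]
  simp_rw [lastFrontEquiv_apply]

theorem integrableOn_slab_mul {g : ℝ → 𝕜} {w : Euc m → 𝕜} (hg : IntegrableOn g I)
    (hw : IntegrableOn w S) :
    IntegrableOn (fun y => g (lastc y) * w (front y)) (slab I S) := by
  have hprod : IntegrableOn (fun z : ℝ × Euc m => g z.1 * w z.2) (I ×ˢ S) := by
    have := Integrable.mul_prod hg hw
    rwa [Measure.prod_restrict, ← Measure.volume_eq_prod] at this
  rw [← measurePreserving_lastFrontEquiv.integrableOn_comp_preimage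
    (lastFrontEquiv m).measurableEmbedding, preimage_lastFrontEquiv_prod] at hprod
  simpa only [Function.comp_def, lastFrontEquiv_apply] using hprod

theorem norm_sq_eq_norm_front_sq_add_lastc_sq (y : Euc (m + 1)) :
    ‖y‖ ^ 2 = ‖front y‖ ^ 2 + lastc y ^ 2 := by
  rw [EuclideanSpace.norm_sq_eq, EuclideanSpace.norm_sq_eq, Fin.sum_univ_castSucc]
  simp [front, lastc]

theorem dist_sq_eq_dist_front_sq_add_lastc_sub_sq (y z : Euc (m + 1)) :
    dist y z ^ 2 = dist (front y) (front z) ^ 2 + (lastc y - lastc z) ^ 2 := by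
  rw [dist_eq_norm, dist_eq_norm, norm_sq_eq_norm_front_sq_add_lastc_sq]
  rfl

theorem ball_inter_prodDomain_subset_slab (y : Euc (m + 1)) (R : ℝ) (S : Set (Euc m)) :
    ball y R ∩ prodDomain S ⊆ slab (Icc (lastc y - R) (lastc y + R)) S := by
  rintro z ⟨hz, hzS⟩
  have habs : |lastc z - lastc y| ≤ dist z y := abs_le_of_sq_le_sq
    (by linarith [dist_sq_eq_dist_front_sq_add_lastc_sub_sq z y,
      sq_nonneg (dist (front z) (front y))]) dist_nonneg
  have h := abs_le.1 (habs.trans (mem_ball.1 hz).le)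
  exact ⟨⟨by linarith, by linarith⟩, hzS⟩

theorem slab_subset_ball_inter_prodDomain (y : Euc (m + 1)) {r : ℝ} (hr : 0 < r)
    (S : Set (Euc m)) :
    slab (Icc (lastc y - r / 2) (lastc y + r / 2)) (ball (front y) (r / 2) ∩ S) ⊆
      ball y r ∩ prodDomain S := by
  rintro z ⟨hz, hzb, hzS⟩
  refine ⟨lt_of_pow_lt_pow_left₀ 2 hr.le ?_, hzS⟩
  have hfront : dist (front z) (front y) ^ 2 ≤ (r / 2) ^ 2 :=
    pow_le_pow_left₀ dist_nonneg (mem_ball.1 hzb).le 2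
  have hlast : (lastc z - lastc y) ^ 2 ≤ (r / 2) ^ 2 :=
    sq_le_sq' (by linarith [hz.1]) (by linarith [hz.2])
  rw [dist_sq_eq_dist_front_sq_add_lastc_sub_sq]
  nlinarith

end Slab

section DoublingIndex

variable {m : ℕ} {Ω : Set (Euc m)} {lam : ℝ} {u : Euc m → ℝ}

theorem setIntegral_Icc_le_of_monotoneOn {f : ℝ → ℝ} {a b : ℝ} (hab : a ≤ b)
    (hf : MonotoneOn f (Icc a b)) : ∫ t in Icc a b, f t ≤ (b - a) * f b := by
  calc ∫ t in Icc a b, f t ≤ ∫ _ in Icc a b, f b :=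
        setIntegral_mono_on (hf.integrableOn_isCompact isCompact_Icc)
          (integrableOn_const (by simp)) measurableSet_Icc
          fun t ht => hf ht (right_mem_Icc.2 hab) ht.2
    _ = (b - a) * f b := by simp [hab]

theorem le_setIntegral_Icc_of_monotoneOn {f : ℝ → ℝ} {a b : ℝ} (hab : a ≤ b)
    (hf : MonotoneOn f (Icc a b)) : (b - a) * f a ≤ ∫ t in Icc a b, f t := by
  calc (b - a) * f a = ∫ _ in Icc a b, f a := by simp [hab]
    _ ≤ ∫ t in Icc a b, f t :=
        setIntegral_mono_on (integrableOn_const (by simp))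
          (hf.integrableOn_isCompact isCompact_Icc) measurableSet_Icc
          fun t ht => hf (left_mem_Icc.2 hab) ht ht.1

theorem monotone_exp_mul_sqrt (lam : ℝ) : Monotone fun t => Real.exp (2 * √lam * t) :=
  Real.exp_monotone.comp (monotone_id.const_mul (by positivity))

theorem hExt_sq (lam : ℝ) (u : Euc m → ℝ) (y : Euc (m + 1)) :
    hExt lam u y ^ 2 = Real.exp (2 * √lam * lastc y) * u (front y) ^ 2 := by
  rw [hExt, mul_pow, ← Real.exp_nat_mul, Nat.cast_ofNat, mul_assoc]

theorem setIntegral_slab_hExt_sq (lam : ℝ) (u : Euc m → ℝ) (I : Set ℝ) (S : Set (Euc m)) :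
    ∫ y in slab I S, hExt lam u y ^ 2 =
      (∫ t in I, Real.exp (2 * √lam * t)) * ∫ x in S, u x ^ 2 := by
  simp_rw [hExt_sq]
  exact setIntegral_slab_mul I S (fun t => Real.exp (2 * √lam * t)) fun x => u x ^ 2

theorem integrableOn_slab_hExt_sq (hu : IntegrableOn (fun x => u x ^ 2) Ω) (a b : ℝ) :
    IntegrableOn (fun y => hExt lam u y ^ 2) (slab (Icc a b) Ω) := by
  simp_rw [hExt_sq]
  exact integrableOn_slab_mul (g := fun t => Real.exp (2 * √lam * t))
    (((monotone_exp_mul_sqrt lam).monotoneOn _).integrableOn_isCompact isCompact_Icc) hu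

theorem Hfun_hExt_le (hu : IntegrableOn (fun x => u x ^ 2) Ω) (y : Euc (m + 1)) {R : ℝ}
    (hR : 0 ≤ R) :
    Hfun (prodDomain Ω) (hExt lam u) y R ≤
      2 * R * Real.exp (2 * √lam * (lastc y + R)) * ∫ x in Ω, u x ^ 2 := by
  calc Hfun (prodDomain Ω) (hExt lam u) y R
      ≤ ∫ z in slab (Icc (lastc y - R) (lastc y + R)) Ω, hExt lam u z ^ 2 :=
        setIntegral_mono_set (integrableOn_slab_hExt_sq hu _ _) (ae_of_all _ fun _ => sq_nonneg _)
          (ae_of_all _ (ball_inter_prodDomain_subset_slab y R Ω))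
    _ ≤ (lastc y + R - (lastc y - R)) * Real.exp (2 * √lam * (lastc y + R)) *
          ∫ x in Ω, u x ^ 2 := by
        rw [setIntegral_slab_hExt_sq]
        exact mul_le_mul_of_nonneg_right (setIntegral_Icc_le_of_monotoneOn (by linarith)
          ((monotone_exp_mul_sqrt lam).monotoneOn _)) (integral_nonneg fun _ => sq_nonneg _)
    _ = _ := by ring

theorem le_Hfun_hExt (hu : IntegrableOn (fun x => u x ^ 2) Ω) (y : Euc (m + 1)) {R : ℝ}
    (hR : 0 < R) :
    R * Real.exp (2 * √lam * (lastc y - R / 2)) * ∫ x in ball (front y) (R / 2) ∩ Ω, u x ^ 2 ≤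
      Hfun (prodDomain Ω) (hExt lam u) y R := by
  set B := ball (front y) (R / 2) ∩ Ω
  calc R * Real.exp (2 * √lam * (lastc y - R / 2)) * ∫ x in B, u x ^ 2
      = (lastc y + R / 2 - (lastc y - R / 2)) * Real.exp (2 * √lam * (lastc y - R / 2)) *
          ∫ x in B, u x ^ 2 := by ring
    _ ≤ ∫ z in slab (Icc (lastc y - R / 2) (lastc y + R / 2)) B, hExt lam u z ^ 2 := by
        rw [setIntegral_slab_hExt_sq]
        exact mul_le_mul_of_nonneg_right (le_setIntegral_Icc_of_monotoneOn (by linarith)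
          ((monotone_exp_mul_sqrt lam).monotoneOn _)) (integral_nonneg fun _ => sq_nonneg _)
    _ ≤ Hfun (prodDomain Ω) (hExt lam u) y R :=
        setIntegral_mono_set ((integrableOn_slab_hExt_sq hu _ _).mono_set
          (ball_inter_prodDomain_subset_slab y R Ω)) (ae_of_all _ fun _ => sq_nonneg _)
          (ae_of_all _ (slab_subset_ball_inter_prodDomain y hR Ω))

theorem Nfun_le_of_Hfun_le_exp_mul {h : Euc m → ℝ} {y : Euc m} {r K : ℝ} (hK : 0 ≤ K)
    (hle : Hfun Ω h y (2 * r) ≤ Real.exp K * Hfun Ω h y r) : Nfun Ω h y r ≤ K := by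
  have hnonneg : ∀ ρ, 0 ≤ Hfun Ω h y ρ := fun ρ => integral_nonneg fun _ => sq_nonneg _
  rcases (div_nonneg (hnonneg (2 * r)) (hnonneg r)).eq_or_lt with hzero | hpos
  · rwa [Nfun, ← hzero, Real.log_zero]
  · exact (Real.log_le_iff_le_exp hpos).2 (div_le_of_le_mul₀ (hnonneg r) (Real.exp_nonneg K) hle)

theorem Nfun_hExt_le (hu : IntegrableOn (fun x => u x ^ 2) Ω) {y : Euc (m + 1)} {r X : ℝ}
    (hr : 0 < r) (hX : 0 ≤ X)
    (hobs : ∫ x in Ω, u x ^ 2 ≤ Real.exp X * ∫ x in ball (front y) (r / 2) ∩ Ω, u x ^ 2) :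
    Nfun (prodDomain Ω) (hExt lam u) y r ≤ 3 + 5 * r * √lam + X := by
  refine Nfun_le_of_Hfun_le_exp_mul (by positivity) ?_
  set t := lastc y
  set w := ∫ x in ball (front y) (r / 2) ∩ Ω, u x ^ 2
  have _ : 0 ≤ w := integral_nonneg fun _ => sq_nonneg _
  have hfour : 4 ≤ Real.exp 3 := by linarith [Real.add_one_le_exp (3 : ℝ)]
  calc Hfun (prodDomain Ω) (hExt lam u) y (2 * r)
      ≤ 2 * (2 * r) * Real.exp (2 * √lam * (t + 2 * r)) * ∫ x in Ω, u x ^ 2 :=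
        Hfun_hExt_le hu y (by positivity)
    _ ≤ 2 * (2 * r) * Real.exp (2 * √lam * (t + 2 * r)) * (Real.exp X * w) := by gcongr
    _ = 4 * (r * Real.exp (2 * √lam * (t + 2 * r)) * (Real.exp X * w)) := by ring
    _ ≤ Real.exp 3 * (r * Real.exp (2 * √lam * (t + 2 * r)) * (Real.exp X * w)) := by gcongr
    _ = Real.exp (3 + 5 * r * √lam + X) * (r * Real.exp (2 * √lam * (t - r / 2)) * w) := by
        rw [show 2 * √lam * (t + 2 * r) = 5 * r * √lam + 2 * √lam * (t - r / 2) by ring]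
        simp only [Real.exp_add]
        ring
    _ ≤ Real.exp (3 + 5 * r * √lam + X) * Hfun (prodDomain Ω) (hExt lam u) y r := by
        gcongr
        exact le_Hfun_hExt hu y hr

end DoublingIndex

theorem doubling_index_bound_extension_general {n : ℕ}
    (Ω₀ : Set (Euc (n + 1))) (ν₀ : Euc (n + 1) → Euc (n + 1))
    (hbd : Bornology.IsBounded Ω₀) (hΩ₀ : IsC11Domain Ω₀)
    (hν : OutwardNormalFieldOn Ω₀ ν₀ univ) {r : ℝ} (hr : 0 < r) :
    ∃ C : ℝ, 0 < C ∧ ∀ (lam : ℝ) (u : Euc (n + 1) → ℝ), 0 < lam →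
      ContDiffOn ℝ 2 u Ω₀ → ContDiffOn ℝ 1 u (closure Ω₀) →
      (∀ x ∈ Ω₀, laplacian u x + lam * u x = 0) →
      NeumannBC Ω₀ ν₀ u univ → (∃ x ∈ Ω₀, u x ≠ 0) →
      ∀ y ∈ closure (prodDomain Ω₀),
        Nfun (prodDomain Ω₀) (hExt lam u) y r ≤ C * √lam := by
  obtain ⟨ψ, P, hd, hPν⟩ := hΩ₀.exists_isDefiningFunction hbd hν
  have hconn : IsConnected Ω₀ := let ⟨_, _, _, hconn, _⟩ := hΩ₀; hconn
  obtain ⟨lam₁, hlam₁, hgap⟩ := hd.exists_pos_le_eigenvalue hconn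
  obtain ⟨A, hA, hobs⟩ := hd.exists_integral_sq_le_exp_sqrt_mul_ball hconn (half_pos hr)
  refine ⟨3 / √lam₁ + 5 * r + A, by positivity, fun lam u hlam hu₂ hu₁ hlap hN hne y hy => ?_⟩
  have hu := NeumannData.of_eigenfunction hd.isOpen hPν hΩ₀.uniqueDiffOn_closure hu₂ hu₁ hlap hN
  have hpos := hu.integral_sq_pos hd hne
  have hy' : front y ∈ closure Ω₀ :=
    map_mem_closure (frontCLM (n + 1)).continuous hy fun _ hz => hz
  have hthree : 3 ≤ 3 / √lam₁ * √lam := by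
    rw [div_mul_eq_mul_div, le_div_iff₀ (Real.sqrt_pos.2 hlam₁)]
    gcongr
    exact hgap lam u _ hlam hu hpos
  have hNfun := Nfun_hExt_le (lam := lam) (hu.integrableOn_sq hd) hr (by positivity)
    (hobs (front y) hy' lam u _ hlam hu hpos)
  linarith

/-- Doubling index bound for the harmonic extension: for a
bounded `C^{1,1}` domain `Ω₀` there is `r₀(Ω₀) > 0` such that for every
`r < r₀/16` there is `C = C(r,Ω₀)` with: for every Neumann eigenfunction `u`
with eigenvalue `λ > 0`, the extension `h(x,t) = e^{√λ t} u(x)` satisfies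
`N_h(y,r) ≤ C √λ` for all `y ∈ Ω̄ = Ω̄₀ × ℝ`. -/
theorem doubling_index_bound_extension {n : ℕ}
    (Ω₀ : Set (Euc (n + 1))) (ν₀ : Euc (n + 1) → Euc (n + 1))
    (hbd : Bornology.IsBounded Ω₀) (hΩ₀ : IsC11Domain Ω₀)
    (hν : OutwardNormalFieldOn Ω₀ ν₀ univ) :
    ∃ r₀ : ℝ, 0 < r₀ ∧ ∀ r : ℝ, 0 < r → r < r₀ / 16 →
      ∃ C : ℝ, 0 < C ∧ ∀ (lam : ℝ) (u : Euc (n + 1) → ℝ), 0 < lam →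
        ContDiffOn ℝ 2 u Ω₀ → ContDiffOn ℝ 1 u (closure Ω₀) →
        (∀ x ∈ Ω₀, laplacian u x + lam * u x = 0) →
        NeumannBC Ω₀ ν₀ u univ → (∃ x ∈ Ω₀, u x ≠ 0) →
        ∀ y ∈ closure (prodDomain Ω₀),
          Nfun (prodDomain Ω₀) (hExt lam u) y r ≤ C * Real.sqrt lam := by
  exact ⟨1, one_pos, fun r hr _ =>
    doubling_index_bound_extension_general Ω₀ ν₀ hbd hΩ₀ hν hr⟩

end NodalNeumann
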